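/- arXiv:1212.4590 — 6 statements merged into one kernel-verified Lean document; each statement's English description precedes it below -/
import Mathlib

section
/- For every finitely generated A-module M and every integer i ≥ n+1, one has Ext^i_A(M, A) = 0. -/
/-!
The polynomial ring `k[x_1, …, x_n]` has global dimension at most `n` (Hilbert's syzygy theorem),
so `Ext^i` out of any module vanishes for `i ≥ n + 1`.

The bound is proved by induction on `n`, starting from the fact that every vector space is
projective. The inductive step (`hasProjectiveDimensionLE_polynomial`) says that adjoining a
variable raises the global dimension by at most one. For an `R[X]`-module `M`, write `M[X]` for
`PolynomialModule R M ≅ R[X] ⊗[R] M`. There is a short exact sequence of `R[X]`-modules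
`0 → M[X] → M[X] → M → 0`, whose first map is `X ^ i m ↦ X ^ (i + 1) m - X ^ i (X • m)` and whose
second map is `X ^ i m ↦ X ^ i • m` (`diff_injective`, `exact_diff_act`, `act_surjective`). Since
`R[X]` is flat over `R` and base change preserves projectives, the projective dimension of `M[X]`
over `R[X]` is at most that of `M` over `R` (`hasProjectiveDimensionLE_baseChange`), and the
sequence bounds that of `M` over `R[X]`.

Projective dimension in Mathlib is phrased through `Abelian.Ext`, while the theorem uses the derived
functor `Ext`; `isZero_Ext_of_hasProjectiveDimensionLE` passes from one to the other, since both
are computed by cocycles modulo coboundaries on a projective resolution.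
-/

open CategoryTheory

/-- `Ext^i_A(M, A)` as a module over `A`, defined via the derived functor `Ext` of Mathlib. -/
noncomputable def extModule (A : Type) [CommRing A] (M : Type) [AddCommGroup M] [Module A M]
    (i : ℕ) : ModuleCat A :=
  ((Ext A (ModuleCat A) i).obj (Opposite.op (ModuleCat.of A M))).obj (ModuleCat.of A A)

open Polynomial TensorProduct

universe u

namespace HilbertSyzygy

/-- An object of projective dimension at most `d` has vanishing derived-functor `Ext` in degrees
above `d`: on a projective resolution, a cocycle represents a class of `Abelian.Ext`, and the
vanishing of this class makes the cocycle a coboundary. -/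
lemma isZero_Ext_of_hasProjectiveDimensionLE {C : Type*} [Category C] [Abelian C]
    [EnoughProjectives C] (R : Type*) [Ring R] [Linear R C] [HasExt C] (X Y : C) (d i : ℕ)
    [HasProjectiveDimensionLE X d] (hi : d + 1 ≤ i) :
    Limits.IsZero (((Ext R C i).obj (Opposite.op X)).obj Y) := by
  obtain ⟨i, rfl⟩ : ∃ j, i = j + 1 := ⟨i - 1, by omega⟩
  let P := projectiveResolution X
  refine Limits.IsZero.of_iso ?_ (P.isoExt (R := R) (i + 1) Y)
  rw [← HomologicalComplex.exactAt_iff_isZero_homology,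
    HomologicalComplex.exactAt_iff' _ i (i + 1) (i + 2) (by simp) (by simp),
    ShortComplex.moduleCat_exact_iff]
  intro (f : P.complex.X (i + 1) ⟶ Y) hf
  have hf' : P.complex.d (i + 2) (i + 1) ≫ f = 0 := hf
  obtain ⟨g, hg⟩ := (P.extMk_eq_zero_iff f (i + 2) rfl hf' i rfl).1
    (Abelian.Ext.eq_zero_of_hasProjectiveDimensionLT _ (d + 1) hi)
  exact ⟨g, hg⟩

variable (R : Type u) [CommRing R]

/-- Extension of scalars to `R[X]` does not increase the projective dimension: it is exact and
preserves projectives, so a syzygy of `N` is sent to a syzygy of `R[X] ⊗[R] N`. -/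
lemma hasProjectiveDimensionLE_baseChange (d : ℕ) (N : ModuleCat.{u} R)
    [HasProjectiveDimensionLE N d] :
    HasProjectiveDimensionLE (ModuleCat.of R[X] (R[X] ⊗[R] N)) d := by
  induction d generalizing N with
  | zero =>
    have h : HasProjectiveDimensionLE N 0 := ‹_›
    simp only [HasProjectiveDimensionLE, zero_add] at h ⊢
    rw [← projective_iff_hasProjectiveDimensionLT_one, ← IsProjective.iff_projective] at h ⊢
    infer_instance
  | succ d ih =>
    obtain ⟨⟨P, f⟩⟩ := ModuleCat.enoughProjectives.1 N
    let T := ShortComplex.mk (Limits.kernel.ι f) f (Limits.kernel.condition f)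
    have hT : T.ShortExact := { exact := ShortComplex.exact_kernel f }
    have hex : Function.Exact T.f.hom T.g.hom :=
      (ShortComplex.ShortExact.moduleCat_exact_iff_function_exact _).1 hT.exact
    have hex' : Function.Exact (T.f.hom.baseChange R[X]) (T.g.hom.baseChange R[X]) :=
      lTensor_exact R[X] hex hT.moduleCat_surjective_g
    let S : ShortComplex (ModuleCat.{u} R[X]) :=
      ShortComplex.mk (ModuleCat.ofHom (T.f.hom.baseChange R[X]))
        (ModuleCat.ofHom (T.g.hom.baseChange R[X]))
        (ModuleCat.hom_ext hex'.linearMap_comp_eq_zero)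
    have hS : S.ShortExact :=
      { exact := (ShortComplex.ShortExact.moduleCat_exact_iff_function_exact _).2 hex'
        mono_f := (ModuleCat.mono_iff_injective _).2
          (Module.Flat.lTensor_preserves_injective_linearMap _ hT.moduleCat_injective_f)
        epi_g := (ModuleCat.epi_iff_surjective _).2
          (LinearMap.lTensor_surjective _ hT.moduleCat_surjective_g) }
    have hP : Module.Projective R P := (IsProjective.iff_projective _).2 ‹_›
    have : Projective S.X₂ := (IsProjective.iff_projective _).1
      (inferInstanceAs (Module.Projective R[X] (R[X] ⊗[R] P)))
    have := (hT.hasProjectiveDimensionLT_X₃_iff d ‹_›).mp ‹_›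
    exact (hS.hasProjectiveDimensionLT_X₃_iff d ‹_›).mpr (ih (Limits.kernel f))

lemma X_smul_single {M : Type u} [AddCommGroup M] [Module R M] (i : ℕ) (m : M) :
    (X : R[X]) • PolynomialModule.single R i m = .single R (i + 1) m := by
  rw [← monomial_one_one_eq_X, PolynomialModule.monomial_smul_single, one_smul, add_comm]

section

variable (M : Type u) [AddCommGroup M] [Module R M] [Module R[X] M] [IsScalarTower R R[X] M]

/-- Multiplication by `X` on an `R[X]`-module, as an `R`-linear map. -/
noncomputable def mulX : M →ₗ[R] M := (LinearMap.lsmul R[X] M X).restrictScalars R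

/-- The endomorphism `X ^ i m ↦ X ^ i (X • m)` of `M[X]`, which applies `mulX` to each
coefficient. -/
noncomputable def coeffMulX : PolynomialModule R M →ₗ[R[X]] PolynomialModule R M where
  __ := PolynomialModule.map R (mulX R M)
  map_smul' p q := by
    have := PolynomialModule.map_smul R (mulX R M) p q
    simpa using this

/-- The endomorphism `X ^ i m ↦ X ^ (i + 1) m - X ^ i (X • m)` of `M[X]`, the difference of the two
actions of `X`. -/
noncomputable def diff : PolynomialModule R M →ₗ[R[X]] PolynomialModule R M :=
  LinearMap.lsmul R[X] _ X - coeffMulX R M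

/-- The action map `M[X] → M`, `X ^ i m ↦ X ^ i • m`. It is built by regarding the coefficients as
lying in the `R[X]`-module `M` and evaluating at `X : R[X]`. -/
noncomputable def act : PolynomialModule R M →ₗ[R[X]] M where
  __ := (PolynomialModule.eval (X : R[X])).restrictScalars R ∘ₗ
    PolynomialModule.map R[X] (LinearMap.id : M →ₗ[R] M)
  map_smul' p q := by
    have := PolynomialModule.map_smul R[X] (LinearMap.id : M →ₗ[R] M) p q
    simp [this, PolynomialModule.eval_smul, Polynomial.eval_map, Polynomial.eval₂_C_X]

lemma act_single (i : ℕ) (m : M) : act R M (.single R i m) = (X ^ i : R[X]) • m := by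
  change PolynomialModule.eval (X : R[X]) (PolynomialModule.map R[X] LinearMap.id _) = _
  simp

lemma coeffMulX_single (i : ℕ) (m : M) :
    coeffMulX R M (.single R i m) = .single R i ((X : R[X]) • m) := by
  simp [coeffMulX, mulX]

lemma diff_single (i : ℕ) (m : M) :
    diff R M (.single R i m) = .single R (i + 1) m - .single R i ((X : R[X]) • m) := by
  simp [diff, coeffMulX_single, X_smul_single]

lemma act_diff (q : PolynomialModule R M) : act R M (diff R M q) = 0 := by
  induction q using PolynomialModule.induction_linear with
  | zero => simp
  | add p q hp hq => simp [hp, hq]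
  | single i m => simp [diff_single, act_single, pow_succ, mul_smul]

/-- Modulo the image of `diff`, both actions of `X` agree, so `X ^ i m` is congruent to the constant
`X ^ i • m`. -/
lemma sub_mem_range (q : PolynomialModule R M) :
    q - .single R 0 (act R M q) ∈ LinearMap.range (diff R M) := by
  induction q using PolynomialModule.induction_linear with
  | zero => simp
  | add p q hp hq =>
    convert add_mem hp hq using 1
    rw [map_add, PolynomialModule.single_add]; abel
  | single i m =>
    induction i generalizing m with
    | zero => simp [act_single]
    | succ i ih =>
      convert add_mem (LinearMap.mem_range_self (diff R M) (.single R i m)) (ih ((X : R[X]) • m))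
        using 1
      simp [diff_single, act_single, pow_succ, mul_smul]

lemma coeff_diff_succ (q : PolynomialModule R M) (i : ℕ) :
    (diff R M q).coeff (i + 1) = q.coeff i - (X : R[X]) • q.coeff (i + 1) := by
  induction q using PolynomialModule.induction_linear with
  | zero => simp
  | add p q hp hq => simp [hp, hq]; abel
  | single j m =>
    have h : (diff R M (.single R j m)).coeff (i + 1) = (Finsupp.single (j + 1) m -
        Finsupp.single j ((X : R[X]) • m) : ℕ →₀ M) (i + 1) :=
      congrArg (fun p => PolynomialModule.coeff p (i + 1)) (diff_single R M j m)
    rw [h, Finsupp.sub_apply]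
    simp only [PolynomialModule.coeff_single, Finsupp.single_apply, add_left_inj]
    split_ifs <;> simp

/-- If `diff q = 0`, then each coefficient of `q` is `X ^ n` times the coefficient `n` places
further on, which is zero for large `n`. -/
lemma diff_injective : Function.Injective (diff R M) := by
  rw [injective_iff_map_eq_zero]
  intro q hq
  have h1 (i : ℕ) : q.coeff i = (X : R[X]) • q.coeff (i + 1) := by
    rw [← sub_eq_zero, ← coeff_diff_succ, hq]; simp
  have h2 (n i : ℕ) : q.coeff i = (X ^ n : R[X]) • q.coeff (i + n) := by
    induction n with
    | zero => simp
    | succ n ih => rw [ih, h1 (i + n), smul_smul, pow_succ, add_assoc]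
  rw [← PolynomialModule.coeff_eq_zero]
  ext i
  obtain ⟨N, hN⟩ := q.coeff.support.bddAbove
  have : q.coeff (i + (N + 1)) = 0 := by
    by_contra h
    have := hN (Finsupp.mem_support_iff.2 h)
    omega
  rw [h2 (N + 1) i, this]; simp

lemma exact_diff_act : Function.Exact (diff R M) (act R M) := by
  intro q
  refine ⟨fun h => ?_, ?_⟩
  · simpa [h] using sub_mem_range R M q
  · rintro ⟨p, rfl⟩
    exact act_diff R M p

lemma act_surjective : Function.Surjective (act R M) := fun m =>
  ⟨.single R 0 m, by simp [act_single]⟩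

end

/-- If every `R`-module has projective dimension at most `d`, then every `R[X]`-module has
projective dimension at most `d + 1`. -/
lemma hasProjectiveDimensionLE_polynomial (d : ℕ)
    (h : ∀ N : ModuleCat.{u} R, HasProjectiveDimensionLE N d)
    (M : ModuleCat.{u} R[X]) : HasProjectiveDimensionLE M (d + 1) := by
  let : Module R M := Module.compHom M (C : R →+* R[X])
  have : IsScalarTower R R[X] M := IsScalarTower.of_algebraMap_smul fun _ _ => rfl
  have := h (ModuleCat.of R M)
  have := hasProjectiveDimensionLE_baseChange R d (ModuleCat.of R M)
  have hB : HasProjectiveDimensionLE (ModuleCat.of R[X] (PolynomialModule R M)) d :=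
    ModuleCat.hasProjectiveDimensionLE_of_linearEquiv
      (M := ModuleCat.of R[X] (R[X] ⊗[R] M))
      (PolynomialModule.polynomialTensorProductLEquivPolynomialModule R M) d
  let S : ShortComplex (ModuleCat.{u} R[X]) :=
    ShortComplex.mk (ModuleCat.ofHom (diff R M)) (ModuleCat.ofHom (act R M))
      (by ext x; exact act_diff R M x)
  have hS : S.ShortExact :=
    { exact := (ShortComplex.ShortExact.moduleCat_exact_iff_function_exact _).2
        (exact_diff_act R M)
      mono_f := (ModuleCat.mono_iff_injective _).2 (diff_injective R M)
      epi_g := (ModuleCat.epi_iff_surjective _).2 (act_surjective R M) }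
  exact hS.hasProjectiveDimensionLT_X₃ (d + 1) hB
    (hasProjectiveDimensionLT_of_ge _ (d + 1) _ (by omega))

lemma hasProjectiveDimensionLE_of_ringEquiv {R S : Type u} [CommRing R] [CommRing S]
    (e : R ≃+* S) (d : ℕ) (h : ∀ N : ModuleCat.{u} R, HasProjectiveDimensionLE N d)
    (M : ModuleCat.{u} S) : HasProjectiveDimensionLE M d := by
  let : Module R M := Module.compHom M (e : R →+* S)
  have := h (ModuleCat.of R M)
  let := RingHomInvPair.of_ringEquiv e
  let := RingHomInvPair.symm (RingHomClass.toRingHom e) (RingHomClass.toRingHom e.symm)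
  exact ModuleCat.hasProjectiveDimensionLE_of_semiLinearEquiv e (M := ModuleCat.of R M)
    { AddEquiv.refl M with map_smul' := fun _ _ => rfl } d

/-- Hilbert's syzygy theorem: modules over `k[x_1, …, x_n]` have projective dimension at most
`n`. -/
lemma hasProjectiveDimensionLE_mvPolynomial (k : Type u) [Field k] (n : ℕ)
    (M : ModuleCat.{u} (MvPolynomial (Fin n) k)) :
    HasProjectiveDimensionLE M n := by
  induction n with
  | zero =>
    refine hasProjectiveDimensionLE_of_ringEquiv (MvPolynomial.isEmptyRingEquiv k (Fin 0)).symm 0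
      (fun N => ?_) M
    have : Module.Free k N := Module.Free.of_divisionRing k N
    exact (projective_iff_hasProjectiveDimensionLE_zero N).1
      ((IsProjective.iff_projective _).1 Module.Projective.of_free)
  | succ n ih =>
    exact hasProjectiveDimensionLE_of_ringEquiv (MvPolynomial.finSuccEquiv k n).symm.toRingEquiv
      (n + 1) (hasProjectiveDimensionLE_polynomial _ n ih) M

end HilbertSyzygy

/-- For `A = k[x_1, …, x_n]` with `k` a field and `n ≥ 1`, and `M` a finitely generated
`A`-module, one has `Ext^i_A(M, A) = 0` for every `i ≥ n + 1`. -/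
theorem ext_eq_zero_of_gt (k : Type) [Field k] (n : ℕ) (hn : 1 ≤ n)
    (M : Type) [AddCommGroup M] [Module (MvPolynomial (Fin n) k) M]
    [Module.Finite (MvPolynomial (Fin n) k) M]
    (i : ℕ) (hi : n + 1 ≤ i) :
    Subsingleton (extModule (MvPolynomial (Fin n) k) M i) := by
  have := HilbertSyzygy.hasProjectiveDimensionLE_mvPolynomial k n
    (ModuleCat.of (MvPolynomial (Fin n) k) M)
  exact ModuleCat.isZero_iff_subsingleton.1
    (HilbertSyzygy.isZero_Ext_of_hasProjectiveDimensionLE (MvPolynomial (Fin n) k)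
      (ModuleCat.of (MvPolynomial (Fin n) k) M) _ n i hi)
end

section
/- For every finitely generated A-module M and every 0 ≤ i ≤ n, if Ext^i_A(M, A) ≠ 0 then cd(Ext^i_A(M, A)) ≥ i, that is, dim(A/ann_A(Ext^i_A(M, A))) ≤ n − i. -/
/-!
The ring `A = k[x_1, …, x_n]` is regular, so for a prime `p` of height `d` the local ring `A_p` is
regular of dimension `d`, and every finitely generated `A_p`-module has projective dimension at most
`d`. If `p` has height `d < i`, then `Ext^i(M, A)` vanishes at `p`; more precisely some `s ∉ p`
annihilates it. So every prime containing the annihilator of `Ext^i(M, A)` has height at least `i`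
(`height_ge_of_annihilator_le`), and since `dim A = n`, chains of such primes have length at most
`n - i` (`ringKrullDim_quotient_le_of_height`).

*Projective dimension over a regular local ring* (`projDimLE_of_regularLocal`). The maximal ideal is
generated by a regular sequence of length `d` (`exists_regular_sequence`), so the residue field has
projective dimension `d`. For a prime `q` that is not maximal, pick `x` in the maximal ideal outside
`q`; then `pd (R/q) + 1 = pd (R/q)/x(R/q)`, and the latter module is filtered by quotients `R/q'`
with `q'` strictly larger than `q`. Noetherian induction bounds `pd (R/q)` for all primes `q`, and
prime filtrations handle all finitely generated modules.

*Annihilating `Ext`* (`exists_smul_ext_eq_zero`). Rather than comparing `Ext` over `A` with `Ext`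
over the localization, syzygies reduce to the case where the localization `S⁻¹M` is projective.
Given a surjection `F → M` from a finite free module, a section over `S⁻¹A` then clears denominators
to a map `M → F` whose composite with `F → M` is multiplication by some `s ∈ S`; hence
multiplication by `s` on `Ext^j(M, N)` factors through `Ext^j(F, N) = 0` for `j > 0`.
-/

open CategoryTheory

/-! ### Regular sequences generating the maximal ideal -/

open IsLocalRing in
/-- An element of the maximal ideal outside its square is part of a generating set of the same
size: it replaces a generator occurring in it with unit coefficient. -/
lemma exchange_generators {R : Type} [CommRing R] [IsLocalRing R] {d : ℕ}
    (S : Finset R) (hS : S.card ≤ d + 1) (hspan : Ideal.span (S : Set R) = maximalIdeal R)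
    {x : R} (hx : x ∈ maximalIdeal R) (hx2 : x ∉ maximalIdeal R ^ 2) :
    ∃ T : Finset R, T.card ≤ d ∧ Ideal.span {x} ⊔ Ideal.span (T : Set R) = maximalIdeal R := by
  classical
  obtain ⟨c, -, hc⟩ := Submodule.mem_span_finset.mp (hspan.symm ▸ hx : x ∈ Ideal.span (S : Set R))
  have hSm : ∀ s ∈ S, s ∈ maximalIdeal R := fun s hs ↦ hspan ▸ Ideal.subset_span hs
  obtain ⟨s, hs, hu⟩ : ∃ s ∈ S, IsUnit (c s) := by
    by_contra! h
    apply hx2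
    rw [← hc, pow_two]
    exact Ideal.sum_mem _ fun s hs ↦ Ideal.mul_mem_mul ((mem_maximalIdeal _).2 (h s hs)) (hSm s hs)
  refine ⟨S.erase s, by rw [Finset.card_erase_of_mem hs]; omega, le_antisymm ?_ ?_⟩
  · rw [sup_le_iff, Ideal.span_le, Ideal.span_le]
    exact ⟨by simpa using hx, fun t ht ↦ hSm t (Finset.mem_of_mem_erase ht)⟩
  · rw [← hspan, Ideal.span_le]
    intro t ht
    by_cases hts : t = s
    · subst hts
      rw [← Finset.add_sum_erase S _ hs] at hc
      have h1 : c t * t = x - ∑ a ∈ S.erase t, c a • a := by rw [← hc]; simp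
      have h2 : c t * t ∈ Ideal.span {x} ⊔ Ideal.span ((S.erase t : Finset R) : Set R) := by
        rw [h1]
        refine sub_mem (Ideal.mem_sup_left (Ideal.mem_span_singleton_self x))
          (Ideal.mem_sup_right (Ideal.sum_mem _ fun a ha ↦ ?_))
        exact Ideal.mul_mem_left _ _ (Ideal.subset_span ha)
      exact (Ideal.unit_mul_mem_iff_mem _ hu).mp h2
    · exact Ideal.mem_sup_right (Ideal.subset_span (by simpa [hts] using ht))

open IsLocalRing RingTheory.Sequence Pointwise in
/-- A Noetherian local ring of dimension at least `d` whose maximal ideal has `d` generators is a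
domain, and its maximal ideal is generated by a regular sequence of length `d`. Both conclusions are
proved together by induction on `d`: the domain property of `R ⧸ (x)` is what makes `R` a domain, and
hence `x` a nonzerodivisor. The rings in the induction vary, hence the quantifier over `R`. -/
lemma exists_regular_sequence (d : ℕ) : ∀ (R : Type) [CommRing R] [IsLocalRing R]
    [IsNoetherianRing R] (_ : (d : WithBot ℕ∞) ≤ ringKrullDim R) (S : Finset R) (_ : S.card ≤ d)
    (_ : Ideal.span (S : Set R) = maximalIdeal R),
    IsDomain R ∧ ∃ rs : List R, IsWeaklyRegular R rs ∧ Ideal.ofList rs = maximalIdeal R ∧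
      rs.length = d := by
  induction d with
  | zero =>
    intro R _ _ _ _ S hS hspan
    have hS0 : S = ∅ := by simpa using hS
    subst hS0
    have hm : maximalIdeal R = ⊥ := by simpa using hspan.symm
    have hf : IsField R := isField_iff_maximalIdeal_eq.mpr hm
    exact ⟨hf.isDomain, [], IsWeaklyRegular.nil R R, by simp [hm], rfl⟩
  | succ d ih =>
    intro R _ _ _ hdim S hS hspan
    have hpos : maximalIdeal R ≠ ⊥ := fun h ↦ by
      rw [ringKrullDim_eq_zero_of_isField (isField_iff_maximalIdeal_eq.mpr h)] at hdim
      norm_cast at hdim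
    have hmfg : (maximalIdeal R).FG := (maximalIdeal R).fg_of_isNoetherianRing
    have hjac : maximalIdeal R ≤ (⊥ : Ideal R).jacobson := maximalIdeal_le_jacobson _
    -- Prime avoidance: `𝔪` lies neither in `𝔪²` (Nakayama) nor in a minimal prime (its height is
    -- positive), so some `x ∈ 𝔪` avoids `𝔪²`, which need not be prime, and all minimal primes.
    obtain ⟨x, hx, hx2, hxmin⟩ : ∃ x ∈ maximalIdeal R, x ∉ maximalIdeal R ^ 2 ∧
        ∀ q ∈ minimalPrimes R, x ∉ q := by
      by_contra! hcon
      have hsub : (maximalIdeal R : Set R) ⊆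
          ⋃ q ∈ insert (maximalIdeal R ^ 2) (minimalPrimes R), (q : Set R) := by
        intro y hy
        by_cases hy2 : y ∈ maximalIdeal R ^ 2
        · simp [hy2]
        · obtain ⟨q, hq, hyq⟩ := hcon y hy hy2
          simp only [Set.mem_iUnion]
          exact ⟨q, Or.inr hq, hyq⟩
      obtain ⟨q, hq, hle⟩ := (Ideal.subset_union_prime_finite
        ((minimalPrimes.finite_of_isNoetherianRing R).insert _) (f := id)
        (maximalIdeal R ^ 2) (maximalIdeal R ^ 2) (by
          rintro i (rfl | hi) h1 -
          · exact absurd rfl h1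
          · exact hi.1.1)).mp hsub
      rcases hq with rfl | hq
      · exact hpos (Submodule.eq_bot_of_le_smul_of_le_jacobson_bot _ _ hmfg
          (by simpa [pow_two] using hle) hjac)
      · have : q.IsPrime := hq.1.1
        have hqm : q = maximalIdeal R := le_antisymm (le_maximalIdeal this.ne_top) hle
        have h0 : q.height = 0 := by
          exact Ideal.height_eq_zero_iff.mpr hq
        rw [← maximalIdeal_height_eq_ringKrullDim, ← hqm, h0] at hdim
        norm_cast at hdim
    obtain ⟨T, hT, hTspan⟩ := exchange_generators S hS hspan hx hx2
    have : Nontrivial (R ⧸ Ideal.span {x}) := Ideal.Quotient.nontrivial_iff.mpr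
      (ne_top_of_le_ne_top (maximalIdeal.isMaximal R).ne_top
        ((Ideal.span_singleton_le_iff_mem _).mpr hx))
    have : IsLocalRing (R ⧸ Ideal.span {x}) :=
      .of_surjective' (Ideal.Quotient.mk _) Ideal.Quotient.mk_surjective
    have hmax : (maximalIdeal R).map (Ideal.Quotient.mk (Ideal.span {x})) =
        maximalIdeal (R ⧸ Ideal.span {x}) :=
      IsLocalRing.map_maximalIdeal_of_surjective _ Ideal.Quotient.mk_surjective
    have hdim' : (d : WithBot ℕ∞) ≤ ringKrullDim (R ⧸ Ideal.span {x}) := by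
      have h := Ideal.height_le_ringKrullDim_quotient_add_one hx
      rw [maximalIdeal_height_eq_ringKrullDim] at h
      have := hdim.trans h
      push_cast at this
      exact (ENat.WithBot.add_le_add_natCast_right_iff (c := 1)).mp (by simpa using this)
    classical
    obtain ⟨hdom, rs', hreg, hgen, hlen⟩ := ih (R ⧸ Ideal.span {x}) hdim'
      (T.image (Ideal.Quotient.mk _)) (Finset.card_image_le.trans hT) (by
        rw [← hmax, ← hTspan, Ideal.map_sup, Ideal.map_span, Ideal.map_span, Finset.coe_image]
        simp)
    have hprime : (Ideal.span {x}).IsPrime := (Ideal.Quotient.isDomain_iff_prime _).mp hdom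
    obtain ⟨q, hq, hqx⟩ := Ideal.exists_minimalPrimes_le (I := ⊥) (J := Ideal.span {x}) bot_le
    have hqp : q.IsPrime := hq.1.1
    -- A minimal prime `q` inside the prime `(x)` satisfies `q = x q` because `x ∉ q`, so Nakayama
    -- gives `q = 0`.
    have hq0 : q = ⊥ := by
      refine Submodule.eq_bot_of_le_smul_of_le_jacobson_bot (Ideal.span {x}) q
        q.fg_of_isNoetherianRing ?_ (((Ideal.span_singleton_le_iff_mem _).mpr hx).trans hjac)
      intro y hy
      obtain ⟨z, rfl⟩ := Ideal.mem_span_singleton'.mp (hqx hy)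
      have hz : z ∈ q := (hqp.mem_or_mem hy).resolve_right (hxmin q hq)
      rw [mul_comm]
      exact Submodule.smul_mem_smul (Ideal.mem_span_singleton_self x) hz
    have hD : IsDomain R := by
      subst hq0
      exact (IsDomain.of_bot_isPrime R)
    have hx0 : x ≠ 0 := fun h ↦ hx2 (h ▸ zero_mem _)
    obtain ⟨l, rfl⟩ : ∃ l : List R, l.map (Ideal.Quotient.mk (Ideal.span {x})) = rs' :=
      (List.map_surjective_iff.mpr Ideal.Quotient.mk_surjective) rs'
    refine ⟨hD, x :: l, ?_, ?_, by simpa using hlen⟩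
    · rw [isWeaklyRegular_cons_iff]
      refine ⟨fun a b h ↦ mul_left_cancel₀ hx0 h, ?_⟩
      have h1 : IsWeaklyRegular (R ⧸ Ideal.span {x}) l :=
        (isWeaklyRegular_map_algebraMap_iff (R ⧸ Ideal.span {x}) (R ⧸ Ideal.span {x}) l).mp hreg
      have he : Ideal.span {x} = x • (⊤ : Submodule R R) := by
        simp [← Submodule.ideal_span_singleton_smul]
      exact (LinearEquiv.isWeaklyRegular_congr (Submodule.quotEquivOfEq _ _ he) l).mp h1
    · rw [Ideal.ofList_cons]
      have h1 : (Ideal.ofList l).map (Ideal.Quotient.mk (Ideal.span {x})) =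
          (maximalIdeal R).map (Ideal.Quotient.mk (Ideal.span {x})) := by
        rw [Ideal.map_ofList, hgen, hmax]
      have h2 := congrArg (Ideal.comap (Ideal.Quotient.mk (Ideal.span {x}))) h1
      rw [Ideal.comap_map_of_surjective _ Ideal.Quotient.mk_surjective,
        Ideal.comap_map_of_surjective _ Ideal.Quotient.mk_surjective, ← RingHom.ker_eq_comap_bot,
        Ideal.mk_ker] at h2
      rw [sup_comm, h2, sup_eq_left]
      exact (Ideal.span_singleton_le_iff_mem _).mpr hx

/-! ### Projective dimension over regular local rings -/

open IsLocalRing RingTheory.Sequence in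
lemma projDimLE_residue {R : Type} [CommRing R] [IsRegularLocalRing R] {d : ℕ}
    (hd : ringKrullDim R = d) :
    HasProjectiveDimensionLE (ModuleCat.of R (R ⧸ maximalIdeal R)) d := by
  obtain ⟨S, hScard, hS⟩ := Submodule.FG.exists_span_finset_card_eq_spanFinrank
    (maximalIdeal R).fg_of_isNoetherianRing
  have h := IsRegularLocalRing.spanFinrank_maximalIdeal (R := R)
  rw [hd] at h
  have h' : S.card = d := by rw [hScard]; exact_mod_cast h
  obtain ⟨-, rs, hreg, hgen, hlen⟩ := exists_regular_sequence d R hd.ge S h'.le hS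
  have hreg' : IsRegular R rs := ⟨hreg, by
    rw [hgen]
    intro h
    have : (maximalIdeal R) = ⊤ := by simpa using h.symm
    exact (maximalIdeal.isMaximal R).ne_top this⟩
  have hpd := ModuleCat.projectiveDimension_quotient_eq_length rs hreg'
  rw [← projectiveDimension_le_iff, ← hlen, ← hpd, hgen]
  exact (projectiveDimension_eq_of_iso
    (Shrink.linearEquiv R (R ⧸ maximalIdeal R)).toModuleIso).ge

/-- A bound on the projective dimensions of the modules `R ⧸ q`, for the primes `q` containing `I`,
holds for all finitely generated modules killed by `I`, by a prime filtration. -/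
lemma projDimLE_devissage {R : Type} [CommRing R] [IsNoetherianRing R] {d : ℕ} (I : Ideal R)
    (h : ∀ q : Ideal R, q.IsPrime → I ≤ q →
      HasProjectiveDimensionLE (ModuleCat.of R (R ⧸ q)) d)
    (M : Type) [AddCommGroup M] [Module R M] [hM : Module.Finite R M]
    (hI : I ≤ Module.annihilator R M) :
    HasProjectiveDimensionLE (ModuleCat.of R M) d := by
  revert hI
  induction hM using IsNoetherianRing.induction_on_isQuotientEquivQuotientPrime R with
  | subsingleton N =>
    intro _
    have := (ModuleCat.isZero_of_subsingleton (ModuleCat.of R N)).hasProjectiveDimensionLT_zero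
    exact hasProjectiveDimensionLT_of_ge _ 0 _ (Nat.zero_le _)
  | quotient N p e =>
    intro hI
    have := h p.1 p.2 (by rwa [e.annihilator_eq, Ideal.annihilator_quotient] at hI)
    exact hasProjectiveDimensionLT_of_iso e.symm.toModuleIso _
  | exact N₁ N₂ N₃ f g hf hg hfg h₁ h₃ =>
    intro hI
    have w : ModuleCat.ofHom f ≫ ModuleCat.ofHom g = 0 := by
      ext x; exact hfg.apply_apply_eq_zero x
    let S := ShortComplex.mk (ModuleCat.ofHom f) (ModuleCat.ofHom g) w
    have hS : S.ShortExact :=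
      { exact := (ShortComplex.ShortExact.moduleCat_exact_iff_function_exact S).mpr hfg
        mono_f := (ModuleCat.mono_iff_injective _).mpr hf
        epi_g := (ModuleCat.epi_iff_surjective _).mpr hg }
    exact hS.hasProjectiveDimensionLT_X₂ _ (h₁ (hI.trans (f.annihilator_le_of_injective hf)))
      (h₃ (hI.trans (g.annihilator_le_of_surjective hg)))

open IsLocalRing in
/-- Noetherian induction on `q`: for `x` in the maximal ideal outside `q`, the projective dimension
of `R ⧸ q` is one less than that of its quotient by `x`, a module killed by `q + (x)`. -/
lemma projDimLE_quotient_prime {R : Type} [CommRing R] [IsRegularLocalRing R] {d : ℕ}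
    (hd : ringKrullDim R = d) (q : Ideal R) (hq : q.IsPrime) :
    HasProjectiveDimensionLE (ModuleCat.of R (R ⧸ q)) d := by
  induction q using WellFoundedGT.induction with
  | _ q ih =>
  by_cases hqm : q = maximalIdeal R
  · subst hqm
    exact projDimLE_residue hd
  · obtain ⟨x, hx, hxq⟩ := Set.not_subset.mp
      (fun h ↦ hqm (le_antisymm (le_maximalIdeal hq.ne_top) h))
    have hreg : IsSMulRegular (R ⧸ q) x := by
      have hdom : IsDomain (R ⧸ q) := (Ideal.Quotient.isDomain_iff_prime q).mpr hq
      have hx0 : Ideal.Quotient.mk q x ≠ 0 := fun h ↦ hxq (Ideal.Quotient.eq_zero_iff_mem.mp h)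
      intro a b h
      refine mul_left_cancel₀ hx0 ?_
      simpa [Algebra.smul_def] using h
    have hpd := ModuleCat.projectiveDimension_quotSMulTop_eq_succ_of_isSMulRegular
      (ModuleCat.of R (R ⧸ q)) x hreg hx
    have h1 : HasProjectiveDimensionLE (ModuleCat.of R (QuotSMulTop x (R ⧸ q))) d := by
      refine projDimLE_devissage (q ⊔ Ideal.span {x}) (fun p hp hle ↦ ih p ?_ hp) _ ?_
      · refine lt_of_le_of_ne (le_sup_left.trans hle) ?_
        rintro rfl
        exact hxq (le_sup_right.trans hle (Ideal.mem_span_singleton_self x))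
      · refine sup_le ?_ ((Ideal.span_singleton_le_iff_mem _).mpr (QuotSMulTop.mem_annihilator _ x))
        conv_lhs => rw [← Ideal.annihilator_quotient (I := q)]
        exact (Submodule.mkQ _).annihilator_le_of_surjective (Submodule.mkQ_surjective _)
    rw [← projectiveDimension_le_iff] at h1 ⊢
    refine le_trans ?_ (hpd.symm.le.trans h1)
    exact le_add_of_nonneg_right zero_le_one

/-- The global dimension bound for regular local rings, on finitely generated modules. -/
lemma projDimLE_of_regularLocal {R : Type} [CommRing R] [IsRegularLocalRing R] {d : ℕ}
    (hd : ringKrullDim R = d) (M : ModuleCat.{0} R) [Module.Finite R M] :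
    HasProjectiveDimensionLE M d :=
  projDimLE_devissage ⊥ (fun q hq _ ↦ projDimLE_quotient_prime hd q hq) M bot_le

/-! ### Annihilation of `Ext` by elements of a multiplicative set -/

/-- If `S⁻¹M` is projective, a surjection `F → M` of finitely generated modules splits up to
multiplication by an element of `S`: a section of `S⁻¹F → S⁻¹M` is defined over `R` after clearing
denominators. -/
lemma exists_factor_of_projective_localization {R : Type} [CommRing R] [IsNoetherianRing R]
    (S : Submonoid R) {F M : ModuleCat.{0} R} [Module.Finite R F] [Module.Finite R M] (f : F ⟶ M)
    (hf : Function.Surjective f.hom) (hM : Projective (M.localizedModule S)) :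
    ∃ s ∈ S, ∃ h : M ⟶ F, h ≫ f = s • 𝟙 M := by
  have : Module.FinitePresentation R M := Module.finitePresentation_of_finite R M
  have hepi : Epi f := (ModuleCat.epi_iff_surjective _).mpr hf
  have hφ : Epi ((ModuleCat.localizedModuleFunctor S).map f) := inferInstance
  have hproj : Projective ((ModuleCat.localizedModuleFunctor S).obj M) := hM
  let φ : F.localizedModule S →ₗ[Localization S] M.localizedModule S :=
    (ModuleCat.localizedModuleMap S f).hom
  let σ : M.localizedModule S →ₗ[Localization S] F.localizedModule S :=
    (Projective.factorThru (𝟙 _) ((ModuleCat.localizedModuleFunctor S).map f)).hom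
  have hσ (y : M.localizedModule S) : φ (σ y) = y :=
    congrArg (fun g ↦ g.hom y)
      (Projective.factorThru_comp (𝟙 _) ((ModuleCat.localizedModuleFunctor S).map f))
  obtain ⟨h, s, hs⟩ := Module.FinitePresentation.exists_lift_of_isLocalizedModule S
    (F.localizedModuleMkLinearMap S) (σ.restrictScalars R ∘ₗ M.localizedModuleMkLinearMap S)
  have key : M.localizedModuleMkLinearMap S ∘ₗ (f.hom ∘ₗ h) =
      M.localizedModuleMkLinearMap S ∘ₗ ((s : R) • LinearMap.id) := by
    ext m
    have h1 : M.localizedModuleMkLinearMap S (f.hom (h m)) =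
        φ (F.localizedModuleMkLinearMap S (h m)) :=
      (IsLocalizedModule.map_apply S (F.localizedModuleMkLinearMap S)
        (M.localizedModuleMkLinearMap S) f.hom (h m)).symm
    have h2 : F.localizedModuleMkLinearMap S (h m) =
        (s : R) • σ (M.localizedModuleMkLinearMap S m) := LinearMap.congr_fun hs m
    simp only [LinearMap.comp_apply, LinearMap.smul_apply, LinearMap.id_apply]
    rw [h1, h2, ← LinearMap.restrictScalars_apply R φ, map_smul, LinearMap.restrictScalars_apply,
      hσ, map_smul]
  obtain ⟨t, ht⟩ := Module.Finite.exists_smul_of_comp_eq_of_isLocalizedModule S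
    (M.localizedModuleMkLinearMap S) _ _ key
  refine ⟨t * s, (t * s).2, ModuleCat.ofHom ((t : R) • h), ?_⟩
  ext m
  have := LinearMap.congr_fun ht m
  simp only [LinearMap.smul_apply, LinearMap.comp_apply, LinearMap.id_apply,
    Submonoid.smul_def] at this
  simp only [ModuleCat.hom_comp, ModuleCat.hom_smul, ModuleCat.hom_id, LinearMap.smul_apply,
    LinearMap.comp_apply, LinearMap.id_apply, mul_smul]
  exact (f.hom.map_smul (t : R) (h m)).trans this

open Abelian in
/-- If `S⁻¹M` has projective dimension at most `d`, then a single element of `S` kills `Ext^j(M, N)`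
for all `N` and all `j > d`. Induction on `d` by passing to the first syzygy. -/
lemma exists_smul_ext_eq_zero {R : Type} [CommRing R] [IsNoetherianRing R]
    (S : Submonoid R) (d : ℕ) : ∀ (M : ModuleCat.{0} R) [Module.Finite R M]
    (_ : HasProjectiveDimensionLE (M.localizedModule S) d),
    ∃ s ∈ S, ∀ (N : ModuleCat.{0} R) (j : ℕ) (_ : d < j) (e : Ext M N j), s • e = 0 := by
  induction d with
  | zero =>
    intro M _ hM
    obtain ⟨F, _, _, _, _, f, hf⟩ := Module.exists_finite_presentation R M
    obtain ⟨s, hs, h, hh⟩ := exists_factor_of_projective_localization S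
      (F := ModuleCat.of R F) (ModuleCat.ofHom f) hf
      ((projective_iff_hasProjectiveDimensionLE_zero _).mpr hM)
    have : Projective (ModuleCat.of R F) := inferInstance
    refine ⟨s, hs, fun N j hj e ↦ ?_⟩
    obtain ⟨j, rfl⟩ := Nat.exists_eq_add_of_lt hj
    -- Multiplication by `s` on `Ext` factors through `Ext^j(F, N) = 0`.
    have h0 : (Ext.mk₀ (ModuleCat.ofHom f)).comp e (zero_add _) = 0 :=
      Ext.eq_zero_of_hasProjectiveDimensionLT _ 1 (by omega)
    have h1 : s • e = (Ext.mk₀ (s • 𝟙 M)).comp e (zero_add _) := by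
      simp [Ext.mk₀_smul, Ext.smul_comp]
    rw [h1, ← hh, ← Ext.mk₀_comp_mk₀_assoc, h0, Ext.comp_zero]
  | succ d ih =>
    intro M _ hM
    obtain ⟨F, _, _, _, _, f, hf⟩ := Module.exists_finite_presentation R M
    have hS := LinearMap.shortExact_shortComplexKer (f := f) hf
    have : Projective f.shortComplexKer.X₂ := inferInstanceAs (Projective (ModuleCat.of R F))
    have hTS := hS.map_of_exact (ModuleCat.localizedModuleFunctor S)
    have hp : Projective (f.shortComplexKer.map (ModuleCat.localizedModuleFunctor S)).X₂ :=
      (ModuleCat.localizedModuleFunctor S).projective_obj _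
    obtain ⟨s, hs, hk⟩ := ih f.shortComplexKer.X₁ ((hTS.hasProjectiveDimensionLT_X₃_iff d hp).mp hM)
    refine ⟨s, hs, fun N j hj e ↦ ?_⟩
    obtain ⟨j, rfl⟩ : ∃ j', j = j' + 1 := ⟨j - 1, by omega⟩
    obtain ⟨e', rfl⟩ := precomp_extClass_surjective_of_projective_X₂ N hS j e
    have := hk N j (by omega) e'
    have h1 : s • (hS.extClass.comp e' (add_comm 1 j)) =
      hS.extClass.comp (s • e') (add_comm 1 j) := by simp
    refine h1.trans ?_
    simp [this]

/-! ### Comparison of `extModule` with `Abelian.Ext` -/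

/-- Elements killing `Ext` in the derived-category sense (`Abelian.Ext`) also kill the module
`extModule` of the left derived functor construction: both are computed by cocycles on one
projective resolution, and the two notions of coboundary agree. -/
lemma smul_extModule_eq_zero {A : Type} [CommRing A] {M : Type} [AddCommGroup M] [Module A M]
    {i : ℕ} (s : A)
    (hs : ∀ e : Abelian.Ext (ModuleCat.of A M) (ModuleCat.of A A) (i + 1), s • e = 0)
    (z : extModule A M (i + 1)) : s • z = 0 := by
  let P := ProjectiveResolution.of (ModuleCat.of A M)
  let K := P.complex.linearYonedaObj A (ModuleCat.of A A)
  let E : extModule A M (i + 1) ≅ (K.sc' i (i + 1) (i + 2)).moduleCatLeftHomologyData.H :=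
    P.isoExt (i + 1) (ModuleCat.of A A) ≪≫
      ShortComplex.homologyMapIso (K.isoSc' i (i + 1) (i + 2) (by simp) (by simp)) ≪≫
      (K.sc' i (i + 1) (i + 2)).moduleCatHomologyIso
  have h : ∀ y : (K.sc' i (i + 1) (i + 2)).moduleCatLeftHomologyData.H, s • y = 0 := by
    intro y
    obtain ⟨⟨φ, hφ⟩, rfl⟩ := Submodule.mkQ_surjective _ y
    change P.complex.X (i + 1) ⟶ ModuleCat.of A A at φ
    have hd : P.complex.d (i + 2) (i + 1) ≫ φ = 0 := hφ
    have hz : P.extMk (s • φ) (i + 2) rfl (by simp [hd]) = 0 := by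
      have h1 : s • φ = φ ≫ (s • 𝟙 _) := by simp
      simp only [h1]
      rw [← P.extMk_comp_mk₀ φ (i + 2) rfl hd, Abelian.Ext.mk₀_smul, Abelian.Ext.comp_smul,
        Abelian.Ext.comp_mk₀_id, hs]
    obtain ⟨g, hg⟩ := (P.extMk_eq_zero_iff _ _ _ _ i rfl).mp hz
    exact (Submodule.Quotient.mk_eq_zero _).mpr ⟨g, Subtype.ext hg⟩
  have h2 := h (E.hom.hom z)
  rw [← map_smul] at h2
  exact ((ModuleCat.mono_iff_injective E.hom).mp inferInstance) (h2.trans (map_zero _).symm)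

/-! ### Heights of the primes in the support -/

instance finite_localizedModule {R : Type} [CommRing R] (S : Submonoid R) (M : ModuleCat.{0} R)
    [Module.Finite R M] : Module.Finite (Localization S) (M.localizedModule S) :=
  Module.Finite.of_isLocalizedModule S (M.localizedModuleMkLinearMap S)

/-- Primes in the support of `Ext^i(M, A)` have height at least `i`, for `A` regular. -/
lemma height_ge_of_annihilator_le {A : Type} [CommRing A] [IsRegularRing A]
    {M : Type} [AddCommGroup M] [Module A M] [Module.Finite A M] {i : ℕ} {p : Ideal A} [p.IsPrime]
    (hp : Module.annihilator A (extModule A M i) ≤ p) : (i : ℕ∞) ≤ p.height := by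
  by_contra! hlt
  obtain ⟨d, hd⟩ := ENat.ne_top_iff_exists.mp hlt.ne_top
  obtain ⟨j, rfl⟩ : ∃ j, i = j + 1 := Nat.exists_eq_succ_of_ne_zero (by rintro rfl; simp at hlt)
  have hdim : ringKrullDim (Localization.AtPrime p) = d := by
    rw [IsLocalization.AtPrime.ringKrullDim_eq_height p, ← hd]; rfl
  obtain ⟨s, hs, hann⟩ := exists_smul_ext_eq_zero p.primeCompl d (ModuleCat.of A M)
    (projDimLE_of_regularLocal hdim _)
  refine hs (hp (Module.mem_annihilator.mpr (smul_extModule_eq_zero s (hann _ _ ?_))))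
  rw [← hd] at hlt
  exact_mod_cast hlt

/-- In a ring of dimension `n`, a chain of primes above `I` starts at height at least `i`, so has
length at most `n - i`. -/
lemma ringKrullDim_quotient_le_of_height {A : Type} [CommRing A] {n i : ℕ} (hi : i ≤ n)
    (hA : ringKrullDim A = n) {I : Ideal A} (hI : ∀ (p : Ideal A) [p.IsPrime], I ≤ p →
      (i : ℕ∞) ≤ p.height) : ringKrullDim (A ⧸ I) ≤ ((n - i : ℕ) : WithBot ℕ∞) := by
  rw [ringKrullDim_quotient]
  refine iSup_le fun l ↦ ?_
  let l' : LTSeries (PrimeSpectrum A) := l.map Subtype.val fun _ _ h ↦ h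
  have h1 : (i : ℕ∞) ≤ Order.height l'.head :=
    (hI l'.head.asIdeal l.head.2).trans_eq (PrimeSpectrum.height_eq_orderHeight _)
  have h2 : (l.length : ℕ∞) ≤ Order.coheight l'.head := Order.length_le_coheight_head (p := l')
  have : Nonempty (PrimeSpectrum A) := ⟨l'.head⟩
  have h3 : ((Order.height l'.head + Order.coheight l'.head : ℕ∞) : WithBot ℕ∞) ≤ n := by
    rw [← hA, ringKrullDim, Order.krullDim_eq_iSup_height_add_coheight_of_nonempty]
    exact WithBot.coe_le_coe.mpr
      (le_iSup (fun a : PrimeSpectrum A ↦ Order.height a + Order.coheight a) l'.head)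
  have h4 : ((i + l.length : ℕ) : ℕ∞) ≤ (n : ℕ∞) := by
    push_cast
    exact (add_le_add h1 h2).trans (by exact_mod_cast h3)
  have h5 : i + l.length ≤ n := by exact_mod_cast h4
  exact_mod_cast (by omega : l.length ≤ n - i)

/-- For `A = k[x_1, …, x_n]` with `k` a field and `n ≥ 1`, a finitely generated `A`-module `M`
and `0 ≤ i ≤ n`: if `Ext^i_A(M, A) ≠ 0` then `cd(Ext^i_A(M, A)) ≥ i`, i.e.
`dim (A / ann_A(Ext^i_A(M, A))) ≤ n - i` (Krull dimension). -/
theorem ext_codim_ge (k : Type) [Field k] (n : ℕ) (hn : 1 ≤ n)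
    (M : Type) [AddCommGroup M] [Module (MvPolynomial (Fin n) k) M]
    [Module.Finite (MvPolynomial (Fin n) k) M]
    (i : ℕ) (hi : i ≤ n)
    (hne : Nontrivial (extModule (MvPolynomial (Fin n) k) M i)) :
    ringKrullDim (MvPolynomial (Fin n) k ⧸
        Module.annihilator (MvPolynomial (Fin n) k) (extModule (MvPolynomial (Fin n) k) M i))
      ≤ ((n - i : ℕ) : WithBot (WithTop ℕ)) :=
  ringKrullDim_quotient_le_of_height hi (by simp)
    fun _ _ h ↦ height_ge_of_annihilator_le h
end

section
/- For every nonzero finitely generated A-module M and every integer i with 0 ≤ i < cd(M), one has Ext^i_A(M, A) = 0. -/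
/-! Let `A = k[x_1, …, x_n]` and `I = ann M`. By a lemma of Rees, if `I` contains an `A`-regular
sequence of length `r`, then `Ext^i(M, A) = 0` for all `i < r`. So the point is that an ideal `I`
with `dim A/I ≤ n - r` contains a regular sequence of length `r`
(`exists_isWeaklyRegular_of_dim_le`).

This is proved by induction on `r` (with `n` decreasing too), without Cohen–Macaulay theory.
If `r > 0` then `I ≠ 0`. Nagata's change of variables identifies `A` with `B[X]`, where `B` is a
polynomial ring in one variable less, so that `I` contains a monic polynomial `p`
(`exists_algEquiv_monic_mem`). Put `J = I ∩ B`. As `p ∈ I` is monic, `B/J → B[X]/I` is injective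
and integral, whence `dim B/J ≤ dim B[X]/I` by lying over and going up
(`ringKrullDim_quotient_comap_C_le`), and by induction `J` contains a `B`-regular sequence of
length `r - 1`. Since `p` is a nonzerodivisor and `B[X]/(p)` is free over `B`, putting `p` in front
of this sequence gives a regular sequence in `I` (`isWeaklyRegular_cons_map_C`).

Rees' lemma is available for the `Ext` groups defined through the derived category, whereas
`extModule` uses the classical derived functors of `Hom(-, A)`. Both are computed by a projective
resolution, and `subsingleton_Ext_of_subsingleton_abelianExt` carries the vanishing over. -/

open CategoryTheory

namespace ExtVanishing

/-! ### Nagata's change of variables -/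

section Nagata

open Polynomial MvPolynomial Ideal Nat RingHom List NoetherNormalization

variable {k : Type*} [Field k] {n : ℕ} (f : MvPolynomial (Fin (n + 1)) k)
variable (v w : Fin (n + 1) →₀ ℕ)

variable {f v} in
lemma lt_up (vlt : ∀ i, v i < 2 + f.totalDegree) : ∀ l ∈ ofFn v, l < 2 + f.totalDegree := by
  grind

lemma t1_comp_t1_neg (c : k) : (T1 f c).comp (T1 f (-c)) = AlgHom.id _ _ := by
  rw [comp_aeval, ← MvPolynomial.aeval_X_left]
  ext i v
  cases i using Fin.cases <;> simp

/-- Nagata's automorphism attached to `f`: it fixes `X_0` and sends `X_i` to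
`X_i + X_0 ^ (D ^ i)` for `i ≠ 0`, where `D = 2 + f.totalDegree` exceeds every exponent in `f`. -/
noncomputable abbrev T := AlgEquiv.ofAlgHom (T1 f 1) (T1 f (-1))
  (t1_comp_t1_neg f 1) (by simpa using t1_comp_t1_neg f (-1))

/-- An exponent vector bounded by `D = 2 + f.totalDegree` is determined by the number whose digits
in base `D` it lists. -/
lemma sum_r_mul_ne (vlt : ∀ i, v i < 2 + f.totalDegree) (wlt : ∀ i, w i < 2 + f.totalDegree)
    (ne : v ≠ w) :
    ∑ x : Fin (n + 1), (2 + f.totalDegree) ^ x.1 * v x ≠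
      ∑ x : Fin (n + 1), (2 + f.totalDegree) ^ x.1 * w x := by
  intro h
  refine ne <| Finsupp.ext <| congrFun <| ofFn_inj.mp ?_
  apply ofDigits_inj_of_len_eq (Nat.lt_add_right f.totalDegree one_lt_two)
    (by simp) (lt_up vlt) (lt_up wlt)
  simpa only [ofDigits_eq_sum_mapIdx, mapIdx_eq_ofFn, get_ofFn, length_ofFn,
    Fin.val_cast, mul_comm, sum_ofFn] using! h

lemma degreeOf_zero_t {a : k} (ha : a ≠ 0) : ((T f) (monomial v a)).degreeOf 0 =
    ∑ i : Fin (n + 1), ((2 + f.totalDegree) ^ i.1) * v i := by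
  rw [← natDegree_finSuccEquiv, monomial_eq, Finsupp.prod_pow v fun a ↦ X a]
  simp only [Fin.prod_univ_succ, Fin.sum_univ_succ, map_mul, map_prod, map_pow,
    AlgEquiv.ofAlgHom_apply, MvPolynomial.aeval_C, MvPolynomial.aeval_X, if_pos, Fin.succ_ne_zero,
    ite_false, one_smul, map_add, finSuccEquiv_X_zero, finSuccEquiv_X_succ, algebraMap_eq]
  have h (i : Fin n) :
      (Polynomial.C (X (R := k) i) + Polynomial.X ^ (2 + f.totalDegree) ^ (i.succ).1) ^ v i.succ ≠
        0 :=
    pow_ne_zero (v i.succ) (leadingCoeff_ne_zero.mp <| by simp [add_comm, leadingCoeff_X_pow_add_C])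
  rw [natDegree_mul (by simp [ha]) (mul_ne_zero (by simp) (Finset.prod_ne_zero_iff.mpr
    (fun i _ ↦ h i))), natDegree_mul (by simp) (Finset.prod_ne_zero_iff.mpr (fun i _ ↦ h i)),
    natDegree_prod _ _ (fun i _ ↦ h i), natDegree_finSuccEquiv, degreeOf_C]
  simpa only [natDegree_pow, zero_add, natDegree_X, mul_one, Fin.val_zero, pow_zero, one_mul,
    add_right_inj] using Finset.sum_congr rfl (fun i _ ↦ by
    rw [add_comm (Polynomial.C _), natDegree_X_pow_add_C, mul_comm])

/-- `T` maps different monomials of `f` to polynomials with different degrees in `X_0`. -/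
lemma degreeOf_t_ne_of_ne (hv : v ∈ f.support) (hw : w ∈ f.support) (ne : v ≠ w) :
    (T f <| monomial v <| coeff v f).degreeOf 0 ≠
    (T f <| monomial w <| coeff w f).degreeOf 0 := by
  rw [degreeOf_zero_t _ _ <| mem_support_iff.mp hv, degreeOf_zero_t _ _ <| mem_support_iff.mp hw]
  refine sum_r_mul_ne f v w (fun i ↦ ?_) (fun i ↦ ?_) ne <;>
  exact lt_of_le_of_lt ((monomial_le_degreeOf i ‹_›).trans (degreeOf_le_totalDegree f i))
    (by lia)

lemma leadingCoeff_finSuccEquiv_t :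
    (finSuccEquiv k n ((T f) ((monomial v) (coeff v f)))).leadingCoeff =
    algebraMap k _ (coeff v f) := by
  rw [monomial_eq, Finsupp.prod_fintype]
  · simp only [map_mul, map_prod, leadingCoeff_mul, leadingCoeff_prod]
    rw [AlgEquiv.ofAlgHom_apply, algHom_C, algebraMap_eq, finSuccEquiv_apply,
      eval₂Hom_C, coe_comp]
    simp only [AlgEquiv.ofAlgHom_apply, Function.comp_apply, leadingCoeff_C, map_pow,
      leadingCoeff_pow, algebraMap_eq]
    have : ∀ j, ((finSuccEquiv k n) ((T1 f) 1 (X j))).leadingCoeff = 1 := fun j ↦ by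
      by_cases h : j = 0
      · simp [h, finSuccEquiv_apply]
      · simp only [aeval_eq_bind₁, bind₁_X_right, if_neg h, one_smul, map_add, map_pow]
        obtain ⟨i, rfl⟩ := Fin.exists_succ_eq.mpr h
        simp [finSuccEquiv_X_succ, finSuccEquiv_X_zero, add_comm]
    simp only [this, one_pow, Finset.prod_const_one, mul_one]
  exact fun i ↦ pow_zero _

/-- `T f f`, as a polynomial in `X_0`, has invertible leading coefficient: exactly one monomial of
`f` contributes to its top degree, and that contribution has a constant leading coefficient. -/
lemma T_leadingcoeff_isUnit (fne : f ≠ 0) :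
    IsUnit (finSuccEquiv k n (T f f)).leadingCoeff := by
  obtain ⟨v, vin, vs⟩ := Finset.exists_max_image f.support
    (fun v ↦ (T f ((monomial v) (coeff v f))).degreeOf 0) (support_nonempty.mpr fne)
  set h := fun w ↦ (MvPolynomial.monomial w) (coeff w f)
  simp only [← natDegree_finSuccEquiv] at vs
  replace vs : ∀ x ∈ f.support \ {v}, (finSuccEquiv k n ((T f) (h x))).degree <
      (finSuccEquiv k n ((T f) (h v))).degree := by
    intro x hx
    obtain ⟨h1, h2⟩ := Finset.mem_sdiff.mp hx
    apply degree_lt_degree <| lt_of_le_of_ne (vs x h1) ?_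
    simpa only [natDegree_finSuccEquiv]
      using degreeOf_t_ne_of_ne f _ _ h1 vin <| ne_of_not_mem_cons h2
  have coeff : (finSuccEquiv k n ((T f) (h v + ∑ x ∈ f.support \ {v}, h x))).leadingCoeff =
      (finSuccEquiv k n ((T f) (h v))).leadingCoeff := by
    simp only [map_add, map_sum]
    rw [add_comm]
    apply leadingCoeff_add_of_degree_lt <| (lt_of_le_of_lt <| degree_sum_le _ _) ?_
    have h2 : h v ≠ 0 := by simpa [h] using mem_support_iff.mp vin
    replace h2 : (finSuccEquiv k n ((T f) (h v))) ≠ 0 := fun eq ↦ h2 <|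
      by simpa only [map_eq_zero_iff _ (AlgEquiv.injective _)] using eq
    exact (Finset.sup_lt_iff <| Ne.bot_lt (fun x ↦ h2 <| degree_eq_bot.mp x)).mpr vs
  nth_rw 2 [← f.support_sum_monomial_coeff]
  rw [Finset.sum_eq_add_sum_sdiff_singleton_of_mem vin h]
  rw [leadingCoeff_finSuccEquiv_t] at coeff
  simpa only [coeff, algebraMap_eq] using (mem_support_iff.mp vin).isUnit.map MvPolynomial.C

end Nagata

open Polynomial in
/-- After a change of variables, a nonzero ideal of a polynomial ring over a field contains an
element which is monic in the first variable. -/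
lemma exists_algEquiv_monic_mem {k : Type*} [Field k] {m : ℕ}
    (I : Ideal (MvPolynomial (Fin (m + 1)) k)) (hI : I ≠ ⊥) :
    ∃ (e : MvPolynomial (Fin (m + 1)) k ≃ₐ[k] (MvPolynomial (Fin m) k)[X])
      (p : (MvPolynomial (Fin m) k)[X]), p.Monic ∧ e.symm p ∈ I := by
  obtain ⟨f, hf, f0⟩ := Submodule.exists_mem_ne_zero_of_ne_bot hI
  let e := (T f).trans (MvPolynomial.finSuccEquiv k m)
  have hu : IsUnit (e f).leadingCoeff := T_leadingcoeff_isUnit f f0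
  refine ⟨e, C (↑hu.unit⁻¹ : MvPolynomial (Fin m) k) * e f, ?_, ?_⟩
  · rw [Monic, leadingCoeff_C_mul_of_isUnit (Units.isUnit _)]
    exact hu.val_inv_mul
  · rw [map_mul, AlgEquiv.symm_apply_apply]
    exact I.mul_mem_left _ hf

/-! ### Krull dimension -/

/-- An integral extension does not have smaller Krull dimension: a chain of primes downstairs lifts
by lying over and going up. -/
lemma ringKrullDim_le_of_isIntegral {R S : Type*} [CommRing R] [CommRing S] [Algebra R S]
    [Algebra.IsIntegral R S] [FaithfulSMul R S] : ringKrullDim R ≤ ringKrullDim S := by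
  refine iSup_le fun l ↦ ?_
  obtain ⟨⟨Q, hQ, hQl⟩⟩ := Ideal.nonempty_primesOver (S := S) l.head.asIdeal
  obtain ⟨L, hL, -⟩ := Ideal.exists_ltSeries_of_hasGoingUp l Q
  exact hL ▸ le_iSup (fun L : LTSeries (PrimeSpectrum S) ↦ (L.length : WithBot ℕ∞)) L

open Polynomial in
/-- A monic `p ∈ I` makes `B ⧸ (I ∩ B) → B[X] ⧸ I` an integral extension. -/
lemma ringKrullDim_quotient_comap_C_le {B : Type*} [CommRing B] (I : Ideal B[X]) {p : B[X]}
    (hp : p.Monic) (hpI : p ∈ I) : ringKrullDim (B ⧸ I.comap C) ≤ ringKrullDim (B[X] ⧸ I) := by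
  let φ : B ⧸ I.comap C →+* B[X] ⧸ I := Ideal.quotientMap I C le_rfl
  algebraize [φ]
  have hinj : Function.Injective φ := Ideal.quotientMap_injective
  have : FaithfulSMul (B ⧸ I.comap C) (B[X] ⧸ I) :=
    (faithfulSMul_iff_algebraMap_injective _ _).2 hinj
  have : Algebra.IsIntegral (B ⧸ I.comap C) (B[X] ⧸ I) := by
    have h1 : Module.Finite B (B[X] ⧸ Ideal.span {p}) := hp.finite_quotient
    have hle : Ideal.span {p} ≤ I := (Ideal.span_singleton_le_iff_mem I).2 hpI
    have h2 : Module.Finite B (B[X] ⧸ I) :=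
      Module.Finite.of_surjective (Ideal.Quotient.factorₐ B hle).toLinearMap
        (Ideal.Quotient.factor_surjective hle)
    have : IsScalarTower B (B ⧸ I.comap C) (B[X] ⧸ I) := .of_algebraMap_eq fun x ↦ rfl
    have := Module.Finite.of_restrictScalars_finite B (B ⧸ I.comap C) (B[X] ⧸ I)
    infer_instance
  exact ringKrullDim_le_of_isIntegral

open Polynomial RingTheory.Sequence in
/-- The sequence `rs` stays weakly regular on `B[X] ⧸ (p)`, which is free over `B`. -/
lemma isWeaklyRegular_cons_map_C {B : Type*} [CommRing B] {p : B[X]} (hp : p.Monic)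
    {rs : List B} (hrs : IsWeaklyRegular B rs) :
    IsWeaklyRegular B[X] (p :: rs.map C) := by
  refine IsWeaklyRegular.cons' ?_ ?_
  · intro f g h
    exact hp.isRegular.left h
  · have : Module.Free B (B[X] ⧸ Ideal.span {p}) := hp.free_quotient
    have h := hrs.of_flat (S := B[X] ⧸ Ideal.span {p})
    have e : QuotSMulTop p B[X] ≃ₗ[B[X] ⧸ Ideal.span {p}] B[X] ⧸ Ideal.span {p} :=
      LinearEquiv.extendScalarsOfSurjective Ideal.Quotient.mk_surjective
      (Submodule.quotEquivOfEq _ _ (by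
        rw [← Submodule.ideal_span_singleton_smul, smul_eq_mul, Ideal.mul_top]))
    rw [e.isWeaklyRegular_congr, List.map_map]
    exact h

/-! ### Regular sequences in ideals of a polynomial ring -/

open RingTheory.Sequence in
/-- An ideal of codimension at least `r` in a polynomial ring over a field contains a weakly
regular sequence of length `r`. The codimension condition is phrased without subtraction, and the
unit ideal is allowed. -/
lemma exists_isWeaklyRegular_of_dim_le {k : Type*} [Field k] (d r : ℕ) :
    ∀ (n : ℕ) (I : Ideal (MvPolynomial (Fin n) k)),
      ringKrullDim (MvPolynomial (Fin n) k ⧸ I) ≤ d → d + r ≤ n →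
      ∃ rs : List (MvPolynomial (Fin n) k), rs.length = r ∧ (∀ a ∈ rs, a ∈ I) ∧
        IsWeaklyRegular (MvPolynomial (Fin n) k) rs := by
  induction r with
  | zero => exact fun n I _ _ ↦ ⟨[], rfl, by simp, .nil _ _⟩
  | succ r ih =>
    intro n I hd hn
    obtain ⟨m, rfl⟩ : ∃ m, n = m + 1 := ⟨n - 1, by omega⟩
    have hI : I ≠ ⊥ := by
      rintro rfl
      rw [ringKrullDim_eq_of_ringEquiv (RingEquiv.quotientBot _),
        MvPolynomial.ringKrullDim_of_isNoetherianRing, ringKrullDim_eq_zero_of_field, zero_add]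
        at hd
      have : m + 1 ≤ d := by
        rw [Nat.card_fin] at hd
        exact_mod_cast hd
      omega
    -- Transport `I` to `B[X]`, with `B` the polynomial ring in `m` variables.
    obtain ⟨e, p, hp, hpI⟩ := exists_algEquiv_monic_mem I hI
    let I' := I.comap e.symm
    have hdim : ringKrullDim (_ ⧸ I') ≤ d := by
      refine le_of_eq_of_le (ringKrullDim_eq_of_ringEquiv ?_) hd
      exact Ideal.quotientEquiv I' I e.symm.toRingEquiv
        (Ideal.map_comap_of_surjective _ e.symm.surjective I).symm
    obtain ⟨rs, hlen, hmem, hreg⟩ := ih m (I'.comap Polynomial.C)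
      ((ringKrullDim_quotient_comap_C_le I' hp hpI).trans hdim) (by omega)
    refine ⟨(p :: rs.map Polynomial.C).map e.symm, by simp [hlen], ?_, ?_⟩
    · simp only [List.map_cons, List.mem_cons, List.mem_map]
      rintro a (rfl | ⟨b, ⟨c, hc, rfl⟩, rfl⟩)
      · exact hpI
      · exact hmem c hc
    · refine (AddEquiv.isWeaklyRegular_congr (e := e.symm.toAddEquiv) ?_).1
        (isWeaklyRegular_cons_map_C hp hreg)
      exact List.forall₂_map_right_iff.2
        (List.forall₂_same.2 fun a _ x ↦ map_mul e.symm a x)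

/-! ### The two definitions of `Ext` -/

/-- Vanishing of `Ext` in the derived category implies vanishing of `Ext` as a derived functor
of `Hom`: both are computed by a projective resolution of `X`. -/
lemma subsingleton_Ext_of_subsingleton_abelianExt {C : Type*} [Category C] [Abelian C]
    [EnoughProjectives C] [HasExt C] (R : Type*) [Ring R] [Linear R C]
    (X Y : C) (i : ℕ) (h : Subsingleton (Abelian.Ext X Y i)) :
    Subsingleton (((Ext R C i).obj (Opposite.op X)).obj Y) := by
  let P := ProjectiveResolution.of X
  apply ModuleCat.subsingleton_of_isZero
  refine Limits.IsZero.of_iso ?_ (P.isoExt i Y)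
  rw [← HomologicalComplex.exactAt_iff_isZero_homology]
  cases i with
  | zero =>
    rw [HomologicalComplex.exactAt_iff' _ 0 0 1 (by simp) (by simp),
      ShortComplex.moduleCat_exact_iff]
    intro x hx
    -- A cocycle `x : P₀ ⟶ Y` of degree `0` factors through the augmentation `P₀ ⟶ X`.
    have hx' : P.complex.d 1 0 ≫ (x : P.complex.X 0 ⟶ Y) = 0 := hx
    have hY (g : X ⟶ Y) : g = 0 :=
      Abelian.Ext.addEquiv₀.symm.injective (Subsingleton.elim _ _)
    have hx0 : (x : P.complex.X 0 ⟶ Y) = 0 := by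
      rw [← P.exact₀.g_desc (x : P.complex.X 0 ⟶ Y) hx']
      exact (congrArg _ (hY (P.exact₀.desc (x : P.complex.X 0 ⟶ Y) hx'))).trans
        Limits.comp_zero
    exact ⟨0, (map_zero _).trans hx0.symm⟩
  | succ j =>
    rw [HomologicalComplex.exactAt_iff' _ j (j+1) (j+2) (by simp) (by simp),
      ShortComplex.moduleCat_exact_iff]
    intro x hx
    -- A cocycle of positive degree represents a class in the derived `Ext`, which vanishes.
    exact (P.extMk_eq_zero_iff x _ rfl hx j rfl).1 (Subsingleton.elim _ _)

/-- Rees' lemma for `extModule`. A weakly regular sequence in `ann M` is regular because `M ≠ 0`. -/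
lemma subsingleton_extModule {A : Type} [CommRing A] [IsNoetherianRing A] {M : Type}
    [AddCommGroup M] [Module A M] [Module.Finite A M] [Nontrivial M] {rs : List A}
    (hreg : RingTheory.Sequence.IsWeaklyRegular A rs)
    (hmem : ∀ a ∈ rs, a ∈ Module.annihilator A M) {i : ℕ} (hi : i < rs.length) :
    Subsingleton (extModule A M i) := by
  have hlt : Module.annihilator A M • (⊤ : Submodule A A) < ⊤ := by
    rw [smul_eq_mul, Ideal.mul_top, lt_top_iff_ne_top, Ne, Module.annihilator_eq_top_iff,
      not_subsingleton_iff_nontrivial]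
    infer_instance
  have hreg' : RingTheory.Sequence.IsRegular A rs := by
    refine ⟨hreg, fun h ↦ hlt.ne (top_le_iff.1 (h.le.trans ?_))⟩
    exact Submodule.smul_mono_left (Ideal.span_le.2 hmem)
  have hsupp : Module.support A (ModuleCat.of A M) ⊆
      PrimeSpectrum.zeroLocus (Module.annihilator A M) :=
    (Module.support_eq_zeroLocus (R := A) (M := M)).le
  have hE : Subsingleton (Abelian.Ext (ModuleCat.of A M) (ModuleCat.of A A) i) :=
    ModuleCat.subsingleton_ext_of_exists_isRegular (Module.annihilator A M) (ModuleCat.of A M)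
      hsupp (ModuleCat.of A A) hlt rs hmem hreg' i hi
  exact subsingleton_Ext_of_subsingleton_abelianExt A (ModuleCat.of A M) (ModuleCat.of A A) i hE

end ExtVanishing

/-- For `A = k[x_1, …, x_n]` with `k` a field and `n ≥ 1`, and `M` a nonzero finitely generated
`A`-module of codimension `cd(M) = r` (i.e. `dim (A / ann_A M) = n - r`, `r ≤ n`),
one has `Ext^i_A(M, A) = 0` for every `0 ≤ i < r = cd(M)`. -/
theorem ext_eq_zero_of_lt_codim (k : Type) [Field k] (n : ℕ) (hn : 1 ≤ n)
    (M : Type) [AddCommGroup M] [Module (MvPolynomial (Fin n) k) M]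
    [Module.Finite (MvPolynomial (Fin n) k) M] [Nontrivial M]
    (r : ℕ) (hr : r ≤ n)
    (hcd : ringKrullDim (MvPolynomial (Fin n) k ⧸
        Module.annihilator (MvPolynomial (Fin n) k) M) = ((n - r : ℕ) : WithBot (WithTop ℕ)))
    (i : ℕ) (hi : i < r) :
    Subsingleton (extModule (MvPolynomial (Fin n) k) M i) := by
  obtain ⟨rs, rfl, hmem, hreg⟩ :=
    ExtVanishing.exists_isWeaklyRegular_of_dim_le (n - r) r n _ hcd.le (by omega)
  exact ExtVanishing.subsingleton_extModule hreg hmem hi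
end

section
/- Let M be a nonzero finitely generated A-module and r an integer with 0 ≤ r ≤ n. Then cd(M) ≥ r if and only if Ext^i_A(M, A) = 0 for every i with 0 ≤ i < r. -/
/-!
Let `A = k[x_1, …, x_n]` and `I = ann M`. By Rees' theorem
(`forall_subsingleton_ext_iff_exists_isWeaklyRegular`), `Ext^i(M, A)` vanishes for all `i < r` if and
only if `I` contains a weakly `A`-regular sequence of length `r`. It remains to see that this is
equivalent to `dim A ⧸ I ≤ n - r`.

If `rs` is weakly regular of length `r` and contained in `I`, then each element of `rs` lowers the
dimension by at least one, hence `dim A ⧸ I + r ≤ dim A ⧸ (rs) + r ≤ dim A = n`.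

Conversely, suppose `dim A ⧸ I ≤ n - r` with `r > 0`. Then `I` has a nonzero element `f`, and a
Nagata change of variables identifies `A` with `B[X]`, for `B` a polynomial ring in `n - 1`
variables, in such a way that a scalar multiple of `f` becomes a monic polynomial `g`. Now `B[X] ⧸ I`
is integral over `B ⧸ (I ∩ B)`, so that `dim B ⧸ (I ∩ B) ≤ (n - 1) - (r - 1)`, and by induction
`I ∩ B` contains a weakly `B`-regular sequence of length `r - 1`. Since `B[X] ⧸ (g)` is free over `B`,
putting `g` in front of it gives a weakly regular sequence on `B[X]`.

Rees' theorem is proved for the `Ext` groups defined through the derived category, whereas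
`extModule` uses a derived functor; a projective resolution compares the two
(`subsingleton_ext_iff`).
-/

open CategoryTheory

/-! ### Making a polynomial monic by a change of variables -/

namespace NagataShear

open Polynomial MvPolynomial RingHom

variable {k : Type*} [Field k] {n : ℕ}

/-- The substitution `X₀ ↦ X₀`, `Xᵢ ↦ Xᵢ + c X₀ ^ (N ^ i)` for `i > 0`. -/
noncomputable def hom (N : ℕ) (c : k) :
    MvPolynomial (Fin (n + 1)) k →ₐ[k] MvPolynomial (Fin (n + 1)) k :=
  MvPolynomial.aeval fun i ↦
    if i = 0 then MvPolynomial.X 0 else MvPolynomial.X i + c • MvPolynomial.X 0 ^ (N ^ i.1)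

lemma hom_comp_hom_neg (N : ℕ) (c : k) :
    (hom (n := n) N c).comp (hom N (-c)) = AlgHom.id _ _ := by
  unfold hom
  rw [comp_aeval, ← MvPolynomial.aeval_X_left]
  ext i v
  cases i using Fin.cases <;> simp

/-- The automorphism `hom N 1` of `k[X₀, …, Xₙ]`, with inverse `hom N (-1)`. -/
noncomputable def equiv (N : ℕ) :
    MvPolynomial (Fin (n + 1)) k ≃ₐ[k] MvPolynomial (Fin (n + 1)) k :=
  AlgEquiv.ofAlgHom (hom N 1) (hom N (-1)) (hom_comp_hom_neg N 1)
    (by simpa using hom_comp_hom_neg (k := k) (n := n) N (-1))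

/-- `equiv N` followed by the identification of `k[X₀, …, Xₙ]` with `k[X₁, …, Xₙ][X]`, where `X` is
the image of `X₀`. -/
noncomputable def toPoly (N : ℕ) :
    MvPolynomial (Fin (n + 1)) k ≃ₐ[k] (MvPolynomial (Fin n) k)[X] :=
  (equiv N).trans (finSuccEquiv k n)

lemma toPoly_X_zero (N : ℕ) :
    toPoly (k := k) (n := n) N (MvPolynomial.X 0) = Polynomial.X := by
  simp [toPoly, equiv, hom, finSuccEquiv_X_zero]

lemma toPoly_X_succ (N : ℕ) (i : Fin n) :
    toPoly (k := k) N (MvPolynomial.X i.succ) =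
      Polynomial.X ^ (N ^ (i.1 + 1)) + Polynomial.C (MvPolynomial.X i) := by
  simp [toPoly, equiv, hom, finSuccEquiv_X_zero, finSuccEquiv_X_succ, add_comm]

lemma toPoly_C (N : ℕ) (a : k) :
    toPoly (k := k) (n := n) N (MvPolynomial.C a) = Polynomial.C (MvPolynomial.C a) := by
  rw [← MvPolynomial.algebraMap_eq, AlgEquiv.commutes]
  rfl

/-- The monomial with exponent `v` becomes, up to its coefficient, monic of degree `∑ N ^ i * v i`. -/
lemma toPoly_monomial (N : ℕ) (hN : 0 < N) (v : Fin (n + 1) →₀ ℕ) (a : k) :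
    ∃ p : (MvPolynomial (Fin n) k)[X], p.Monic ∧
      p.natDegree = ∑ i, N ^ i.1 * v i ∧
      toPoly N (monomial v a) = Polynomial.C (MvPolynomial.C a) * p := by
  have key : ∀ i : Fin (n + 1), (toPoly (k := k) N (MvPolynomial.X i)).Monic ∧
      (toPoly (k := k) N (MvPolynomial.X i)).natDegree = N ^ i.1 := by
    intro i
    cases i using Fin.cases with
    | zero => simp [toPoly_X_zero, monic_X]
    | succ i =>
      have : N ^ (i.1 + 1) ≠ 0 := pow_ne_zero _ hN.ne'
      rw [toPoly_X_succ]
      exact ⟨monic_X_pow_add_C _ this, by simp⟩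
  refine ⟨∏ i, toPoly (k := k) N (MvPolynomial.X i) ^ v i,
    monic_prod_of_monic _ _ fun i _ ↦ (key i).1.pow _, ?_, ?_⟩
  · rw [natDegree_prod_of_monic _ _ fun i _ ↦ (key i).1.pow _]
    refine Finset.sum_congr rfl fun i _ ↦ ?_
    rw [(key i).1.natDegree_pow, (key i).2, mul_comm]
  · rw [monomial_eq, map_mul, toPoly_C, Finsupp.prod_fintype _ _ (by simp)]
    simp

/-- For exponents smaller than `N`, the degree `∑ N ^ i * v i` determines `v`: its base `N` digits
are the `v i`. -/
lemma sum_ne {N : ℕ} (hN : 1 < N) {v w : Fin (n + 1) →₀ ℕ} (hv : ∀ i, v i < N)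
    (hw : ∀ i, w i < N) (h : v ≠ w) :
    ∑ i : Fin (n + 1), N ^ i.1 * v i ≠ ∑ i : Fin (n + 1), N ^ i.1 * w i := by
  intro e
  refine h <| Finsupp.ext <| congrFun <| List.ofFn_inj.mp ?_
  apply Nat.ofDigits_inj_of_len_eq hN (by simp) (by grind) (by grind)
  simpa only [Nat.ofDigits_eq_sum_mapIdx, List.mapIdx_eq_ofFn, List.get_ofFn, List.length_ofFn,
    Fin.val_cast, mul_comm, List.sum_ofFn] using! e

/-- Up to a scalar, every nonzero polynomial is monic in one of the variables after a change of
coordinates: for large `N` the monomials of `f` acquire distinct degrees. -/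
theorem exists_equiv_monic {f : MvPolynomial (Fin (n + 1)) k} (hf : f ≠ 0) :
    ∃ (e : MvPolynomial (Fin (n + 1)) k ≃ₐ[k] (MvPolynomial (Fin n) k)[X]) (c : k),
      (e (c • f)).Monic := by
  set N := 2 + f.totalDegree with hN
  have hlt : ∀ v ∈ f.support, ∀ i, v i < N := fun v hv i ↦
    lt_of_le_of_lt ((monomial_le_degreeOf i hv).trans (degreeOf_le_totalDegree f i)) (by lia)
  choose p hp hdeg hpe using fun v : Fin (n + 1) →₀ ℕ ↦
    toPoly_monomial (k := k) N (by lia) v (coeff v f)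
  obtain ⟨v, hv, hmax⟩ := Finset.exists_max_image f.support
    (fun v ↦ ∑ i : Fin (n + 1), N ^ i.1 * v i) (support_nonempty.mpr hf)
  have ha : coeff v f ≠ 0 := mem_support_iff.mp hv
  refine ⟨toPoly N, (coeff v f)⁻¹, ?_⟩
  have e1 : toPoly N ((coeff v f)⁻¹ • f) = p v + ∑ w ∈ f.support \ {v},
      Polynomial.C (MvPolynomial.C ((coeff v f)⁻¹ * coeff w f)) * p w := by
    nth_rw 2 [← f.support_sum_monomial_coeff]
    rw [Finset.sum_eq_add_sum_sdiff_singleton_of_mem hv, map_smul, map_add, map_sum, smul_add,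
      Finset.smul_sum]
    have h (w) : (coeff v f)⁻¹ • toPoly N (monomial w (coeff w f)) =
        Polynomial.C (MvPolynomial.C ((coeff v f)⁻¹ * coeff w f)) * p w := by
      rw [hpe, Algebra.smul_def, ← mul_assoc]
      congr 1
      simp [Polynomial.algebraMap_apply, MvPolynomial.algebraMap_eq]
    congr 1
    · rw [h, inv_mul_cancel₀ ha]; simp
    · exact Finset.sum_congr rfl fun w _ ↦ h w
  rw [e1]
  refine (hp v).add_of_left ?_
  refine (degree_sum_le _ _).trans_lt ((Finset.sup_lt_iff ?_).2 fun w hw ↦ ?_)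
  · rw [bot_lt_iff_ne_bot, Ne, degree_eq_bot]
    exact (hp v).ne_zero
  · obtain ⟨hw1, hw2⟩ := Finset.mem_sdiff.mp hw
    rw [← Polynomial.smul_eq_C_mul]
    refine (degree_smul_le _ (p w)).trans_lt (degree_lt_degree ?_)
    rw [hdeg, hdeg]
    exact lt_of_le_of_ne (hmax w hw1)
      (sum_ne (by lia) (hlt w hw1) (hlt v hv) (by simpa using hw2))

end NagataShear

/-! ### Regular sequences in ideals of small dimension -/

/-- `S ⧸ I` is an integral extension of `R ⧸ (I ∩ R)`, so chains of primes of the latter lift by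
going up. -/
lemma ringKrullDim_quotient_comap_le {R S : Type*} [CommRing R] [CommRing S] [Algebra R S]
    (I : Ideal S) [Algebra.IsIntegral R (S ⧸ I)] :
    ringKrullDim (R ⧸ I.comap (algebraMap R S)) ≤ ringKrullDim (S ⧸ I) := by
  set J := I.comap (algebraMap R S)
  have : Algebra.IsIntegral (R ⧸ J) (S ⧸ I) := Algebra.IsIntegral.tower_top R
  have inj : Function.Injective (algebraMap (R ⧸ J) (S ⧸ I)) :=
    Ideal.algebraMap_quotient_injective
  have : FaithfulSMul (R ⧸ J) (S ⧸ I) := (faithfulSMul_iff_algebraMap_injective _ _).2 inj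
  refine iSup_le fun l ↦ ?_
  obtain ⟨⟨P, hP1, hP2⟩⟩ : Nonempty ((RelSeries.head l).asIdeal.primesOver (S ⧸ I)) :=
    inferInstance
  obtain ⟨L, hL, -⟩ := Ideal.exists_ltSeries_of_hasGoingUp l P
  rw [← hL]
  exact le_iSup (fun l : LTSeries (PrimeSpectrum (S ⧸ I)) ↦ (l.length : WithBot ℕ∞)) L

open RingTheory.Sequence Pointwise in
/-- `B[X] ⧸ (g)` is free over `B`, so a sequence which is weakly regular on `B` stays so on it;
the monic polynomial `g` itself is a nonzerodivisor. -/
lemma isWeaklyRegular_cons_map_C {B : Type*} [CommRing B] {g : Polynomial B} (hg : g.Monic)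
    {rs : List B} (h : IsWeaklyRegular B rs) :
    IsWeaklyRegular (Polynomial B) (g :: rs.map Polynomial.C) := by
  have := hg.free_quotient
  have h1 : IsWeaklyRegular (Polynomial B ⧸ Ideal.span {g}) rs :=
    (isWeaklyRegular_map_algebraMap_iff (S := Polynomial B ⧸ Ideal.span {g}) _ rs).1 h.of_flat
  refine .cons ?_ ?_
  · exact isSMulRegular_iff_right_eq_zero_of_smul.2 fun x hx ↦ by
      simpa [hg.mul_right_eq_zero_iff] using hx
  · have e : QuotSMulTop g (Polynomial B) ≃ₗ[Polynomial B] (Polynomial B ⧸ Ideal.span {g}) :=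
      Submodule.quotEquivOfEq _ _ (by simp [← Submodule.ideal_span_singleton_smul])
    rw [e.isWeaklyRegular_congr]
    exact (isWeaklyRegular_map_algebraMap_iff (S := Polynomial B) _ rs).2 h1

lemma ringKrullDim_mvPolynomial_fin (k : Type*) [Field k] (n : ℕ) :
    ringKrullDim (MvPolynomial (Fin n) k) = n := by
  rw [MvPolynomial.ringKrullDim_of_isNoetherianRing, ringKrullDim_eq_zero_of_field]
  simp

open RingTheory.Sequence in
/-- An ideal `I` of `k[X₁, …, Xₙ]` with `dim A ⧸ I ≤ n - r` contains a weakly regular sequence of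
length `r`, built by induction on the number of variables. -/
lemma exists_isWeaklyRegular_mem (k : Type*) [Field k] (n r : ℕ) (hr : r ≤ n)
    (I : Ideal (MvPolynomial (Fin n) k))
    (hI : ringKrullDim (MvPolynomial (Fin n) k ⧸ I) ≤ ((n - r : ℕ) : WithBot ℕ∞)) :
    ∃ rs : List (MvPolynomial (Fin n) k), rs.length = r ∧ (∀ x ∈ rs, x ∈ I) ∧
      IsWeaklyRegular (MvPolynomial (Fin n) k) rs := by
  induction n generalizing r with
  | zero =>
    obtain rfl : r = 0 := by lia
    exact ⟨[], by simp⟩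
  | succ m ih =>
    obtain _ | s := r
    · exact ⟨[], by simp⟩
    obtain ⟨f, hfI, hf⟩ : ∃ f ∈ I, f ≠ 0 := by
      refine Submodule.exists_mem_ne_zero_of_ne_bot fun h ↦ ?_
      subst h
      rw [ringKrullDim_eq_of_ringEquiv (RingEquiv.quotientBot _), ringKrullDim_mvPolynomial_fin,
        Nat.cast_le] at hI
      lia
    obtain ⟨e, c, hg⟩ := NagataShear.exists_equiv_monic hf
    set g := e (c • f)
    set I' := I.map
      (e : MvPolynomial (Fin (m + 1)) k →+* Polynomial (MvPolynomial (Fin m) k)) with hI'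
    have hmem (p) : p ∈ I' ↔ e.symm p ∈ I := by
      rw [hI']
      exact Ideal.mem_map_of_equiv e.toRingEquiv p |>.trans
        ⟨by rintro ⟨x, hx, rfl⟩; simpa using hx, fun h ↦ ⟨_, h, by simp⟩⟩
    have hgI : g ∈ I' := (hmem _).2 <| by simpa [g] using I.smul_of_tower_mem c hfI
    have : Algebra.IsIntegral (MvPolynomial (Fin m) k) (Polynomial (MvPolynomial (Fin m) k) ⧸ I') :=
      ⟨hg.quotient_isIntegral hgI⟩
    have hdim : ringKrullDim (Polynomial (MvPolynomial (Fin m) k) ⧸ I') ≤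
        ((m - s : ℕ) : WithBot ℕ∞) := by
      rw [← ringKrullDim_eq_of_ringEquiv (Ideal.quotientEquiv I I' e.toRingEquiv hI')]
      simpa using hI
    -- The induction hypothesis is applied to the contraction of `I'` to `k[X₁, …, Xₘ]`.
    obtain ⟨ys, hlen, hys, hreg⟩ := ih s (by lia) _ ((ringKrullDim_quotient_comap_le I').trans hdim)
    refine ⟨(g :: ys.map Polynomial.C).map e.symm, by simpa using hlen, ?_, ?_⟩
    · simp only [List.map_cons, List.mem_cons, List.map_map, List.mem_map]
      rintro x (rfl | ⟨y, hy, rfl⟩)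
      · exact (hmem _).1 hgI
      · exact (hmem _).1 (hys y hy)
    · refine ((e.symm.toRingEquiv.toAddEquiv).isWeaklyRegular_congr ?_).1
        (isWeaklyRegular_cons_map_C hg hreg)
      rw [List.forall₂_map_right_iff]
      exact List.forall₂_same.mpr fun r _ x ↦ map_mul e.symm r x

/-! ### Regular sequences bound the dimension -/

open RingTheory.Sequence Pointwise in
/-- Each element of a weakly regular sequence avoids the minimal primes of the support of the
current quotient, so it lowers the dimension by at least one. -/
lemma supportDim_add_length_le {R : Type*} [CommRing R] [IsNoetherianRing R]
    (M : Type*) [AddCommGroup M] [Module R M] [Module.Finite R M]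
    (rs : List R) (h : IsWeaklyRegular M rs) :
    Module.supportDim R (M ⧸ Ideal.ofList rs • (⊤ : Submodule R M)) + rs.length
      ≤ Module.supportDim R M := by
  induction rs generalizing M with
  | nil =>
    rw [Ideal.ofList_nil, Submodule.bot_smul]
    simpa using (Module.supportDim_eq_of_equiv (Submodule.quotEquivOfEqBot ⊥ rfl)).le
  | cons x rs ih =>
    rw [isWeaklyRegular_cons_iff] at h
    have h1 := ih _ h.2
    have h2 := Module.supportDim_quotSMulTop_succ_le_of_notMem_minimalPrimes
      (R := R) (M := M) (x := x)
      fun p hp ↦ h.1.notMem_of_mem_minimalPrimes hp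
    rw [Module.supportDim_eq_of_equiv
      (Submodule.quotOfListConsSMulTopEquivQuotSMulTopInner M x rs)]
    refine le_trans ?_ h2
    rw [List.length_cons, Nat.cast_add, Nat.cast_one, ← add_assoc]
    gcongr

open RingTheory.Sequence in
lemma ringKrullDim_quotient_add_length_le {R : Type*} [CommRing R] [IsNoetherianRing R]
    {rs : List R} (h : IsWeaklyRegular R rs) {I : Ideal R} (hI : ∀ x ∈ rs, x ∈ I) :
    ringKrullDim (R ⧸ I) + rs.length ≤ ringKrullDim R := by
  have h1 := supportDim_add_length_le R rs h
  rw [Module.supportDim_self_eq_ringKrullDim] at h1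
  refine le_trans ?_ h1
  have hle : Ideal.ofList rs • (⊤ : Ideal R) ≤ I := by
    rw [Ideal.smul_top_eq_map]
    simpa [Ideal.ofList, Ideal.span_le, Set.subset_def] using hI
  rw [Module.supportDim_quotient_eq_ringKrullDim]
  gcongr
  exact ringKrullDim_le_of_surjective _ (Ideal.Quotient.factor_surjective hle)

/-! ### Rees' theorem -/

open CategoryTheory Abelian RingTheory.Sequence Pointwise in
/-- Rees' theorem: `Ext^i(N, M) = 0` for all `i < r` exactly when `ann N` contains a weakly
`M`-regular sequence of length `r`. -/
lemma forall_subsingleton_ext_iff_exists_isWeaklyRegular {R : Type} [CommRing R]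
    [IsNoetherianRing R] (N M : ModuleCat.{0} R)
    [Module.Finite R N] [Module.Finite R M] (r : ℕ) :
    (∀ i < r, Subsingleton (Abelian.Ext N M i)) ↔
      ∃ rs : List R, rs.length = r ∧ (∀ x ∈ rs, x ∈ Module.annihilator R N) ∧
        IsWeaklyRegular M rs := by
  induction r generalizing M with
  | zero => simp
  | succ r ih =>
    have hzero {x : R} (hx : x ∈ Module.annihilator R N) (L : ModuleCat.{0} R) (i : ℕ)
        (y : Abelian.Ext N L i) :
        y.comp (Abelian.Ext.mk₀ (L.smulShortComplex x).f) (add_zero i) = 0 := by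
      have := congrArg (fun f ↦ f.hom y)
        (Abelian.Ext.postcomp_smul_id_eq_zero_of_mem_annihilator (M := L) hx i)
      exact this
    -- The long exact sequence for `0 → M → M → M ⧸ x M → 0`, where `x` acts as zero.
    have step {x : R} (hx : x ∈ Module.annihilator R N) (hreg : IsSMulRegular M x) (i : ℕ) :
        Subsingleton (Abelian.Ext N (ModuleCat.of R (QuotSMulTop x M)) i) ↔
          Subsingleton (Abelian.Ext N M i) ∧ Subsingleton (Abelian.Ext N M (i + 1)) := by
      have hS := hreg.smulShortComplex_shortExact
      constructor
      · intro h
        constructor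
        · refine subsingleton_of_forall_eq 0 fun y ↦ ?_
          obtain ⟨z, rfl⟩ := Abelian.Ext.covariant_sequence_exact₂ N hS y (h.elim _ _)
          exact hzero hx M i z
        · refine subsingleton_of_forall_eq 0 fun y ↦ ?_
          obtain ⟨z, rfl⟩ := Abelian.Ext.covariant_sequence_exact₁ N hS y (hzero hx M _ y) rfl
          rw [show z = 0 from h.elim _ _]
          exact Abelian.Ext.zero_comp ..
      · rintro ⟨h1, h2⟩
        refine subsingleton_of_forall_eq 0 fun y ↦ ?_
        obtain ⟨z, rfl⟩ := Abelian.Ext.covariant_sequence_exact₃ N hS y rfl (h2.elim _ _)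
        rw [show z = 0 from h1.elim _ _]
        exact Abelian.Ext.zero_comp ..
    constructor
    · intro h
      have h0 : Subsingleton (N →ₗ[R] M) := by
        have := h 0 (by lia)
        exact (Abelian.Ext.addEquiv₀.toEquiv.trans
          (ModuleCat.homEquiv (M := N) (N := M))).symm.subsingleton
      -- As `Hom(N, M) = 0`, none of the finitely many associated primes of `M` contains `ann N`,
      -- so by prime avoidance neither does their union, the set of zero divisors on `M`.
      obtain ⟨x, hx, hreg⟩ := IsSMulRegular.subsingleton_linearMap_iff.1 h0
      obtain ⟨rs, rfl, hrs, hreg'⟩ := (ih (ModuleCat.of R (QuotSMulTop x M))).1 fun i hi ↦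
        (step hx hreg i).2 ⟨h i (by lia), h (i + 1) (by lia)⟩
      exact ⟨x :: rs, rfl, by simpa using ⟨hx, hrs⟩, hreg'.cons hreg⟩
    · rintro ⟨rs, hlen, hrs, hreg⟩
      obtain _ | ⟨x, rs⟩ := rs
      · simp at hlen
      obtain ⟨hx, hrs⟩ := List.forall_mem_cons.1 hrs
      rw [isWeaklyRegular_cons_iff] at hreg
      have := (ih (ModuleCat.of R (QuotSMulTop x M))).2 ⟨rs, by simpa using hlen, hrs, hreg.2⟩
      intro i hi
      obtain _ | i := i
      · have := IsSMulRegular.linearMap_subsingleton_of_mem_annihilator hreg.1 hx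
        exact (Abelian.Ext.addEquiv₀.toEquiv.trans
          (ModuleCat.homEquiv (M := N) (N := M))).subsingleton
      · exact ((step hx hreg.1 i).1 (this i (by lia))).2

/-! ### Comparison of the two definitions of `Ext` -/

/-- The derived functor `Ext` and the `Ext` groups of the derived category vanish simultaneously:
both are computed by a projective resolution of `N`. -/
lemma subsingleton_ext_iff {R : Type} [CommRing R] (N M : ModuleCat.{0} R) (i : ℕ) :
    Subsingleton (((Ext R (ModuleCat R) i).obj (Opposite.op N)).obj M) ↔
      Subsingleton (Abelian.Ext N M i) := by
  let P := projectiveResolution N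
  rw [← ModuleCat.isZero_iff_subsingleton, (P.isoExt (R := R) i M).isZero_iff,
    ← HomologicalComplex.exactAt_iff_isZero_homology]
  obtain _ | i := i
  -- In degree zero, `prev 0 = 0` with zero differential, and `N` is the cokernel of `P₁ ⟶ P₀`.
  · rw [HomologicalComplex.exactAt_iff' _ 0 0 1 (by simp) (by simp),
      ShortComplex.moduleCat_exact_iff,
      Abelian.Ext.addEquiv₀.toEquiv.subsingleton_congr]
    constructor
    · intro h
      refine subsingleton_of_forall_eq 0 fun f ↦ ?_
      let f' : ((ChainComplex.single₀ (ModuleCat R)).obj N).X 0 ⟶ M := f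
      obtain ⟨g, hg⟩ := h (P.π.f 0 ≫ f') (by
        change P.complex.d 1 0 ≫ P.π.f 0 ≫ f' = 0
        rw [P.complex_d_comp_π_f_zero_assoc, Limits.zero_comp])
      have hd : (P.complex.linearYonedaObj R M).d 0 0 = 0 :=
        HomologicalComplex.shape _ _ _ (by simp)
      have : P.π.f 0 ≫ f' = P.π.f 0 ≫ 0 := by
        rw [← hg]
        change (P.complex.linearYonedaObj R M).d 0 0 g = _
        rw [hd, Limits.comp_zero]
        rfl
      exact (cancel_epi (P.π.f 0)).1 this
    · intro h f hf
      refine ⟨0, ?_⟩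
      rw [map_zero]
      have := P.exact₀.g_desc (f : P.complex.X 0 ⟶ M) hf
      rw [← this, show P.exact₀.desc (f : P.complex.X 0 ⟶ M) hf = 0 from h.elim _ _]
      exact Limits.comp_zero.symm
  · rw [HomologicalComplex.exactAt_iff' _ i (i + 1) (i + 2) (by simp) (by simp),
      ShortComplex.moduleCat_exact_iff]
    constructor
    · intro h
      refine subsingleton_of_forall_eq 0 fun y ↦ ?_
      obtain ⟨f, hf, rfl⟩ := P.extMk_surjective y (i + 2) rfl
      exact (P.extMk_eq_zero_iff f _ rfl hf i rfl).2 (h f hf)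
    · intro h f hf
      exact (P.extMk_eq_zero_iff f _ rfl hf i rfl).1 (h.elim _ _)

/-! ### Codimension and vanishing of `Ext` -/

/-- For `A = k[x_1, …, x_n]` with `k` a field and `n ≥ 1`, a nonzero finitely generated
`A`-module `M` and `0 ≤ r ≤ n`: `cd(M) ≥ r` (i.e. `dim (A / ann_A M) ≤ n - r`) if and only if
`Ext^i_A(M, A) = 0` for every `0 ≤ i < r`. -/
theorem codim_ge_iff_ext_eq_zero (k : Type) [Field k] (n : ℕ) (hn : 1 ≤ n)
    (M : Type) [AddCommGroup M] [Module (MvPolynomial (Fin n) k) M]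
    [Module.Finite (MvPolynomial (Fin n) k) M] [Nontrivial M]
    (r : ℕ) (hr : r ≤ n) :
    ringKrullDim (MvPolynomial (Fin n) k ⧸
        Module.annihilator (MvPolynomial (Fin n) k) M) ≤ ((n - r : ℕ) : WithBot (WithTop ℕ))
      ↔ ∀ i < r, Subsingleton (extModule (MvPolynomial (Fin n) k) M i) := by
  have hext : (∀ i < r, Subsingleton (extModule (MvPolynomial (Fin n) k) M i)) ↔ _ :=
    (forall₂_congr fun i _ ↦ subsingleton_ext_iff
      (ModuleCat.of (MvPolynomial (Fin n) k) M) (ModuleCat.of _ (MvPolynomial (Fin n) k)) i).trans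
      (forall_subsingleton_ext_iff_exists_isWeaklyRegular _ _ r)
  rw [hext]
  constructor
  · exact exists_isWeaklyRegular_mem k n r hr _
  · rintro ⟨rs, rfl, hrs, hreg⟩
    have h := ringKrullDim_quotient_add_length_le hreg hrs
    rw [ringKrullDim_mvPolynomial_fin] at h
    refine ENat.WithBot.add_le_add_natCast_right_iff.1 (h.trans_eq ?_)
    exact (congrArg (Nat.cast : ℕ → WithBot ℕ∞) (Nat.sub_add_cancel hr)).symm.trans
      (Nat.cast_add _ _)
end

section
/- Let M be a nonzero finitely generated A-module with cd(M) = r. Then Ext^r_A(M, A) is nonzero, cd(Ext^r_A(M, A)) = r, and Ext^r_A(M, A) is r-pure. -/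
/-!
The polynomial ring `A = k[x_1, …, x_n]` is Cohen–Macaulay of dimension `n` at every maximal ideal:
each maximal ideal contains a regular sequence of length `n` (`hasReg_mvPolynomial`, by induction on
`n`, adjoining a monic polynomial at each step). This gives `Ext^i(A ⧸ m, A) = 0` for all `i < n`
(`depthGE_self`), a homological form of "depth at least `n`" that is inherited, with `n` lowered by
one, by the quotient of a module by a regular element.

Depth controls dimension: if a module `N` over a Noetherian ring has depth at least `d` at all
maximal ideals, then every nonzero cyclic submodule of `N` has dimension at least `d`
(`DepthGE.le_ringKrullDim`).

The heart of the argument is `ext_main`. Suppose that `M` has dimension `s`, and that `N` has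
dimension at most `r + s`, depth at least `r + s`, and support containing that of `M`. If `r = 0`,
then `Hom(M, N)` is nonzero, since otherwise `ann M` would contain an element regular on `N`, and
dividing `N` by it would lower the dimension of `N` below that of `M`; and the annihilator of a map
`M → N` lies in that of each of its values, so depth bounds the dimension it generates. If `r > 0`,
then depth gives `Hom(M, N) = 0`, hence an `x ∈ ann M` regular on `N`. As `x` acts as zero on
`Ext(M, -)`, the connecting map `Ext^(r-1)(M, N ⧸ x N) → Ext^r(M, N)` is surjective; it is injective
because `Ext^(r-1)(M, N)` vanishes, so the claim for `r` follows from the one for `r - 1`.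

For `N = A` and `s = n - r` this shows that `Ext^r(M, A)` is nonzero and that its nonzero elements
generate submodules of dimension at least `n - r`. The reverse inequality, and the dimension of
`Ext^r(M, A)` itself, follow because `ann M` kills `Ext^r(M, A)`.

The argument runs in `Abelian.Ext`, where long exact sequences are available, and is transferred to
the derived-functor `Ext` by computing both from the same projective resolution (`extModuleEquiv`).
-/

open CategoryTheory

/-- An `A = k[x_1, …, x_n]`-module `M` is `r`-pure if every nonzero element `m ∈ M` generates a
cyclic submodule `A·m` of codimension exactly `r`, i.e. `dim (A / ann_A(A·m)) = n - r`. -/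
def IsPureMod (k : Type) [Field k] (n : ℕ) (r : ℕ) (M : Type) [AddCommGroup M]
    [Module (MvPolynomial (Fin n) k) M] : Prop :=
  ∀ m : M, m ≠ 0 →
    ringKrullDim (MvPolynomial (Fin n) k ⧸
        (Submodule.span (MvPolynomial (Fin n) k) {m}).annihilator)
      = ((n - r : ℕ) : WithBot (WithTop ℕ))

/-! ### Regular sequences in maximal ideals of polynomial rings -/

section regular

open RingTheory.Sequence

/-- Every maximal ideal of `R` contains a weakly regular sequence of length `d`. For a Noetherian
ring this says that all the localizations at maximal ideals have depth at least `d`. -/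
def HasReg (R : Type) [CommRing R] (d : ℕ) : Prop :=
  ∀ m : Ideal R, m.IsMaximal →
    ∃ rs : List R, rs.length = d ∧ (∀ r ∈ rs, r ∈ m) ∧ IsWeaklyRegular R rs

/-- Over a Jacobson ring `R`, a maximal ideal `P` of `R[X]` contracts to a maximal ideal `𝔭` of `R`
and `R[X] ⧸ P` is integral over `R`, so `P` contains a monic polynomial. Monic polynomials are
nonzerodivisors on `(R ⧸ J)[X]` for every `J`, so one can be appended to a regular sequence
in `𝔭`. -/
lemma HasReg.polynomial {R : Type} [CommRing R] [IsJacobsonRing R] {d : ℕ} (h : HasReg R d) :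
    HasReg (Polynomial R) (d + 1) := by
  intro P hP
  obtain ⟨rs, hlen, hmem, hreg⟩ :=
    h (P.comap Polynomial.C) (Polynomial.isMaximal_comap_C_of_isJacobsonRing P)
  obtain ⟨g, hg, hgP⟩ := Polynomial.quotient_mk_comp_C_isIntegral_of_isJacobsonRing P
    (Ideal.Quotient.mk P Polynomial.X)
  have hgP' : g ∈ P := by
    rw [← Ideal.Quotient.eq_zero_iff_mem, ← hgP, ← Polynomial.hom_eval₂]
    simp
  refine ⟨rs.map (algebraMap R (Polynomial R)) ++ [g], by simp [hlen], ?_, ?_⟩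
  · intro r hr
    simp only [List.mem_append, List.mem_map, List.mem_singleton] at hr
    rcases hr with ⟨a, ha, rfl⟩ | rfl
    · exact hmem a ha
    · exact hgP'
  · rw [isWeaklyRegular_append_iff]
    refine ⟨hreg.of_flat, ?_⟩
    rw [isWeaklyRegular_singleton_iff]
    -- The monic `g` is regular on `R[X] ⧸ J R[X]`, identified with `(R ⧸ J)[X]` through `key`.
    set J := Ideal.ofList rs with hJ
    have hJ' : (Ideal.ofList (rs.map (algebraMap R (Polynomial R))) • ⊤ :
        Submodule (Polynomial R) (Polynomial R)) = J.map Polynomial.C := by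
      rw [hJ, Ideal.map_ofList, smul_eq_mul, Ideal.mul_top]; rfl
    rw [hJ', isSMulRegular_iff_right_eq_zero_of_smul]
    intro z hz
    obtain ⟨z, rfl⟩ := Submodule.Quotient.mk_surjective _ z
    rw [← Submodule.Quotient.mk_smul, Submodule.Quotient.mk_eq_zero] at hz
    rw [Submodule.Quotient.mk_eq_zero]
    have key (p : Polynomial R) : p ∈ J.map Polynomial.C ↔
        p.map (Ideal.Quotient.mk J) = 0 := by
      rw [Ideal.mem_map_C_iff, Polynomial.ext_iff]
      simp [Ideal.Quotient.eq_zero_iff_mem]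
    rw [key, smul_eq_mul, Polynomial.map_mul] at hz
    rw [key]
    exact (hg.map (Ideal.Quotient.mk J)).isRegular.left (by simpa using hz)

lemma HasReg.of_ringEquiv {R S : Type} [CommRing R] [CommRing S] (e : R ≃+* S) {d : ℕ}
    (h : HasReg R d) : HasReg S d := by
  intro m hm
  obtain ⟨rs, hlen, hmem, hreg⟩ := h (m.comap e) (Ideal.comap_isMaximal_of_equiv e)
  refine ⟨rs.map e, by simp [hlen], by simpa using hmem, ?_⟩
  refine (AddEquiv.isWeaklyRegular_congr (e := e.toAddEquiv) ?_).mp hreg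
  rw [List.forall₂_map_right_iff, List.forall₂_same]
  intro r _ x
  simp

lemma hasReg_mvPolynomial (k : Type) [Field k] (n : ℕ) : HasReg (MvPolynomial (Fin n) k) n := by
  induction n with
  | zero => exact fun m _ => ⟨[], rfl, by simp, .nil _ _⟩
  | succ n ih => exact ih.polynomial.of_ringEquiv (MvPolynomial.finSuccEquiv k n).symm.toRingEquiv

end regular

/-! ### Depth bounds the dimension of cyclic submodules -/

lemma ringKrullDim_quotient_anti {R : Type} [CommRing R] {I J : Ideal R} (h : I ≤ J) :
    ringKrullDim (R ⧸ J) ≤ ringKrullDim (R ⧸ I) :=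
  ringKrullDim_le_of_surjective (Ideal.Quotient.factor h) (Ideal.Quotient.factor_surjective h)

/-- The `m`-depth of `N` is at least `d`, expressed homologically: `Ext^i(R ⧸ m, N) = 0` for all
`i < d`. -/
def DepthGE {R : Type} [CommRing R] (m : Ideal R) (N : Type) [AddCommGroup N] [Module R N] (d : ℕ) :
    Prop :=
  ∀ i < d, Subsingleton (Abelian.Ext (ModuleCat.of R (R ⧸ m)) (ModuleCat.of R N) i)

lemma DepthGE.quotSMulTop {R : Type} [CommRing R] {m : Ideal R} {N : Type} [AddCommGroup N]
    [Module R N] {d : ℕ} (h : DepthGE m N (d + 1)) {x : R} (hx : IsSMulRegular N x) :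
    DepthGE m (QuotSMulTop x N) d := by
  intro i hi
  have zero1 := AddCommGrpCat.isZero_of_iff_subsingleton.mpr (h i (by omega))
  have zero2 := AddCommGrpCat.isZero_of_iff_subsingleton.mpr (h (i + 1) (by omega))
  exact AddCommGrpCat.subsingleton_of_isZero <| ShortComplex.Exact.isZero_of_both_zeros
    ((Abelian.Ext.covariant_sequence_exact₃' _
      (IsSMulRegular.smulShortComplex_shortExact (M := ModuleCat.of R N) hx)) i (i + 1) rfl)
    (zero1.eq_zero_of_src _) (zero2.eq_zero_of_tgt _)

/-- If `N` has `m`-depth at least `d`, then every cyclic submodule `R y` of `N` whose annihilator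
`J` lies in `m` has dimension at least `d`. Induct on `d`. When the depth is at least `d + 1`,
choose `x ∈ m` regular on `N` and let `N'` be the `J`-torsion of `N`. Nakayama's lemma applied to `N'`
at `m` produces an element `z` of `N'` whose class in `N ⧸ x N` has its annihilator `K` inside `m`.
As `K` contains `J` and `x`, and `x` is a nonzerodivisor on `R ⧸ J`, one gets
`dim (R ⧸ J) ≥ dim (R ⧸ K) + 1 ≥ d + 1`. -/
lemma DepthGE.le_ringKrullDim {R : Type} [CommRing R] [IsNoetherianRing R] {m : Ideal R}
    [m.IsMaximal] {d : ℕ} {N : Type} [AddCommGroup N] [Module R N] [Module.Finite R N]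
    (h : DepthGE m N d) (y : N) (hy : (Submodule.span R {y}).annihilator ≤ m) :
    (d : WithBot ℕ∞) ≤ ringKrullDim (R ⧸ (Submodule.span R {y}).annihilator) := by
  induction d generalizing N with
  | zero =>
    have : Nontrivial (R ⧸ (Submodule.span R {y}).annihilator) :=
      Ideal.Quotient.nontrivial_iff.mpr (ne_top_of_le_ne_top Ideal.IsPrime.ne_top' hy)
    exact_mod_cast ringKrullDim_nonneg_of_nontrivial
  | succ d ih =>
    have h0 : Subsingleton ((R ⧸ m) →ₗ[R] N) := by
      have := h 0 (by omega)
      exact ((Abelian.Ext.addEquiv₀ (X := ModuleCat.of R (R ⧸ m)) (Y := ModuleCat.of R N)).trans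
        ModuleCat.homAddEquiv).symm.subsingleton
    obtain ⟨x, hxm, hx⟩ := IsSMulRegular.subsingleton_linearMap_iff.mp h0
    rw [Ideal.annihilator_quotient] at hxm
    set J := (Submodule.span R {y}).annihilator with hJ
    let N' := Submodule.torsionBySet R N J
    have hyN' : y ∈ N' := by
      rw [Submodule.mem_torsionBySet_iff]
      rintro ⟨a, ha⟩
      exact (Submodule.mem_annihilator_span_singleton _ _).mp ha
    -- Nakayama, in the form `Supp (N' ⧸ x N') = Supp N' ∩ V(x)`.
    have hsupp : (⟨m, inferInstance⟩ : PrimeSpectrum R) ∈ Module.support R (QuotSMulTop x N') := by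
      rw [Module.support_quotSMulTop]
      refine ⟨?_, by simpa using hxm⟩
      rw [Module.mem_support_iff_exists_annihilator]
      refine ⟨⟨y, hyN'⟩, fun a ha => hy ?_⟩
      rw [Submodule.mem_annihilator_span_singleton] at ha ⊢
      exact congrArg Subtype.val ha
    rw [Module.mem_support_iff_exists_annihilator] at hsupp
    obtain ⟨yq, hyq⟩ := hsupp
    obtain ⟨z, rfl⟩ := Submodule.Quotient.mk_surjective _ yq
    -- `N' ⧸ x N'` embeds in `N ⧸ x N`: since `x` is regular, `x w ∈ N'` forces `w ∈ N'`.
    have hann (a : R) (ha : a • (Submodule.Quotient.mk z.1 : QuotSMulTop x N) = 0) :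
        a • (Submodule.Quotient.mk z : QuotSMulTop x N') = 0 := by
      rw [← Submodule.Quotient.mk_smul, Submodule.Quotient.mk_eq_zero,
        Submodule.mem_smul_pointwise_iff_exists] at ha ⊢
      obtain ⟨w, -, hw⟩ := ha
      have hwN' : w ∈ N' := by
        rw [Submodule.mem_torsionBySet_iff]
        rintro ⟨b, hb⟩
        apply hx.right_eq_zero_of_smul
        have := (Submodule.mem_torsionBySet_iff _ _).mp z.2 ⟨b, hb⟩
        change x • b • w = 0
        change b • z.1 = 0 at this
        rw [smul_comm, hw, smul_comm, this, smul_zero]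
      exact ⟨⟨w, hwN'⟩, trivial, Subtype.ext hw⟩
    have h1 := ih (h.quotSMulTop hx) (Submodule.Quotient.mk z.1) (fun a ha => hyq (by
      rw [Submodule.mem_annihilator_span_singleton] at ha ⊢
      exact hann a ha))
    set K := (Submodule.span R {(Submodule.Quotient.mk z.1 : QuotSMulTop x N)}).annihilator
    have hJK : J ≤ K := by
      intro a ha
      rw [Submodule.mem_annihilator_span_singleton, ← Submodule.Quotient.mk_smul,
        (Submodule.mem_torsionBySet_iff _ _).mp z.2 ⟨a, ha⟩, Submodule.Quotient.mk_zero]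
    have hxK : x ∈ K := by
      rw [Submodule.mem_annihilator_span_singleton, ← Submodule.Quotient.mk_smul,
        Submodule.Quotient.mk_eq_zero]
      exact Submodule.smul_mem_pointwise_smul _ _ _ trivial
    have h2 := ringKrullDim_succ_le_of_surjective (Ideal.Quotient.factor hJK)
      (Ideal.Quotient.factor_surjective hJK) (r := Ideal.Quotient.mk J x) (by
        rw [mem_nonZeroDivisors_iff_right]
        intro b hb
        obtain ⟨b, rfl⟩ := Ideal.Quotient.mk_surjective b
        rw [← map_mul, Ideal.Quotient.eq_zero_iff_mem, hJ,
          Submodule.mem_annihilator_span_singleton] at hb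
        rw [Ideal.Quotient.eq_zero_iff_mem, hJ, Submodule.mem_annihilator_span_singleton]
        apply hx.right_eq_zero_of_smul
        rw [smul_smul, mul_comm, hb]) (by simpa [Ideal.Quotient.eq_zero_iff_mem] using hxK)
    refine le_trans ?_ h2
    push_cast
    gcongr

lemma Ext_smul_eq_zero {R : Type} [CommRing R] {M N : ModuleCat.{0} R} {i : ℕ} {x : R}
    (hx : x ∈ Module.annihilator R M) (e : Abelian.Ext M N i) : x • e = 0 := by
  have h : x • 𝟙 M = 0 := by
    ext z
    exact (Module.mem_annihilator.mp hx) z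
  have : x • e = (Abelian.Ext.mk₀ (x • 𝟙 M)).comp e (zero_add i) := by
    simp [Abelian.Ext.mk₀_smul]
  rw [this, h, Abelian.Ext.mk₀_zero, Abelian.Ext.zero_comp]

/-! ### The first nonvanishing Ext -/

lemma DepthGE.le_of_ne_zero {R : Type} [CommRing R] [IsNoetherianRing R] {d : ℕ}
    {N : Type} [AddCommGroup N] [Module R N] [Module.Finite R N]
    (h : ∀ m : Ideal R, m.IsMaximal → DepthGE m N d) {y : N} (hy : y ≠ 0) :
    (d : WithBot ℕ∞) ≤ ringKrullDim (R ⧸ (Submodule.span R {y}).annihilator) := by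
  obtain ⟨m, hm, hle⟩ := Ideal.exists_le_maximal (Submodule.span R {y}).annihilator (by
    rw [Ne, Submodule.annihilator_eq_top_iff, Submodule.span_singleton_eq_bot]
    exact hy)
  exact (h m hm).le_ringKrullDim y hle

/-- The main statement, for modules over a Noetherian ring: if `N` has dimension at most `r + s`,
depth at least `r + s` at every maximal ideal, and a support containing that of `M`, where `M` has
dimension `s`, then `Ext^i(M, N)` vanishes for `i < r`, while `Ext^r(M, N)` is nonzero and all of its
nonzero elements generate submodules of dimension at least `s`. Having a general `N` here, instead of
`N = R`, is what allows an induction on `r` that replaces `N` by `N ⧸ x N`. -/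
theorem ext_main {R : Type} [CommRing R] [IsNoetherianRing R] (s r : ℕ)
    (M : Type) [AddCommGroup M] [Module R M] [Module.Finite R M]
    (N : Type) [AddCommGroup N] [Module R N] [Module.Finite R N]
    (hM : Module.supportDim R M = s)
    (hsupp : Module.support R M ⊆ Module.support R N)
    (hN : Module.supportDim R N ≤ (r + s : ℕ))
    (hdepth : ∀ m : Ideal R, m.IsMaximal → DepthGE m N (r + s)) :
    (∀ i < r, Subsingleton (Abelian.Ext (ModuleCat.of R M) (ModuleCat.of R N) i)) ∧
    Nontrivial (Abelian.Ext (ModuleCat.of R M) (ModuleCat.of R N) r) ∧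
    ∀ e : Abelian.Ext (ModuleCat.of R M) (ModuleCat.of R N) r, e ≠ 0 →
      (s : WithBot ℕ∞) ≤ ringKrullDim (R ⧸ (Submodule.span R {e}).annihilator) := by
  induction r generalizing N with
  | zero =>
    let E : Abelian.Ext (ModuleCat.of R M) (ModuleCat.of R N) 0 ≃ₗ[R] (M →ₗ[R] N) :=
      (Abelian.Ext.linearEquiv₀ (R := R)).trans ModuleCat.homLinearEquiv
    refine ⟨by simp, ?_, ?_⟩
    -- If `Hom(M, N) = 0`, some `x ∈ ann M` is regular on `N`, and then `Supp M ⊆ Supp (N ⧸ x N)`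
    -- contradicts `dim (N ⧸ x N) < dim N ≤ dim M`.
    · by_contra hcon
      rw [not_nontrivial_iff_subsingleton, E.toEquiv.subsingleton_congr,
        IsSMulRegular.subsingleton_linearMap_iff] at hcon
      obtain ⟨x, hxM, hx⟩ := hcon
      have h1 := Module.supportDim_quotSMulTop_succ_le_of_notMem_minimalPrimes
        (fun _ => hx.notMem_of_mem_minimalPrimes)
      have h2 : Module.supportDim R M ≤ Module.supportDim R (QuotSMulTop x N) := by
        refine Order.krullDim_le_of_strictMono
          (fun p => ⟨p.1, ?_⟩) (fun _ _ h => h)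
        rw [Module.support_quotSMulTop]
        refine ⟨hsupp p.2, ?_⟩
        have hp : p.1 ∈ PrimeSpectrum.zeroLocus (Module.annihilator R M : Set R) := by
          rw [← Module.support_eq_zeroLocus]
          exact p.2
        simpa using hp hxM
      rw [hM] at h2
      have h3 : ((s : ℕ) : WithBot ℕ∞) + 1 ≤ ((0 + s : ℕ) : WithBot ℕ∞) :=
        ((add_le_add_left h2 1).trans h1).trans hN
      have h4 : s + 1 ≤ 0 + s := by exact_mod_cast h3
      omega
    · intro e he
      have he' : E e ≠ 0 := by simpa using he
      obtain ⟨p, hp⟩ : ∃ p, E e p ≠ 0 := by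
        by_contra! hcon
        exact he' (LinearMap.ext hcon)
      have := DepthGE.le_of_ne_zero hdepth hp
      rw [zero_add] at this
      refine this.trans (ringKrullDim_quotient_anti fun a ha => ?_)
      rw [Submodule.mem_annihilator_span_singleton] at ha ⊢
      rw [← LinearMap.smul_apply, ← map_smul, ha, map_zero, LinearMap.zero_apply]
  | succ r ih =>
    -- A nonzero value of a map `M → N` would generate a submodule of dimension at least
    -- `r + 1 + s`, but it is killed by `ann M`.
    have hsub : Subsingleton (M →ₗ[R] N) := by
      refine subsingleton_of_forall_eq 0 fun φ => ?_
      by_contra hφ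
      obtain ⟨p, hp⟩ : ∃ p, φ p ≠ 0 := by
        by_contra! hcon
        exact hφ (LinearMap.ext hcon)
      have h1 := DepthGE.le_of_ne_zero hdepth hp
      have h2 : ringKrullDim (R ⧸ (Submodule.span R {φ p}).annihilator) ≤ s := by
        rw [← hM, Module.supportDim_eq_ringKrullDim_quotient_annihilator]
        refine ringKrullDim_quotient_anti fun a ha => ?_
        rw [Submodule.mem_annihilator_span_singleton, ← map_smul, Module.mem_annihilator.mp ha,
          map_zero]
      have h3 : r + 1 + s ≤ s := by exact_mod_cast h1.trans h2
      omega
    obtain ⟨x, hxM, hx⟩ := IsSMulRegular.subsingleton_linearMap_iff.mp hsub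
    have hS := IsSMulRegular.smulShortComplex_shortExact (M := ModuleCat.of R N) hx
    obtain ⟨hvan, hnt, hpure⟩ := ih (QuotSMulTop x N) (by
        rw [Module.support_quotSMulTop]
        refine Set.subset_inter hsupp fun p hp => ?_
        rw [Module.support_eq_zeroLocus] at hp
        simpa using hp hxM)
      (by
        have h1 := (Module.supportDim_quotSMulTop_succ_le_of_notMem_minimalPrimes
          (fun _ => hx.notMem_of_mem_minimalPrimes)).trans hN
        rw [show r + 1 + s = (r + s) + 1 by ring, Nat.cast_add, Nat.cast_one] at h1
        exact (ENat.WithBot.add_le_add_one_right_iff).mp h1)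
      (fun m hm => DepthGE.quotSMulTop (by
        have := hdepth m hm
        rwa [show r + 1 + s = (r + s) + 1 by ring] at this) hx)
    -- As `x` kills `M`, multiplication by `x` on `N` induces zero on `Ext^i(M, N)`; hence the
    -- connecting maps `Ext^i(M, N ⧸ x N) → Ext^(i+1)(M, N)` are surjective.
    have hzero (i : ℕ) (e : Abelian.Ext (ModuleCat.of R M) (ModuleCat.of R N) i) :
        e.comp (Abelian.Ext.mk₀ ((ModuleCat.of R N).smulShortComplex x).f) (add_zero i) = 0 := by
      rw [ModuleCat.smulShortComplex_f_eq_smul_id]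
      exact (Abelian.Ext.smul_eq_comp_mk₀ e x).symm.trans (Ext_smul_eq_zero hxM e)
    have hsurj (i : ℕ) (e : Abelian.Ext (ModuleCat.of R M) (ModuleCat.of R N) (i + 1)) :=
      Abelian.Ext.covariant_sequence_exact₁ _ hS e (hzero _ e) rfl
    have hvan' : ∀ i < r + 1,
        Subsingleton (Abelian.Ext (ModuleCat.of R M) (ModuleCat.of R N) i) := by
      intro i hi
      cases i with
      | zero =>
        exact ((Abelian.Ext.addEquiv₀ (X := ModuleCat.of R M) (Y := ModuleCat.of R N)).trans
          ModuleCat.homAddEquiv).subsingleton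
      | succ i =>
        refine subsingleton_of_forall_eq 0 fun e => ?_
        obtain ⟨e', rfl⟩ := hsurj i e
        have := hvan i (by omega)
        rw [Subsingleton.elim (α := Abelian.Ext (ModuleCat.of R M)
          (ModuleCat.of R (QuotSMulTop x N)) i) e' 0]
        exact Abelian.Ext.zero_comp ..
    have hinj (e' : Abelian.Ext (ModuleCat.of R M) (ModuleCat.of R (QuotSMulTop x N)) r)
        (he' : e'.comp hS.extClass rfl = 0) : e' = 0 := by
      obtain ⟨e₂, rfl⟩ := Abelian.Ext.covariant_sequence_exact₃ _ hS e' rfl he'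
      have := hvan' r (by omega)
      rw [Subsingleton.elim (α := Abelian.Ext (ModuleCat.of R M) (ModuleCat.of R N) r) e₂ 0]
      exact Abelian.Ext.zero_comp ..
    refine ⟨hvan', ?_, ?_⟩
    · obtain ⟨e', he'⟩ := exists_ne
        (0 : Abelian.Ext (ModuleCat.of R M) (ModuleCat.of R (QuotSMulTop x N)) r)
      exact nontrivial_of_ne _ 0 (fun h => he' (hinj e' h))
    · intro e he
      obtain ⟨e', rfl⟩ := hsurj r e
      refine (hpure e' fun h => he (by subst h; exact Abelian.Ext.zero_comp ..)).trans
        (ringKrullDim_quotient_anti fun a ha => ?_)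
      have ha' := (Submodule.mem_annihilator_span_singleton _ _).mp ha
      refine (Submodule.mem_annihilator_span_singleton _ _).mpr (hinj _ ?_)
      exact (Abelian.Ext.smul_comp ..).trans ha'

/-- Rees: a regular sequence of length `d` in `m` makes `Ext^i(R ⧸ m, R)` vanish for `i < d`. -/
lemma depthGE_self {R : Type} [CommRing R] [IsNoetherianRing R] {d : ℕ} (h : HasReg R d)
    (m : Ideal R) (hm : m.IsMaximal) : DepthGE m R d := by
  obtain ⟨rs, rfl, hmem, hreg⟩ := h m hm
  have hlt : m • (⊤ : Submodule R R) < ⊤ := by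
    rw [smul_eq_mul, Ideal.mul_top]
    exact hm.ne_top.lt_top
  refine ModuleCat.subsingleton_ext_of_exists_isRegular m (ModuleCat.of R (R ⧸ m)) ?_
    (ModuleCat.of R R) hlt rs hmem ⟨hreg, ?_⟩
  · change Module.support R (R ⧸ m) ⊆ _
    rw [Module.support_eq_zeroLocus, Ideal.annihilator_quotient]
  · refine (lt_of_le_of_lt (Submodule.smul_mono_left ?_) hlt).ne'
    exact Ideal.span_le.mpr hmem

/-! ### Comparison of the two constructions of Ext -/

section compare

variable {R : Type} [CommRing R] {X Y : ModuleCat.{0} R} (P : ProjectiveResolution X)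

open CochainComplex HomComplex in
/-- The degree `0` companion of `ProjectiveResolution.extMk_eq_zero_iff`: there are no coboundaries
in degree `0`. -/
lemma extMk_eq_zero_iff₀ (f : P.complex.X 0 ⟶ Y) (hf : P.complex.d 1 0 ≫ f = 0) :
    P.extMk f 1 rfl hf = 0 ↔ f = 0 := by
  refine ⟨fun h => ?_, fun h => by subst h; exact P.extMk_zero _ _⟩
  simp only [← P.extEquivCohomologyClass.apply_eq_iff_eq,
    ProjectiveResolution.extEquivCohomologyClass_extMk,
    ProjectiveResolution.extEquivCohomologyClass_zero,
    CohomologyClass.mk_eq_zero_iff] at h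
  rw [Cocycle.toSingleMk_mem_coboundaries_iff _ _ _ _ _ 1 (by lia)] at h
  obtain ⟨g, hg⟩ := h
  have hz : P.cochainComplex.d (-(0 : ℕ) : ℤ) 1 = 0 :=
    (CochainComplex.isZero_of_isStrictlyLE P.cochainComplex 0 1 (by lia)).eq_of_tgt _ _
  rw [hz, Limits.zero_comp] at hg
  rw [← cancel_epi (P.cochainComplexXIso (-(0 : ℕ) : ℤ) 0 rfl).hom, ← hg, Limits.comp_zero]

lemma smul_extMk {n : ℕ} (a : R) (f : P.complex.X n ⟶ Y) (m : ℕ) (hm : n + 1 = m)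
    (hf : P.complex.d m n ≫ f = 0) :
    a • P.extMk f m hm hf = P.extMk (a • f) m hm (by simp [hf]) := by
  rw [Abelian.Ext.smul_eq_comp_mk₀, P.extMk_comp_mk₀]
  congr 1

/-- The map sending a cocycle of `Hom(P, Y)` of degree `n` to its class in `Ext^n(X, Y)`. -/
noncomputable def extMkLinear (n : ℕ) :
    LinearMap.ker (Linear.leftComp R Y (P.complex.d (n + 1) n)) →ₗ[R] Abelian.Ext X Y n where
  toFun f := P.extMk f.1 (n + 1) rfl f.2
  map_add' _ _ := (P.add_extMk ..).symm
  map_smul' a f := (smul_extMk P a f.1 _ rfl f.2).symm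

lemma extMkLinear_surjective (n : ℕ) : Function.Surjective (extMkLinear (Y := Y) P n) := by
  intro e
  obtain ⟨f, hf, rfl⟩ := P.extMk_surjective e (n + 1) rfl
  exact ⟨⟨f, hf⟩, rfl⟩

/-- The convention `prev 0 = 0` makes the degree `0` case uniform with the others: `d 0 0 = 0`. -/
lemma extMkLinear_eq_zero_iff (n i : ℕ) (hi : (ComplexShape.up ℕ).prev n = i)
    (f : LinearMap.ker (Linear.leftComp R Y (P.complex.d (n + 1) n))) :
    extMkLinear P n f = 0 ↔ ∃ g : P.complex.X i ⟶ Y, P.complex.d n i ≫ g = f.1 := by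
  cases n with
  | zero =>
    refine (extMk_eq_zero_iff₀ P f.1 f.2).trans ?_
    rw [P.complex.shape 0 i (by simp)]
    simp [eq_comm]
  | succ p =>
    obtain rfl : p = i := by simpa using hi
    exact P.extMk_eq_zero_iff f.1 _ rfl f.2 p rfl

/-- For a projective resolution `P` of `X`, the cohomology of `Hom(P, Y)` is `Abelian.Ext X Y`,
`R`-linearly. -/
noncomputable def homologyEquivExt (n : ℕ) :
    (P.complex.linearYonedaObj R Y).homology n ≃ₗ[R] Abelian.Ext X Y n :=
  let S := (P.complex.linearYonedaObj R Y).sc' ((ComplexShape.up ℕ).prev n) n (n + 1)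
  (((P.complex.linearYonedaObj R Y).homologyIsoSc' _ n (n + 1) rfl (by simp)) ≪≫
    S.moduleCatHomologyIso).toLinearEquiv ≪≫ₗ
  Submodule.quotEquivOfEq _ (LinearMap.ker (extMkLinear P n)) (by
    ext f
    refine Iff.trans LinearMap.mem_range (Iff.trans ?_ (extMkLinear_eq_zero_iff P n _ rfl f).symm)
    exact exists_congr fun g => Subtype.ext_iff) ≪≫ₗ
  (extMkLinear P n).quotKerEquivOfSurjective (extMkLinear_surjective P n)

end compare

/-- The derived-functor `Ext` underlying `extModule` agrees, `R`-linearly, with `Abelian.Ext`. -/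
noncomputable def extModuleEquiv (R : Type) [CommRing R] (M : Type) [AddCommGroup M] [Module R M]
    (i : ℕ) : extModule R M i ≃ₗ[R] Abelian.Ext (ModuleCat.of R M) (ModuleCat.of R R) i :=
  ((ProjectiveResolution.of (ModuleCat.of R M)).isoExt i (ModuleCat.of R R)).toLinearEquiv ≪≫ₗ
    homologyEquivExt _ i

/-- For `A = k[x_1, …, x_n]` with `k` a field and `n ≥ 1`, and `M` a nonzero finitely generated
`A`-module with `cd(M) = r` (i.e. `dim (A / ann_A M) = n - r`, `r ≤ n`): the module
`Ext^r_A(M, A)` is nonzero, has `cd(Ext^r_A(M, A)) = r`, and is `r`-pure. -/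
theorem ext_codim_nontrivial_and_pure (k : Type) [Field k] (n : ℕ) (hn : 1 ≤ n)
    (M : Type) [AddCommGroup M] [Module (MvPolynomial (Fin n) k) M]
    [Module.Finite (MvPolynomial (Fin n) k) M] [Nontrivial M]
    (r : ℕ) (hr : r ≤ n)
    (hcd : ringKrullDim (MvPolynomial (Fin n) k ⧸
        Module.annihilator (MvPolynomial (Fin n) k) M) = ((n - r : ℕ) : WithBot (WithTop ℕ))) :
    Nontrivial (extModule (MvPolynomial (Fin n) k) M r) ∧
    ringKrullDim (MvPolynomial (Fin n) k ⧸
        Module.annihilator (MvPolynomial (Fin n) k) (extModule (MvPolynomial (Fin n) k) M r))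
      = ((n - r : ℕ) : WithBot (WithTop ℕ)) ∧
    IsPureMod k n r (extModule (MvPolynomial (Fin n) k) M r) := by
  set A := MvPolynomial (Fin n) k
  have hrn : r + (n - r) = n := by omega
  obtain ⟨-, hnt, hpure⟩ := ext_main (R := A) (n - r) r M A
    ((Module.supportDim_eq_ringKrullDim_quotient_annihilator A M).trans hcd)
    (fun p _ => by
      rw [Module.support_eq_zeroLocus, Module.annihilator_eq_bot.mpr inferInstance]
      simp)
    (by
      rw [hrn, Module.supportDim_self_eq_ringKrullDim]
      exact (by simp [MvPolynomial.ringKrullDim_of_isNoetherianRing] :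
        ringKrullDim (MvPolynomial (Fin n) k) = n).le)
    (fun m hm => by
      rw [hrn]
      exact depthGE_self (hasReg_mvPolynomial k n) m hm)
  let E := extModuleEquiv A M r
  have hannM (a : A) (ha : a ∈ Module.annihilator A M) (e : extModule A M r) : a • e = 0 := by
    apply E.injective
    rw [map_smul, map_zero]
    exact Ext_smul_eq_zero (M := ModuleCat.of A M) ha _
  have hge (e : extModule A M r) (he : e ≠ 0) :
      ((n - r : ℕ) : WithBot ℕ∞) ≤ ringKrullDim (A ⧸ (Submodule.span A {e}).annihilator) := by
    refine (hpure (E e) (by simpa using he)).trans (ringKrullDim_quotient_anti fun a ha => ?_)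
    rw [Submodule.mem_annihilator_span_singleton] at ha ⊢
    rw [← map_smul, ha, map_zero]
  have hnt' : Nontrivial (extModule A M r) := E.toEquiv.nontrivial
  refine ⟨hnt', le_antisymm ?_ ?_, fun e he => le_antisymm ?_ (hge e he)⟩
  · rw [← hcd]
    exact ringKrullDim_quotient_anti fun a ha => Module.mem_annihilator.mpr (hannM a ha)
  · obtain ⟨e, he⟩ := exists_ne (0 : extModule A M r)
    refine (hge e he).trans (ringKrullDim_quotient_anti fun a ha => ?_)
    rw [Submodule.mem_annihilator_span_singleton]
    exact Module.mem_annihilator.mp ha e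
  · rw [← hcd]
    refine ringKrullDim_quotient_anti fun a ha => ?_
    rw [Submodule.mem_annihilator_span_singleton]
    exact hannM a ha e
end

section
/- For every finitely generated A-module M and every integer r with 0 ≤ r ≤ n, the A-module Ext^r_A(Ext^r_A(M, A), A) is either zero or r-pure. -/
/-!
Write `A = k[x_1, …, x_n]`. Two facts about `Ext` over `A` carry the argument.

* Ischebeck vanishing, `Extⁱ(C, A) = 0` for `i + dim C < n`
  (`subsingleton_ext_of_ringKrullDim_le`). By dévissage and induction on the dimension it reduces to
  `C = A ⧸ m` with `m` maximal, where the minimal polynomials of the images of the `x_i` form a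
  regular sequence of length `n` in `m`.
* The dimension bound `dim Ext^r(M, A) ≤ n - r` (`ringKrullDim_quotient_annihilator_ext_le`).
  Localizing `A` at the nonzero polynomials in a set `s` of more than `n - r` variables gives a
  polynomial ring in fewer than `r` variables over a field; Hilbert's syzygy theorem then yields
  `0 ≠ f ∈ k[s]` killing `Ext^r(M, A)`. Such an annihilator cannot leave more than `n - r` variables
  algebraically independent, which bounds the dimension by Noether normalization.

Put `N = Ext^r(M, A)`. Both facts together give `Extⁱ(N, A) = 0` for `i < r`, so by Rees the
annihilator of `N` contains a regular sequence `a_1, …, a_r`, and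
`Ext^r(N, A) ≅ Hom(N, A ⧸ (a_1, …, a_r))`. For `0 ≠ α ∈ Ext^r(N, A)` let `C` be the image of the
corresponding homomorphism. Then `ann N ⊆ ann α ⊆ ann C`, and
`Ext^r(C, A) ≅ Hom(C, A ⧸ (a_1, …, a_r))` is nonzero, so `n - r ≤ dim C ≤ dim (A ⧸ ann α) ≤ dim N ≤ n - r`.

The modules `extModule` are built from the derived functor of `Hom`, while the long exact sequences
used are those of `Abelian.Ext`; `nonempty_ext_linearEquiv` identifies the two `A`-linearly.
-/

open CategoryTheory

/-! ### Derived-functor `Ext` and `Abelian.Ext` -/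

section bridge
open CochainComplex HomComplex

variable {A : Type} [CommRing A] {X Y : ModuleCat.{0} A} (P : ProjectiveResolution X)

/-- In degree `0` there are no coboundaries: the class of a cocycle `P₀ ⟶ Y` vanishes only if the
cocycle does. -/
lemma extMk_eq_zero_of_zero (f : P.complex.X 0 ⟶ Y) (hf : P.complex.d 1 0 ≫ f = 0)
    (h : P.extMk f 1 rfl hf = 0) : f = 0 := by
  simp only [← P.extEquivCohomologyClass.apply_eq_iff_eq,
    ProjectiveResolution.extEquivCohomologyClass_extMk,
    ProjectiveResolution.extEquivCohomologyClass_zero,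
    CohomologyClass.mk_eq_zero_iff] at h
  rw [Cocycle.toSingleMk_mem_coboundaries_iff _ _ _ _ _ 1 (by simp)] at h
  obtain ⟨g, hg⟩ := h
  have hz : Limits.IsZero (P.cochainComplex.X 1) :=
    P.cochainComplex.isZero_of_isStrictlyLE 0 1 (by simp)
  rw [hz.eq_of_src g 0, Limits.comp_zero] at hg
  rw [← cancel_epi (P.cochainComplexXIso (-(0:ℕ)) 0 rfl).hom, ← hg, Limits.comp_zero]

lemma exists_linearEquiv_of_ker_eq {C E F : Type} [AddCommGroup C] [AddCommGroup E] [AddCommGroup F]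
    [Module A C] [Module A E] [Module A F] (f : C →ₗ[A] E) (g : C →ₗ[A] F)
    (hf : Function.Surjective f) (hg : Function.Surjective g)
    (h : LinearMap.ker f = LinearMap.ker g) : Nonempty (E ≃ₗ[A] F) :=
  ⟨(f.quotKerEquivOfSurjective hf).symm ≪≫ₗ Submodule.quotEquivOfEq _ _ h ≪≫ₗ
    g.quotKerEquivOfSurjective hg⟩

lemma extMk_smul {i : ℕ} (a : A) (f : P.complex.X i ⟶ Y) (hf : P.complex.d (i + 1) i ≫ f = 0)
    (hf' : P.complex.d (i + 1) i ≫ (a • f) = 0) :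
    P.extMk (a • f) (i + 1) rfl hf' = a • P.extMk f (i + 1) rfl hf := by
  rw [Abelian.Ext.smul_eq_comp_mk₀, ProjectiveResolution.extMk_comp_mk₀]
  congr 1

/-- The map sending an `i`-cocycle of `Hom(P, Y)` to its class in `Abelian.Ext X Y i`, where `P` is a
projective resolution of `X`. Cocycles are encoded as the kernel of the differential of
`linearYonedaObj`. -/
noncomputable def cocycleToExt (i : ℕ) :
    LinearMap.ker ((P.complex.linearYonedaObj A Y).d i (i+1)).hom →ₗ[A] Abelian.Ext X Y i where
  toFun z := P.extMk (Y := Y) (z.1 : P.complex.X i ⟶ Y) (i+1) rfl z.2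
  map_add' _ _ := (P.add_extMk _ _ _ _ _ _).symm
  map_smul' a _ := extMk_smul P a _ _ _

/-- The derived-functor `Ext` and `Abelian.Ext` agree as modules: for a projective resolution `P` of
`X`, both are quotients of the `i`-cocycles of `Hom(P, Y)` by the coboundaries. -/
lemma nonempty_ext_linearEquiv (i : ℕ) :
    Nonempty (((Ext A (ModuleCat A) i).obj (Opposite.op X)).obj Y ≃ₗ[A] Abelian.Ext X Y i) := by
  let P := projectiveResolution X
  have e1 := (P.isoExt (R := A) i Y).toLinearEquiv
  let p := (ComplexShape.up ℕ).prev i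
  let S := (P.complex.linearYonedaObj A Y).sc' p i (i + 1)
  have e2 := ((P.complex.linearYonedaObj A Y).homologyIsoSc' p i (i+1) rfl (by simp) ≪≫
    S.moduleCatHomologyIso).toLinearEquiv
  obtain ⟨e3⟩ := exists_linearEquiv_of_ker_eq (A := A)
    (LinearMap.range S.moduleCatToCycles).mkQ (cocycleToExt P (Y := Y) i)
    (Submodule.mkQ_surjective _) (fun α => by
      obtain ⟨f, hf, rfl⟩ := P.extMk_surjective α (i + 1) rfl
      exact ⟨⟨f, hf⟩, rfl⟩) (by
      ext z
      rw [Submodule.ker_mkQ]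
      obtain ⟨f, hf⟩ := z
      change P.complex.X i ⟶ Y at f
      change _ ↔ P.extMk f (i + 1) rfl hf = 0
      constructor
      · rintro ⟨g, hg⟩
        have hg' : P.complex.d i p ≫ (show P.complex.X p ⟶ Y from g) = f := congrArg Subtype.val hg
        obtain rfl | j := i
        · have : P.complex.d 0 p = 0 := P.complex.shape _ _ (by simp)
          rw [this, Limits.zero_comp] at hg'
          subst hg'
          simp
        · exact (P.extMk_eq_zero_iff f _ rfl hf p (by simp [p])).2 ⟨g, hg'⟩
      · intro h
        obtain rfl | j := i
        · have := extMk_eq_zero_of_zero P f hf h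
          subst this
          exact Submodule.zero_mem _
        · obtain ⟨g, hg⟩ := (P.extMk_eq_zero_iff f _ rfl hf p (by simp [p])).1 h
          exact ⟨g, Subtype.ext hg⟩)
  exact ⟨e1 ≪≫ₗ e2 ≪≫ₗ e3⟩

end bridge

/-! ### Vanishing of `Ext` in low degrees -/

section ischebeck
variable {A : Type} [CommRing A]

lemma smul_ext_eq_comp {N B : ModuleCat.{0} A} {i : ℕ} (x : A) (α : Abelian.Ext N B i) :
    x • α = (Abelian.Ext.mk₀ (x • 𝟙 N)).comp α (zero_add i) := by
  rw [Abelian.Ext.mk₀_smul, Abelian.Ext.smul_comp, Abelian.Ext.mk₀_id_comp]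

lemma subsingleton_ext_of_shortExact {S : ShortComplex (ModuleCat.{0} A)} (hS : S.ShortExact)
    (B : ModuleCat.{0} A) (i : ℕ) (h1 : Subsingleton (Abelian.Ext S.X₁ B i))
    (h3 : Subsingleton (Abelian.Ext S.X₃ B i)) : Subsingleton (Abelian.Ext S.X₂ B i) := by
  refine subsingleton_of_forall_eq 0 fun α => ?_
  obtain ⟨β, rfl⟩ := Abelian.Ext.contravariant_sequence_exact₂ hS B α (Subsingleton.elim _ _)
  rw [Subsingleton.elim β 0, Abelian.Ext.comp_zero]

lemma subsingleton_ext_of_iso {N N' : ModuleCat.{0} A} (e : N ≅ N')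
    (B : ModuleCat.{0} A) (i : ℕ) (h1 : Subsingleton (Abelian.Ext N' B i)) :
    Subsingleton (Abelian.Ext N B i) := by
  refine subsingleton_of_forall_eq 0 fun α => ?_
  have : α = (Abelian.Ext.mk₀ e.hom).comp ((Abelian.Ext.mk₀ e.inv).comp α (zero_add i))
      (zero_add i) := by
    rw [← Abelian.Ext.comp_assoc _ _ _ (zero_add 0) _ (by simp), Abelian.Ext.mk₀_comp_mk₀]
    simp
  rw [this, Subsingleton.elim ((Abelian.Ext.mk₀ e.inv).comp α (zero_add i)) 0,
    Abelian.Ext.comp_zero]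

/-- If `x` is regular on `N` and `Extⁱ(N/xN, B) = 0`, then `x` is injective on `Extⁱ(N, B)`. -/
lemma smul_ext_injective {N B : ModuleCat.{0} A} {i : ℕ} {x : A} (reg : IsSMulRegular N x)
    (h : Subsingleton (Abelian.Ext (ModuleCat.of A (QuotSMulTop x N)) B i))
    (α : Abelian.Ext N B i) (hα : x • α = 0) : α = 0 := by
  rw [smul_ext_eq_comp] at hα
  obtain ⟨β, rfl⟩ := Abelian.Ext.contravariant_sequence_exact₂ reg.smulShortComplex_shortExact B α hα
  have : β = 0 := h.elim _ _
  rw [this, Abelian.Ext.comp_zero]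
  rfl

/-- If `x` is regular on `N` and `Extⁱ⁺¹(N/xN, B) = 0`, then `x` is surjective on `Extⁱ(N, B)`. -/
lemma smul_ext_surjective {N B : ModuleCat.{0} A} {i : ℕ} {x : A} (reg : IsSMulRegular N x)
    (h : Subsingleton (Abelian.Ext (ModuleCat.of A (QuotSMulTop x N)) B (i + 1)))
    (α : Abelian.Ext N B i) : ∃ β : Abelian.Ext N B i, x • β = α := by
  obtain ⟨β, hβ⟩ := Abelian.Ext.contravariant_sequence_exact₁ reg.smulShortComplex_shortExact B α
    (add_comm 1 i) (h.elim _ _)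
  exact ⟨β, (smul_ext_eq_comp (N := N) x β).trans hβ⟩

lemma isSMulRegular_quotient_prime (p : Ideal A) [p.IsPrime] {x : A} (hx : x ∉ p) :
    IsSMulRegular (A ⧸ p) x := by
  rw [isSMulRegular_iff_right_eq_zero_of_smul]
  intro y hy
  obtain ⟨y, rfl⟩ := Ideal.Quotient.mk_surjective y
  rw [Algebra.smul_def, Ideal.Quotient.algebraMap_eq, ← map_mul,
    Ideal.Quotient.eq_zero_iff_mem] at hy
  exact Ideal.Quotient.eq_zero_iff_mem.2 ((‹p.IsPrime›.mem_or_mem hy).resolve_left hx)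

variable [IsNoetherianRing A]

/-- The inductive step of Ischebeck's vanishing theorem. With `m ⊋ p` maximal and `x ∈ m \ p`,
multiplication by `x` is surjective on `E = Extⁱ(N, B)`, so by Nakayama some `r ∈ 1 + (x)` kills `E`.
Since `r ∉ m ⊇ p`, multiplication by `r` is also injective on `E`, whence `E = 0`. -/
lemma subsingleton_ext_of_regular_notMem (p : Ideal A) [p.IsPrime] (hp : ¬ p.IsMaximal)
    (N B : ModuleCat.{0} A) [Module.Finite A N] [Module.Finite A B] (i : ℕ)
    (reg : ∀ x ∉ p, IsSMulRegular N x)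
    (h : ∀ x ∉ p, ∀ j, j ≤ i + 1 →
      Subsingleton (Abelian.Ext (ModuleCat.of A (QuotSMulTop x N)) B j)) :
    Subsingleton (Abelian.Ext N B i) := by
  obtain ⟨m, hm, hpm⟩ := p.exists_le_maximal (Ideal.IsPrime.ne_top ‹_›)
  obtain ⟨x, hxm, hxp⟩ := SetLike.exists_of_lt (lt_of_le_of_ne hpm (fun h => hp (h ▸ hm)))
  obtain ⟨r, hr, hr0⟩ := Submodule.exists_sub_one_mem_and_smul_eq_zero_of_fg_of_le_smul
    (Ideal.span {x}) (⊤ : Submodule A (Abelian.Ext N B i))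
    Module.Finite.fg_top (by
      intro α _
      obtain ⟨β, rfl⟩ := smul_ext_surjective (reg x hxp) (h x hxp (i + 1) le_rfl) α
      exact Submodule.smul_mem_smul (Ideal.mem_span_singleton_self x) trivial)
  have hrp : r ∉ p := fun hrp => hm.ne_top <| (Ideal.eq_top_iff_one _).2 <| by
    have h1 : r - 1 ∈ m := (Ideal.span_singleton_le_iff_mem m).2 hxm hr
    simpa using m.sub_mem (hpm hrp) h1
  exact subsingleton_of_forall_eq 0 fun α =>
    smul_ext_injective (reg r hrp) (h r hrp i (by omega)) α (hr0 α trivial)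

/-- Ischebeck's vanishing theorem, in global form: if every residue field has `Ext` into `B` only in
degrees at least `n`, then `Extⁱ(N, B) = 0` whenever `i + dim N < n`. A prime filtration of `N`
reduces to `N = A ⧸ p`, where one inducts on the dimension. -/
lemma subsingleton_ext_of_supportDim_le (n : ℕ) (B : ModuleCat.{0} A) [Module.Finite A B]
    (hmax : ∀ m : Ideal A, m.IsMaximal → ∀ i < n,
      Subsingleton (Abelian.Ext (ModuleCat.of A (A ⧸ m)) B i)) (d : ℕ) :
    ∀ (N : Type) [AddCommGroup N] [Module A N] [Module.Finite A N],
      Module.supportDim A N ≤ d → ∀ i, i + d < n →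
      Subsingleton (Abelian.Ext (ModuleCat.of A N) B i) := by
  induction d using Nat.strong_induction_on with
  | _ d ih =>
  intro N _ _ hfin
  refine IsNoetherianRing.induction_on_isQuotientEquivQuotientPrime A hfin
    (motive := fun N _ _ _ => Module.supportDim A N ≤ d → ∀ i, i + d < n →
      Subsingleton (Abelian.Ext (ModuleCat.of A N) B i)) ?_ ?_ ?_
  · intro N _ _ _ _ _ i _
    refine subsingleton_of_forall_eq 0 fun α => ?_
    rw [← Abelian.Ext.mk₀_id_comp α,
      (ModuleCat.isZero_of_subsingleton (ModuleCat.of A N)).eq_of_src (𝟙 _) 0]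
    simp
  · intro N _ _ _ ⟨p, hp⟩ e hd i hi
    refine subsingleton_ext_of_iso e.toModuleIso B i ?_
    dsimp only at e ⊢
    rw [Module.supportDim_eq_of_equiv e] at hd
    by_cases hpm : p.IsMaximal
    · exact hmax p hpm i (by omega)
    · obtain _ | d := d
      · exfalso
        rw [Module.supportDim_quotient_eq_ringKrullDim] at hd
        have : Ring.KrullDimLE 0 (A ⧸ p) := by
          rwa [Ring.krullDimLE_iff]
        exact hpm (Ideal.Quotient.maximal_of_isField _ Ring.KrullDimLE.isField_of_isDomain)
      · refine subsingleton_ext_of_regular_notMem p hpm (ModuleCat.of A (A ⧸ p)) B i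
          (fun x hx => isSMulRegular_quotient_prime p hx) fun x hx j hj => ?_
        refine ih d (by omega) (QuotSMulTop x (A ⧸ p)) ?_ j (by omega)
        have h1 := Module.supportDim_quotSMulTop_succ_le_of_notMem_minimalPrimes (R := A)
          (M := A ⧸ p) (x := x) (fun _ =>
            (isSMulRegular_quotient_prime p hx).notMem_of_mem_minimalPrimes)
        have h2 := h1.trans hd
        -- Cancelling `1` is legitimate in `ℕ∞` but needs the case `⊥` to be set aside.
        revert h2
        cases Module.supportDim A (QuotSMulTop x (A ⧸ p)) with
        | bot => simp
        | coe a =>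
          intro h2
          have h3 : a + 1 ≤ (d : ℕ∞) + 1 := by exact_mod_cast h2
          exact_mod_cast (ENat.add_le_add_iff_right (by simp)).1 h3
  · intro N₁ _ _ _ N₂ _ _ _ N₃ _ _ _ f g hf hg hfg h1 h3 hd i hi
    exact subsingleton_ext_of_shortExact (ModuleCat.shortComplex_shortExact
      (ModuleCat.shortComplexOfCompEqZero f g hfg.linearMap_comp_eq_zero) hfg hf hg) B i
      (h1 ((Module.supportDim_le_of_injective f hf).trans hd) i hi)
      (h3 ((Module.supportDim_le_of_surjective g hg).trans hd) i hi)

end ischebeck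

/-! ### The grade of a maximal ideal of a polynomial ring -/

section maximal
open RingTheory.Sequence

/-- A regular sequence of `R` extended by a monic polynomial is regular on `R[X]`: a monic polynomial
remains a nonzerodivisor over every quotient of `R`. -/
lemma isWeaklyRegular_append_monic {R : Type} [CommRing R] {rs : List R}
    (reg : IsWeaklyRegular R rs) {f : Polynomial R} (hf : f.Monic) :
    IsWeaklyRegular (Polynomial R) (rs.map (algebraMap R (Polynomial R)) ++ [f]) := by
  rw [isWeaklyRegular_append_iff]
  refine ⟨reg.of_flat, .cons ?_ (.nil _ _)⟩
  rw [isSMulRegular_iff_right_eq_zero_of_smul]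
  intro y hy
  obtain ⟨g, rfl⟩ := Submodule.mkQ_surjective _ y
  rw [← map_smul, Submodule.mkQ_apply, Submodule.Quotient.mk_eq_zero] at hy
  rw [Submodule.mkQ_apply, Submodule.Quotient.mk_eq_zero]
  -- The quotient of `R[X]` by the extension of `(rs)` is `(R/(rs))[X]`.
  have key : ∀ h : Polynomial R, h ∈ Ideal.ofList (rs.map (algebraMap R (Polynomial R))) •
      (⊤ : Submodule (Polynomial R) (Polynomial R)) ↔
      h.map (Ideal.Quotient.mk (Ideal.ofList rs)) = 0 := by
    intro h
    rw [← Ideal.map_ofList, smul_eq_mul, Ideal.mul_top, Polynomial.algebraMap_eq,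
      Ideal.mem_map_C_iff, Polynomial.ext_iff]
    simp [Ideal.Quotient.eq_zero_iff_mem]
  rw [key] at hy ⊢
  rw [smul_eq_mul, Polynomial.map_mul] at hy
  exact ((hf.map _).mul_right_eq_zero_iff).1 hy

/-- Monic polynomials `p i` in the separate variables `X i` form a regular sequence. The list `rs`
carries them in some order; only its length and the shape of its members are recorded. -/
lemma exists_isWeaklyRegular_aeval_X {k : Type} [Field k] (n : ℕ) (p : Fin n → Polynomial k)
    (hp : ∀ i, (p i).Monic) : ∃ rs : List (MvPolynomial (Fin n) k), rs.length = n ∧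
      (∀ r ∈ rs, ∃ i, r = Polynomial.aeval (MvPolynomial.X i) (p i)) ∧
      IsWeaklyRegular (MvPolynomial (Fin n) k) rs := by
  induction n with
  | zero => exact ⟨[], rfl, by simp, .nil _ _⟩
  | succ n ih =>
    obtain ⟨rs, hlen, hrs, reg⟩ := ih (fun i => p i.succ) (fun i => hp _)
    let e := (MvPolynomial.finSuccEquiv k n).symm
    have reg' := isWeaklyRegular_append_monic reg (f := (p 0).map (algebraMap k _))
      ((hp 0).map _)
    refine ⟨_, ?_, ?_, (e.toAddEquiv.isWeaklyRegular_congr (bs := List.map e _)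
      (List.forall₂_map_right_iff.mpr <|
        List.forall₂_same.mpr fun r _ x => ?_)).1 reg'⟩
    · simp [hlen]
    · intro r hr
      simp only [List.map_append, List.map_map, List.mem_append, List.mem_map, List.map_cons,
        List.map_nil, List.mem_singleton, Function.comp] at hr
      obtain ⟨a, ha, rfl⟩ | rfl := hr
      · obtain ⟨i, rfl⟩ := hrs a ha
        refine ⟨i.succ, ?_⟩
        rw [AlgEquiv.symm_apply_eq, ← Polynomial.aeval_algebraMap_apply,
          ← AlgEquiv.toAlgHom_apply, ← Polynomial.aeval_algHom_apply, AlgEquiv.toAlgHom_apply,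
          MvPolynomial.finSuccEquiv_X_succ, Polynomial.algebraMap_eq]
      · refine ⟨0, ?_⟩
        rw [AlgEquiv.symm_apply_eq,
          ← AlgEquiv.toAlgHom_apply, ← Polynomial.aeval_algHom_apply, AlgEquiv.toAlgHom_apply,
          MvPolynomial.finSuccEquiv_X_zero]
        exact (Polynomial.aeval_X_left_eq_map _).symm
    · exact map_mul e r x

/-- A maximal ideal `m` of `k[x_1, …, x_n]` has grade at least `n`: the quotient by `m` is finite over
`k` (Nullstellensatz), so the minimal polynomials of the images of the variables give a regular
sequence of length `n` inside `m`. -/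
lemma subsingleton_ext_quotient_maximal {k : Type} [Field k] (n : ℕ)
    (m : Ideal (MvPolynomial (Fin n) k)) (hm : m.IsMaximal) (i : ℕ) (hi : i < n) :
    Subsingleton (Abelian.Ext (ModuleCat.of (MvPolynomial (Fin n) k) (MvPolynomial (Fin n) k ⧸ m))
      (ModuleCat.of (MvPolynomial (Fin n) k) (MvPolynomial (Fin n) k)) i) := by
  let _ := Ideal.Quotient.field m
  have hfin : Module.Finite k (MvPolynomial (Fin n) k ⧸ m) := by
    exact finite_of_finite_type_of_isJacobsonRing _ _
  have hint : ∀ a : MvPolynomial (Fin n) k ⧸ m, IsIntegral k a :=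
    fun a => Algebra.IsIntegral.isIntegral a
  obtain ⟨rs, hlen, hrs, reg⟩ := exists_isWeaklyRegular_aeval_X n
    (fun i => minpoly k (Ideal.Quotient.mk m (MvPolynomial.X i)))
    (fun i => minpoly.monic (hint _))
  have hmem : ∀ r ∈ rs, r ∈ m := by
    intro r hr
    obtain ⟨j, rfl⟩ := hrs r hr
    rw [← Ideal.Quotient.eq_zero_iff_mem, ← Ideal.Quotient.mkₐ_eq_mk k,
      ← Polynomial.aeval_algHom_apply]
    exact minpoly.aeval _ _
  have hlt : m • (⊤ : Submodule (MvPolynomial (Fin n) k) (MvPolynomial (Fin n) k)) < ⊤ := by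
    simpa [lt_top_iff_ne_top] using hm.ne_top
  refine ModuleCat.subsingleton_ext_of_exists_isRegular m _ ?_ _ hlt rs hmem ⟨reg, ?_⟩ i
    (hi.trans_eq hlen.symm)
  · simp [Module.support_eq_zeroLocus, Ideal.annihilator_quotient]
  · intro h
    refine hlt.ne (top_le_iff.1 (h.le.trans ?_))
    exact Submodule.smul_mono_left (Ideal.span_le.2 hmem)

end maximal

/-! ### Annihilators of classes in the top-grade `Ext` -/

section lemmaX
open RingTheory.Sequence
variable {A : Type} [CommRing A]

/-- The connecting homomorphism `Ext^j(N, B/xB) → Ext^{j+1}(N, B)`. -/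
noncomputable def extDelta {B : ModuleCat.{0} A} {x : A} (reg : IsSMulRegular B x)
    (N : ModuleCat.{0} A) (j : ℕ) :
    Abelian.Ext N (ModuleCat.of A (QuotSMulTop x B)) j →ₗ[A] Abelian.Ext N B (j + 1) where
  toFun β := β.comp reg.smulShortComplex_shortExact.extClass rfl
  map_add' _ _ := Abelian.Ext.add_comp _ _ _ _
  map_smul' a β := Abelian.Ext.smul_comp β _ rfl a

lemma extDelta_injective {B : ModuleCat.{0} A} {x : A} (reg : IsSMulRegular B x)
    (N : ModuleCat.{0} A) (j : ℕ) (h : Subsingleton (Abelian.Ext N B j)) :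
    Function.Injective (extDelta reg N j) := by
  rw [injective_iff_map_eq_zero]
  intro β hβ
  obtain ⟨γ, rfl⟩ := Abelian.Ext.covariant_sequence_exact₃ N reg.smulShortComplex_shortExact β rfl hβ
  have : γ = 0 := h.elim _ _
  rw [this, Abelian.Ext.zero_comp]
  rfl

/-- A class killed by `x` comes from `Ext^j(N, B/xB)`. -/
lemma exists_extDelta_eq {B : ModuleCat.{0} A} {x : A} (reg : IsSMulRegular B x)
    (N : ModuleCat.{0} A) (j : ℕ) (α : Abelian.Ext N B (j + 1)) (h : x • α = 0) :
    ∃ β, extDelta reg N j β = α :=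
  Abelian.Ext.covariant_sequence_exact₁ N reg.smulShortComplex_shortExact α
    ((Abelian.Ext.smul_eq_comp_mk₀ α x).symm.trans h) rfl

lemma smul_ext_eq_zero {N B : ModuleCat.{0} A} {i : ℕ} {x : A}
    (hx : x ∈ Module.annihilator A N) (α : Abelian.Ext N B i) : x • α = 0 := by
  have h : x • 𝟙 N = 0 := by
    ext n
    exact Module.mem_annihilator.1 hx n
  rw [← Abelian.Ext.mk₀_id_comp α, ← Abelian.Ext.smul_comp, ← Abelian.Ext.mk₀_smul, h]
  simp

/-- The easy half of Rees's theorem: a `B`-regular sequence in the annihilator of `N` forces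
`Ext^j(N, B) = 0` below its length. -/
lemma subsingleton_ext_of_isWeaklyRegular (N : ModuleCat.{0} A) (rs : List A) :
    ∀ (B : ModuleCat.{0} A), IsWeaklyRegular B rs → (∀ r ∈ rs, r ∈ Module.annihilator A N) →
      ∀ j < rs.length, Subsingleton (Abelian.Ext N B j) := by
  induction rs with
  | nil => simp
  | cons x rs ih =>
    intro B reg mem j hj
    rw [isWeaklyRegular_cons_iff] at reg
    refine subsingleton_of_forall_eq 0 fun α => ?_
    obtain _ | j := j
    · obtain ⟨f, rfl⟩ := Abelian.Ext.homEquiv₀.symm.surjective α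
      have : f = 0 := by
        ext n
        refine (isSMulRegular_iff_right_eq_zero_of_smul.1 reg.1) _ ?_
        rw [← map_smul, Module.mem_annihilator.1 (mem x (by simp)) n, map_zero]
      simp [this]
    · obtain ⟨β, rfl⟩ := exists_extDelta_eq reg.1 N j α (smul_ext_eq_zero (mem x (by simp)) α)
      rw [(ih (.of A (QuotSMulTop x B)) reg.2 (fun r hr => mem r (by simp [hr])) j
        (by simpa using hj)).elim β 0, map_zero]

/-- A nonzero class `α ∈ Ext^r(N, B)`, where the annihilator of `N` contains a `B`-regular sequence
`rs` of length `r`, is witnessed by a finite module `C` with `ann α ⊆ ann C` and `Ext^r(C, B) ≠ 0`.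
Indeed `Ext^r(N, B) ≅ Hom(N, B/(rs)B)`, and `C` is the image of the homomorphism corresponding
to `α`; the inclusion `C → B/(rs)B` is a nonzero element of `Hom(C, B/(rs)B) ≅ Ext^r(C, B)`. -/
lemma exists_module_ext_nontrivial (N : ModuleCat.{0} A) [Module.Finite A N] (rs : List A) :
    ∀ (B : ModuleCat.{0} A), IsWeaklyRegular B rs → (∀ r ∈ rs, r ∈ Module.annihilator A N) →
      ∀ α : Abelian.Ext N B rs.length, α ≠ 0 → ∃ C : ModuleCat.{0} A, Module.Finite A C ∧
        (∀ a : A, a • α = 0 → a ∈ Module.annihilator A C) ∧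
        ¬ Subsingleton (Abelian.Ext C B rs.length) := by
  induction rs with
  | nil =>
    intro B _ _ α hα
    obtain ⟨f, rfl⟩ := (Abelian.Ext.linearEquiv₀ (R := A)).symm.surjective α
    refine ⟨.of A (LinearMap.range f.hom), inferInstance, fun a ha => ?_, fun h => hα ?_⟩
    · rw [← map_smul, LinearEquiv.map_eq_zero_iff] at ha
      rw [Module.mem_annihilator]
      rintro ⟨_, n, rfl⟩
      exact Subtype.ext (congr($ha n))
    · let g : ModuleCat.of A (LinearMap.range f.hom) ⟶ B :=
        ModuleCat.ofHom (LinearMap.range f.hom).subtype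
      have hg : g = 0 :=
        (Abelian.Ext.linearEquiv₀ (R := A)).symm.injective (h.elim _ _)
      have hf : f = 0 := by
        ext n
        exact congr($hg ⟨f n, n, rfl⟩)
      rw [hf, map_zero]
  | cons x rs ih =>
    intro B reg mem α hα
    have hsub := subsingleton_ext_of_isWeaklyRegular N (x :: rs) B reg mem rs.length (by simp)
    have hreg := reg
    rw [isWeaklyRegular_cons_iff] at reg
    obtain ⟨β, rfl⟩ := exists_extDelta_eq reg.1 N _ α (smul_ext_eq_zero (mem x (by simp)) α)
    obtain ⟨C, hfin, hann, hC⟩ := ih (.of A (QuotSMulTop x B)) reg.2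
      (fun r hr => mem r (by simp [hr])) β (by rintro rfl; simp at hα)
    have hann' : ∀ a : A, a • extDelta reg.1 N rs.length β = 0 → a ∈ Module.annihilator A C := by
      intro a ha
      refine hann a (extDelta_injective reg.1 N _ hsub ?_)
      rw [map_smul, ha, map_zero]
    refine ⟨C, hfin, hann', fun h => hC ?_⟩
    exact (extDelta_injective reg.1 C _ (subsingleton_ext_of_isWeaklyRegular C (x :: rs) B hreg
      (fun r hr => hann' r (smul_ext_eq_zero (mem r hr) _)) rs.length (by simp))).subsingleton

end lemmaX

/-! ### Global dimension of polynomial rings -/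

section syzygy
open Polynomial

section seq
variable {R : Type} [CommRing R] (N : Type) [AddCommGroup N] [Module R N] [Module R[X] N]
  [IsScalarTower R R[X] N]

/-- The evaluation `R[X] ⊗ N → N`, `∑ Xⁱ ⊗ nᵢ ↦ ∑ Xⁱ nᵢ`, for an `R[X]`-module `N`. The source is
`PolynomialModule R N`, whose `R[X]`-structure ignores the one on `N`. -/
noncomputable def evalAtX : PolynomialModule R N →ₗ[R[X]] N where
  toFun q := PolynomialModule.eval (X : R[X]) (PolynomialModule.map R[X] (LinearMap.id : N →ₗ[R] N) q)
  map_add' := by simp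
  map_smul' p q := by
    rw [PolynomialModule.map_smul, PolynomialModule.eval_smul, RingHom.id_apply]
    congr 1
    rw [eval_map_algebraMap, aeval_X_left_apply]

/-- The endomorphism `X ⊗ 1 - 1 ⊗ X` of `R[X] ⊗ N`, for an `R[X]`-module `N`. -/
noncomputable def mulXSub : PolynomialModule R N →ₗ[R[X]] PolynomialModule R N where
  toFun q := (X : R[X]) • q -
    PolynomialModule.map R ((LinearMap.lsmul R[X] N X).restrictScalars R) q
  map_add' p q := by simp only [smul_add, map_add]; abel
  map_smul' p q := by
    rw [PolynomialModule.map_smul, smul_comm X p q]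
    simp [smul_sub]

lemma evalAtX_single (i : ℕ) (m : N) :
    evalAtX N (PolynomialModule.single R i m) = (X : R[X]) ^ i • m := by
  simp [evalAtX]

lemma mulXSub_single (i : ℕ) (m : N) : mulXSub N (PolynomialModule.single R i m) =
    PolynomialModule.single R (i + 1) m - PolynomialModule.single R i ((X : R[X]) • m) := by
  have := PolynomialModule.monomial_smul_single (R := R) 1 1 i m
  simp [mulXSub, ← monomial_one_one_eq_X, this, add_comm 1 i]

lemma evalAtX_surjective : Function.Surjective (evalAtX (R := R) N) := fun m =>
  ⟨PolynomialModule.single R 0 m, by simp [evalAtX_single]⟩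

lemma mulXSub_coeff_succ (p : PolynomialModule R N) (i : ℕ) :
    (mulXSub N p).coeff (i + 1) = p.coeff i - (X : R[X]) • p.coeff (i + 1) := by
  induction p using PolynomialModule.induction_linear with
  | zero => simp
  | add p q hp hq =>
    rw [(mulXSub N).map_add, PolynomialModule.coeff_add, Finsupp.add_apply, hp, hq]
    simp only [PolynomialModule.coeff_add, Finsupp.add_apply, smul_add]
    abel
  | single j m =>
    have hsub (p q : PolynomialModule R N) : (p - q).coeff = p.coeff - q.coeff := rfl
    rw [mulXSub_single, hsub, Finsupp.sub_apply]
    simp only [PolynomialModule.coeff_single, Finsupp.single_apply, add_left_inj]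
    split_ifs <;> simp

/-- An element killed by `X ⊗ 1 - 1 ⊗ X` has coefficients `pᵢ = X pᵢ₊₁ = X² pᵢ₊₂ = ⋯`, and these
vanish eventually. -/
lemma mulXSub_injective : Function.Injective (mulXSub (R := R) N) := by
  rw [injective_iff_map_eq_zero]
  intro p hp
  have h : ∀ i, p.coeff i = (X : R[X]) • p.coeff (i + 1) := by
    intro i
    have h := mulXSub_coeff_succ N p i
    rw [hp] at h
    exact (sub_eq_zero.1 h.symm)
  have h' : ∀ j i, p.coeff i = (X : R[X]) ^ j • p.coeff (i + j) := by
    intro j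
    induction j with
    | zero => simp
    | succ j ih =>
      intro i
      rw [ih, h, smul_smul, ← pow_succ, add_assoc]
  obtain ⟨B, hB⟩ := p.coeff.support.bddAbove
  refine PolynomialModule.coeff_injective (Finsupp.ext fun i => ?_)
  rw [h' (B + 1) i, Finsupp.notMem_support_iff.1 (fun hm => ?_)]
  · simp
  · have := hB hm
    omega

/-- The characteristic sequence `0 → R[X] ⊗ N → R[X] ⊗ N → N → 0` of an `R[X]`-module is exact in the
middle, since every element is congruent to a constant modulo `X ⊗ 1 - 1 ⊗ X`. -/
lemma exact_mulXSub_evalAtX : Function.Exact (mulXSub (R := R) N) (evalAtX N) := by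
  have h1 : ∀ p, evalAtX N (mulXSub (R := R) N p) = 0 := by
    intro p
    induction p using PolynomialModule.induction_linear with
    | zero => simp
    | add p q hp hq => rw [map_add, map_add, hp, hq, add_zero]
    | single i m => rw [mulXSub_single, map_sub, evalAtX_single, evalAtX_single, smul_smul,
        ← pow_succ, sub_self]
  have h2 : ∀ p, p - PolynomialModule.single R 0 (evalAtX N p) ∈
      LinearMap.range (mulXSub (R := R) N) := by
    intro p
    induction p using PolynomialModule.induction_linear with
    | zero => simp
    | add p q hp hq =>
      convert add_mem hp hq using 1
      rw [map_add, PolynomialModule.single_add]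
      abel
    | single i m =>
      induction i generalizing m with
      | zero => simp [evalAtX_single]
      | succ i ih =>
        convert add_mem (LinearMap.mem_range_self (mulXSub (R := R) N)
          (PolynomialModule.single R i m)) (ih ((X : R[X]) • m)) using 1
        rw [mulXSub_single, evalAtX_single, evalAtX_single, smul_smul, ← pow_succ]
        abel
  intro p
  constructor
  · intro hp
    simpa [hp] using h2 p
  · rintro ⟨q, rfl⟩
    exact h1 q

omit [Module R[X] N] [IsScalarTower R R[X] N] in
lemma projective_polynomialModule [Module.Projective R N] :
    Module.Projective R[X] (PolynomialModule R N) :=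
  Module.Projective.of_equiv (PolynomialModule.polynomialTensorProductLEquivPolynomialModule R N)

/-- An `R[X]`-module projective over `R` has projective dimension at most `1`, by its characteristic
sequence. -/
lemma hasProjectiveDimensionLE_one_of_projective [Module.Projective R N] :
    HasProjectiveDimensionLE (ModuleCat.of R[X] N) 1 := by
  have := projective_polynomialModule (R := R) N
  have hp : Projective (ModuleCat.of R[X] (PolynomialModule R N)) :=
    (IsProjective.iff_projective _).1 this
  exact (ModuleCat.shortComplex_shortExact (ModuleCat.shortComplexOfCompEqZero _ _
    (exact_mulXSub_evalAtX (R := R) N).linearMap_comp_eq_zero) (exact_mulXSub_evalAtX N)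
    (mulXSub_injective N) (evalAtX_surjective N)).hasProjectiveDimensionLT_X₃ 1
    (show HasProjectiveDimensionLT (ModuleCat.of R[X] (PolynomialModule R N)) 1 from inferInstance)
    (show HasProjectiveDimensionLT (ModuleCat.of R[X] (PolynomialModule R N)) 2 from inferInstance)

end seq

/-- Restricting scalars along `R → R[X]` lowers the projective dimension by at most one. -/
lemma hasProjectiveDimensionLE_succ_of_restrict {R : Type} [CommRing R] (m : ℕ) :
    ∀ (N : Type) [AddCommGroup N] [Module R N] [Module R[X] N] [IsScalarTower R R[X] N],
      HasProjectiveDimensionLE (ModuleCat.of R N) m →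
      HasProjectiveDimensionLE (ModuleCat.of R[X] N) (m + 1) := by
  induction m with
  | zero =>
    intro N _ _ _ _ h
    rw [← projective_iff_hasProjectiveDimensionLE_zero, ← IsProjective.iff_projective] at h
    exact hasProjectiveDimensionLE_one_of_projective (R := R) N
  | succ m ih =>
    intro N _ _ _ _ h
    let π : (N →₀ R[X]) →ₗ[R[X]] N := Finsupp.linearCombination R[X] id
    have hπ : Function.Surjective π := Finsupp.linearCombination_id_surjective _ _
    have hex : Function.Exact (LinearMap.ker π).subtype π := LinearMap.exact_subtype_ker_map π
    have hex' : Function.Exact ((LinearMap.ker π).subtype.restrictScalars R)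
      (π.restrictScalars R) := hex
    have hp : Projective (ModuleCat.of R[X] (N →₀ R[X])) :=
      (IsProjective.iff_projective _).1 inferInstance
    have hp' : Projective (ModuleCat.of R (N →₀ R[X])) :=
      (IsProjective.iff_projective _).1 inferInstance
    have h1 : HasProjectiveDimensionLE (ModuleCat.of R (LinearMap.ker π)) m :=
      ((ModuleCat.shortComplex_shortExact (ModuleCat.shortComplexOfCompEqZero
        ((LinearMap.ker π).subtype.restrictScalars R) (π.restrictScalars R)
        hex'.linearMap_comp_eq_zero) hex' (Subtype.val_injective) hπ).hasProjectiveDimensionLT_X₃_iff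
          m hp').1 h
    exact ((ModuleCat.shortComplex_shortExact (ModuleCat.shortComplexOfCompEqZero _ _
        hex.linearMap_comp_eq_zero) hex (Subtype.val_injective) hπ).hasProjectiveDimensionLT_X₃_iff
          (m + 1) hp).2 (ih _ h1)

attribute [local instance] RingHomInvPair.of_ringEquiv in
lemma hasProjectiveDimensionLE_of_ringEquiv {R R' : Type} [CommRing R] [CommRing R'] (e : R ≃+* R')
    (m : ℕ) (h : ∀ N : ModuleCat.{0} R, HasProjectiveDimensionLE N m) (N : ModuleCat.{0} R') :
    HasProjectiveDimensionLE N m := by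
  have := h ((ModuleCat.restrictScalars (e : R →+* R')).obj N)
  let e' : ((ModuleCat.restrictScalars (e : R →+* R')).obj N) ≃ₛₗ[RingHomClass.toRingHom e] N :=
    { AddEquiv.refl N with map_smul' := fun _ _ => rfl }
  exact ModuleCat.hasProjectiveDimensionLE_of_semiLinearEquiv e e' m

/-- Hilbert's syzygy theorem: modules over a polynomial ring in `m` variables over a field have
projective dimension at most `m`, whether finitely generated or not. -/
lemma hasProjectiveDimensionLE_mvPolynomial (K : Type) [Field K] (m : ℕ) :
    ∀ N : ModuleCat.{0} (MvPolynomial (Fin m) K), HasProjectiveDimensionLE N m := by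
  induction m with
  | zero =>
    refine hasProjectiveDimensionLE_of_ringEquiv (MvPolynomial.isEmptyRingEquiv K (Fin 0)).symm 0 ?_
    intro N
    rw [← projective_iff_hasProjectiveDimensionLE_zero, ← IsProjective.iff_projective]
    exact Module.Projective.of_free
  | succ m ih =>
    refine hasProjectiveDimensionLE_of_ringEquiv
      (MvPolynomial.finSuccEquiv K m).symm.toRingEquiv (m + 1) fun N => ?_
    let _ : Module (MvPolynomial (Fin m) K) N := Module.compHom N (Polynomial.C)
    have : IsScalarTower (MvPolynomial (Fin m) K) (MvPolynomial (Fin m) K)[X] N :=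
      .of_algebraMap_smul fun _ _ => rfl
    exact hasProjectiveDimensionLE_succ_of_restrict m N (ih _)

end syzygy

/-! ### `Ext` and localization -/

section killing
variable {A : Type} [CommRing A]

/-- If `S⁻¹M` is projective, a surjection `π : F → M` splits up to some `s ∈ S`: a section of `S⁻¹π`
descends to `M` after clearing denominators. -/
lemma exists_factor_of_projective_localization_s7 [IsNoetherianRing A] (S : Submonoid A)
    {F M : Type} [AddCommGroup F] [Module A F] [AddCommGroup M] [Module A M] [Module.Finite A M]
    (π : F →ₗ[A] M) (hπ : Function.Surjective π)
    [Module.Projective (Localization S) (LocalizedModule S M)] :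
    ∃ s ∈ S, ∃ σ : M →ₗ[A] F, π ∘ₗ σ = s • LinearMap.id := by
  have := Module.finitePresentation_of_finite A M
  obtain ⟨t, ht⟩ := Module.projective_lifting_property (LocalizedModule.map S π) LinearMap.id
    (LocalizedModule.map_surjective S π hπ)
  obtain ⟨σ, s, hσ⟩ := Module.FinitePresentation.exists_lift_of_isLocalizedModule S
    (LocalizedModule.mkLinearMap S F) (t.restrictScalars A ∘ₗ LocalizedModule.mkLinearMap S M)
  obtain ⟨s', hs'⟩ := Module.Finite.exists_smul_of_comp_eq_of_isLocalizedModule S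
    (LocalizedModule.mkLinearMap S M) (π ∘ₗ σ) (s • LinearMap.id) (by
      ext x
      have h1 := LinearMap.congr_fun hσ x
      have h2 := LinearMap.congr_fun ht (LocalizedModule.mkLinearMap S M x)
      have h3 : LocalizedModule.mkLinearMap S M (π (σ x)) =
        LocalizedModule.map S π (LocalizedModule.mkLinearMap S F (σ x)) := by simp
      have h4 : LocalizedModule.mkLinearMap S F (σ x) =
        (s : A) • t (LocalizedModule.mkLinearMap S M x) := h1
      have h5 : LocalizedModule.map S π (t (LocalizedModule.mkLinearMap S M x)) =
        LocalizedModule.mkLinearMap S M x := h2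
      show LocalizedModule.mkLinearMap S M (π (σ x)) = LocalizedModule.mkLinearMap S M ((s : A) • x)
      rw [h3, h4, LinearMap.map_smul_of_tower, h5, map_smul])
  refine ⟨s' * s, mul_mem s'.2 s.2, s' • σ, ?_⟩
  ext x
  have := LinearMap.congr_fun hs' x
  simpa [mul_smul, Submonoid.smul_def] using this

/-- If `S⁻¹M` has projective dimension at most `m`, then one `s ∈ S` kills `Ext^r(M, B)` for all `r > m`
and all `B`. For `m = 0`, multiplication by `s` on `M` factors through a free module; the general
case is dimension shifting. -/
lemma exists_smul_ext_eq_zero_s7 [IsNoetherianRing A] (S : Submonoid A) (m : ℕ) :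
    ∀ (M : ModuleCat.{0} A) [Module.Finite A M],
      HasProjectiveDimensionLE ((ModuleCat.localizedModuleFunctor S).obj M) m →
      ∃ s ∈ S, ∀ r, m < r → ∀ (B : ModuleCat.{0} A) (α : Abelian.Ext M B r), s • α = 0 := by
  induction m with
  | zero =>
    intro M _ h
    obtain ⟨l, π, hπ⟩ := Module.Finite.exists_fin' A M
    rw [← projective_iff_hasProjectiveDimensionLE_zero, ← IsProjective.iff_projective] at h
    have e : (ModuleCat.localizedModuleFunctor S).obj M ≃ₗ[Localization S] LocalizedModule S M :=
      Shrink.linearEquiv (Localization S) (LocalizedModule S M)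
    have h : Module.Projective (Localization S) (LocalizedModule S M) :=
      Module.Projective.of_equiv e
    obtain ⟨s, hs, σ, hσ⟩ := exists_factor_of_projective_localization_s7 S π hπ
    refine ⟨s, hs, fun r hr B α => ?_⟩
    obtain ⟨r, rfl⟩ := Nat.exists_eq_add_of_lt hr
    have hp : Projective (ModuleCat.of A (Fin l → A)) :=
      (IsProjective.iff_projective _).1 inferInstance
    -- The action of `s` on `Ext^r(M, B)` factors through `Ext^r` of a free module, which is zero.
    have h1 : s • 𝟙 M = ModuleCat.ofHom σ ≫ ModuleCat.ofHom π :=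
      ModuleCat.hom_ext hσ.symm
    rw [smul_ext_eq_comp, h1, ← Abelian.Ext.mk₀_comp_mk₀,
      Abelian.Ext.comp_assoc _ _ _ (zero_add 0) (zero_add _) (by simp),
      Abelian.Ext.eq_zero_of_projective (P := ModuleCat.of A (Fin l → A)) (Abelian.Ext.comp _ α _),
      Abelian.Ext.comp_zero]
  | succ m ih =>
    intro M _ h
    obtain ⟨l, π, hπ⟩ := Module.Finite.exists_fin' A M
    have hp : Projective (ModuleCat.of A (Fin l → A)) :=
      (IsProjective.iff_projective _).1 inferInstance
    have hex : Function.Exact (LinearMap.ker π).subtype π := LinearMap.exact_subtype_ker_map π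
    have hS := ModuleCat.shortComplex_shortExact (ModuleCat.shortComplexOfCompEqZero _ _
        hex.linearMap_comp_eq_zero) hex (Subtype.val_injective) hπ
    have hpS := (ModuleCat.localizedModuleFunctor S).projective_obj_of_projective hp
    obtain ⟨s, hs, h0⟩ := ih (ModuleCat.of A (LinearMap.ker π))
      (((hS.map_of_exact (ModuleCat.localizedModuleFunctor S)).hasProjectiveDimensionLT_X₃_iff
        m hpS).1 h)
    refine ⟨s, hs, fun r hr B α => ?_⟩
    obtain ⟨r, rfl⟩ := Nat.exists_eq_add_of_lt hr
    obtain ⟨β, rfl⟩ := Abelian.Ext.contravariant_sequence_exact₃ hS B α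
      (Abelian.Ext.eq_zero_of_projective _) (n₀ := m + 1 + r) (by omega)
    rw [← Abelian.Ext.comp_smul, h0 _ (by omega), Abelian.Ext.comp_zero]

end killing

/-! ### Dimension of affine algebras via eliminated variables -/

section dimension
open MvPolynomial

/-- If `k[x_1, …, x_n] ⧸ Q` contains `d` algebraically independent elements, then at least `d` of the
variables have algebraically independent images: the images of the variables generate the quotient,
so they contain a transcendence basis. The set of these variables is encoded by an injection
`j : σ → Fin n`. -/
lemma exists_section_of_prime {k : Type} [Field k] {n : ℕ} (Q : Ideal (MvPolynomial (Fin n) k))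
    [Q.IsPrime] {d : ℕ} {y : Fin d → MvPolynomial (Fin n) k ⧸ Q} (hy : AlgebraicIndependent k y) :
    ∃ (σ : Type) (_ : Finite σ) (j : σ → Fin n), Function.Injective j ∧ d ≤ Nat.card σ ∧
      ∀ f : MvPolynomial σ k, rename j f ∈ Q → f = 0 := by
  let x : Fin n → MvPolynomial (Fin n) k ⧸ Q := fun i => Ideal.Quotient.mk Q (X i)
  have hadj : Algebra.adjoin k (Set.range x) = ⊤ := by
    have h : Set.range x = Ideal.Quotient.mkₐ k Q '' Set.range X := by
      rw [← Set.range_comp]; rfl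
    rw [h, ← AlgHom.map_adjoin, MvPolynomial.adjoin_range_X, Algebra.map_top,
      AlgHom.range_eq_top]
    exact Ideal.Quotient.mkₐ_surjective k Q
  have : Algebra.IsAlgebraic (Algebra.adjoin k (Set.range x)) (MvPolynomial (Fin n) k ⧸ Q) :=
    ⟨fun a => isAlgebraic_algebraMap
      (⟨a, hadj ▸ Algebra.mem_top⟩ : Algebra.adjoin k (Set.range x))⟩
  obtain ⟨t, htx, ht⟩ := exists_isTranscendenceBasis_subset (R := k) (Set.range x)
  choose j hj using fun y : t => htx y.2
  have hfin : Finite t := (Set.finite_range x).subset htx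
  refine ⟨t, hfin, j, fun a b hab => ?_, ?_, fun f hf => ?_⟩
  · apply Subtype.ext
    rw [← hj a, ← hj b, hab]
  · have h1 := hy.cardinalMk_le_trdeg
    rw [← ht.cardinalMk_eq_trdeg, Cardinal.mk_fin] at h1
    have : Fintype t := Fintype.ofFinite t
    rw [Cardinal.mk_fintype] at h1
    rw [Nat.card_eq_fintype_card]
    exact_mod_cast h1
  · have h1 : aeval ((↑) : t → MvPolynomial (Fin n) k ⧸ Q) f = Ideal.Quotient.mkₐ k Q (rename j f) := by
      have h2 : aeval ((↑) : t → MvPolynomial (Fin n) k ⧸ Q) =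
          (Ideal.Quotient.mkₐ k Q).comp (rename j) := by
        ext y
        simp [← hj y, x]
      rw [h2]; rfl
    refine (injective_iff_map_eq_zero _).1 ht.1 f ?_
    rw [h1]
    exact Ideal.Quotient.eq_zero_iff_mem.2 hf

/-- Incomparability: an integral extension, injective or not, does not raise the dimension. -/
lemma ringKrullDim_le_of_isIntegral {R S : Type} [CommRing R] [CommRing S] (f : R →+* S)
    (hf : f.IsIntegral) : ringKrullDim S ≤ ringKrullDim R := by
  algebraize [f]
  refine Order.krullDim_le_of_strictMono (PrimeSpectrum.comap f) fun p q hpq => ?_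
  obtain ⟨hle, x, hxq, hxp⟩ := SetLike.lt_iff_le_and_exists.1
    (show p.asIdeal < q.asIdeal from hpq)
  exact Ideal.comap_lt_comap_of_integral_mem_sdiff (R := R) hle ⟨hxq, hxp⟩
    (Algebra.IsIntegral.isIntegral x)

/-- If `I` contains a nonzero polynomial in every set of more than `e` variables, then
`dim k[x_1, …, x_n] ⧸ I ≤ e`. By Noether normalization a quotient of dimension `d` contains a
polynomial ring in `d` variables, and this persists modulo a prime lying over `0`; hence `d`
variables are algebraically independent modulo `I`. -/
lemma ringKrullDim_quotient_le_of_exists_mem {k : Type} [Field k] {n : ℕ} (e : ℕ)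
    (I : Ideal (MvPolynomial (Fin n) k))
    (h : ∀ (σ : Type) [Finite σ] (j : σ → Fin n), Function.Injective j → e < Nat.card σ →
      ∃ f : MvPolynomial σ k, f ≠ 0 ∧ rename j f ∈ I) :
    ringKrullDim (MvPolynomial (Fin n) k ⧸ I) ≤ e := by
  cases subsingleton_or_nontrivial (MvPolynomial (Fin n) k ⧸ I) with
  | inl _ => simp [ringKrullDim_eq_bot_of_subsingleton]
  | inr _ =>
  obtain ⟨d, g, hg, hint⟩ := exists_integral_inj_algHom_of_fg k (MvPolynomial (Fin n) k ⧸ I)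
  refine (ringKrullDim_le_of_isIntegral _ hint).trans ?_
  rw [MvPolynomial.ringKrullDim_of_isNoetherianRing, ringKrullDim_eq_zero_of_field]
  by_contra! hlt
  have hlt : e < d := by simpa using hlt
  algebraize [g.toRingHom]
  obtain ⟨P, -, hP, hPcomap⟩ := Ideal.exists_ideal_over_prime_of_isIntegral
    (⊥ : Ideal (MvPolynomial (Fin d) k)) (⊥ : Ideal (MvPolynomial (Fin n) k ⧸ I))
    (by rw [← RingHom.ker_eq_comap_bot]; exact ((RingHom.injective_iff_ker_eq_bot _).1 hg).le)
  let q := Ideal.Quotient.mkₐ k I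
  let Q : Ideal (MvPolynomial (Fin n) k) := P.comap q
  have hQ : Q.IsPrime := Ideal.comap_isPrime q P
  have hIQ : I ≤ Q := fun a ha => by
    show q a ∈ P
    rw [show q a = 0 from Ideal.Quotient.eq_zero_iff_mem.2 ha]
    exact P.zero_mem
  choose y hy using fun i : Fin d => Ideal.Quotient.mkₐ_surjective k I (g (X i))
  have hind : AlgebraicIndependent k (fun i => Ideal.Quotient.mkₐ k Q (y i)) := by
    refine (injective_iff_map_eq_zero _).2 fun f hf => ?_
    have h1 : aeval (fun i => Ideal.Quotient.mkₐ k Q (y i)) f =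
        Ideal.Quotient.mkₐ k Q (aeval y f) := by
      rw [← comp_aeval_apply]
    have h2 : aeval y f ∈ Q := by
      rw [h1] at hf
      exact Ideal.Quotient.eq_zero_iff_mem.1 hf
    have h3 : q (aeval y f) = g f := by
      have : q.comp (aeval y) = g := by
        ext i
        simpa [q] using hy i
      rw [← this]; rfl
    have h4 : f ∈ P.comap (algebraMap (MvPolynomial (Fin d) k) (MvPolynomial (Fin n) k ⧸ I)) := by
      show g f ∈ P
      rw [← h3]; exact h2
    rw [hPcomap] at h4
    exact h4
  obtain ⟨σ, _, j, hj, hcard, hσ⟩ := exists_section_of_prime Q hind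
  obtain ⟨f, hf0, hf⟩ := h σ j hj (hlt.trans_le hcard)
  exact hf0 (hσ f (hIQ hf))

end dimension

/-! ### Generic fibre of a coordinate projection -/

section genericfibre
open MvPolynomial

attribute [local instance] MvPolynomial.algebraMvPolynomial in
/-- Inverting the nonzero polynomials in the variables `j y`, `y : σ`, turns `k[x_1, …, x_n]` into a
polynomial ring in the remaining `n - |σ|` variables over `k(σ)`. -/
lemma nonempty_localization_ringEquiv {k : Type} [Field k] {n : ℕ} {σ : Type} [Finite σ]
    (j : σ → Fin n) (hj : Function.Injective j) :
    Nonempty (MvPolynomial (Fin (n - Nat.card σ)) (FractionRing (MvPolynomial σ k)) ≃+*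
      Localization ((nonZeroDivisors (MvPolynomial σ k)).map
        (rename j : MvPolynomial σ k →ₐ[k] MvPolynomial (Fin n) k))) := by
  classical
  have := Fintype.ofFinite σ
  have hcard : Fintype.card ((Set.range j)ᶜ : Set (Fin n)) = n - Nat.card σ := by
    rw [Fintype.card_compl_set, Fintype.card_fin, Set.card_range_of_injective hj,
      Nat.card_eq_fintype_card]
  let e : Fin (n - Nat.card σ) ⊕ σ ≃ Fin n :=
    ((Fintype.equivFinOfCardEq hcard).symm.sumCongr (Equiv.ofInjective j hj)).trans
      ((Equiv.sumComm _ _).trans (Equiv.Set.sumCompl (Set.range j)))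
  have he : ∀ y, e (Sum.inr y) = j y := fun y => by simp [e]
  have he' : ∀ y, e.symm (j y) = Sum.inr y := fun y => by rw [← he, e.symm_apply_apply]
  let Ψ : MvPolynomial (Fin n) k ≃ₐ[k]
      MvPolynomial (Fin (n - Nat.card σ)) (MvPolynomial σ k) :=
    (renameEquiv k e.symm).trans (sumAlgEquiv k _ _)
  have hΨ : ∀ f : MvPolynomial σ k, Ψ (rename j f) = C f := by
    intro f
    have h := congrArg (fun φ => φ f) (sumAlgEquiv_comp_rename_inr k (Fin (n - Nat.card σ)) σ)
    have h' : rename e.symm (rename j f) = rename Sum.inr f := by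
      rw [rename_rename]
      congr 2
      exact funext he'
    simp only [Ψ, AlgEquiv.trans_apply, renameEquiv_apply, h']
    exact h
  refine ⟨(IsLocalization.ringEquivOfRingEquiv (M := (nonZeroDivisors (MvPolynomial σ k)).map
        (rename j : MvPolynomial σ k →ₐ[k] MvPolynomial (Fin n) k))
    (T := (nonZeroDivisors (MvPolynomial σ k)).map (C (σ := Fin (n - Nat.card σ))))
    (Localization _) (MvPolynomial _ (FractionRing (MvPolynomial σ k)))
    Ψ.toRingEquiv ?_).symm⟩
  ext x
  simp only [Submonoid.mem_map]
  constructor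
  · rintro ⟨_, ⟨f, hf, rfl⟩, rfl⟩
    exact ⟨f, hf, (hΨ f).symm⟩
  · rintro ⟨f, hf, rfl⟩
    exact ⟨_, ⟨f, hf, rfl⟩, hΨ f⟩

end genericfibre

/-! ### `Ext` over a polynomial ring over a field -/

section final
open MvPolynomial
variable {k : Type} [Field k] {n : ℕ}

/-- Ischebeck vanishing over `A = k[x_1, …, x_n]`: `Extⁱ(C, A) = 0` for `i + dim C < n`. -/
lemma subsingleton_ext_of_ringKrullDim_le (C : ModuleCat.{0} (MvPolynomial (Fin n) k))
    [Module.Finite (MvPolynomial (Fin n) k) C] (d : ℕ)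
    (hC : ringKrullDim (MvPolynomial (Fin n) k ⧸ Module.annihilator (MvPolynomial (Fin n) k) C) ≤ d)
    (i : ℕ) (hi : i + d < n) :
    Subsingleton (Abelian.Ext C (ModuleCat.of _ (MvPolynomial (Fin n) k)) i) := by
  refine subsingleton_ext_of_supportDim_le n _
    (fun m hm i hi => subsingleton_ext_quotient_maximal n m hm i hi) d C ?_ i hi
  rwa [Module.supportDim_eq_ringKrullDim_quotient_annihilator]

/-- `Ext^r(M, B)` has dimension at most `n - r`: for any set `s` of more than `n - r` variables,
inverting `k[s] \ 0` leaves a polynomial ring in fewer than `r` variables over a field, so by the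
syzygy theorem some nonzero element of `k[s]` kills `Ext^r(M, B)`. -/
lemma ringKrullDim_quotient_annihilator_ext_le (M B : ModuleCat.{0} (MvPolynomial (Fin n) k))
    [Module.Finite (MvPolynomial (Fin n) k) M] (r : ℕ) (hr : r ≤ n) :
    ringKrullDim (MvPolynomial (Fin n) k ⧸
      Module.annihilator (MvPolynomial (Fin n) k) (Abelian.Ext M B r)) ≤ (n - r : ℕ) := by
  refine ringKrullDim_quotient_le_of_exists_mem (n - r) _ fun σ _ j hj hσ => ?_
  obtain ⟨e⟩ := nonempty_localization_ringEquiv (k := k) j hj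
  obtain ⟨s, ⟨f, hf, rfl⟩, hs⟩ := exists_smul_ext_eq_zero_s7
    ((nonZeroDivisors (MvPolynomial σ k)).map
      (rename j : MvPolynomial σ k →ₐ[k] MvPolynomial (Fin n) k)) (n - Nat.card σ) M
    (hasProjectiveDimensionLE_of_ringEquiv e _ (hasProjectiveDimensionLE_mvPolynomial _ _) _)
  have hle : Nat.card σ ≤ n := by simpa using Nat.card_le_card_of_injective j hj
  exact ⟨f, nonZeroDivisors.ne_zero hf, Module.mem_annihilator.2 fun α => hs r (by omega) B α⟩

/-- If `dim N ≤ n - r`, every nonzero class in `Ext^r(N, A)` generates a submodule of dimension exactly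
`n - r`. The upper bound holds since `ann N` kills `Ext^r(N, A)`. For the lower bound, `α` yields
`C` with `ann α ⊆ ann C` and `Ext^r(C, A) ≠ 0`, and Ischebeck vanishing forces `dim C ≥ n - r`. -/
lemma ringKrullDim_quotient_span_ext_eq (N : ModuleCat.{0} (MvPolynomial (Fin n) k))
    [Module.Finite (MvPolynomial (Fin n) k) N] (r : ℕ) (hr : r ≤ n)
    (hN : ringKrullDim (MvPolynomial (Fin n) k ⧸ Module.annihilator (MvPolynomial (Fin n) k) N) ≤
      (n - r : ℕ))
    (α : Abelian.Ext N (ModuleCat.of _ (MvPolynomial (Fin n) k)) r) (hα : α ≠ 0) :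
    ringKrullDim (MvPolynomial (Fin n) k ⧸
      (Submodule.span (MvPolynomial (Fin n) k) {α}).annihilator) = (n - r : ℕ) := by
  set A := MvPolynomial (Fin n) k
  have hmem : ∀ a : A, a ∈ (Submodule.span A {α}).annihilator ↔ a • α = 0 := fun a =>
    Submodule.mem_annihilator_span_singleton α a
  refine le_antisymm ((ringKrullDim_le_of_surjective (Ideal.Quotient.factor fun a ha =>
    (hmem a).2 (smul_ext_eq_zero ha α)) (Ideal.Quotient.factor_surjective _)).trans hN) ?_
  have hNnt : Module.annihilator A N ≠ ⊤ := fun h => hα <| by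
    rw [← one_smul A α]
    exact smul_ext_eq_zero (h ▸ Submodule.mem_top) α
  -- Rees: since `Extⁱ(N, A) = 0` for `i < r`, the annihilator of `N` contains a regular sequence of
  -- length `r`.
  obtain ⟨rs, rfl, hrs, hreg⟩ := ModuleCat.exists_isRegular_of_exists_subsingleton_ext
    (Module.annihilator A N) r (ModuleCat.of A A)
    (by
      show Module.annihilator A N • (⊤ : Ideal A) < ⊤
      rw [smul_eq_mul, Ideal.mul_top]
      exact hNnt.lt_top)
    N Module.support_eq_zeroLocus
    (fun i hi => subsingleton_ext_of_ringKrullDim_le N (n - r) hN i (by omega))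
  obtain ⟨C, hCfin, hCann, hC⟩ := exists_module_ext_nontrivial N rs (ModuleCat.of A A)
    hreg.toIsWeaklyRegular hrs α hα
  refine le_trans ?_ (ringKrullDim_le_of_surjective (Ideal.Quotient.factor fun a ha =>
    hCann a ((hmem a).1 ha)) (Ideal.Quotient.factor_surjective _))
  by_contra! hlt
  refine hC ?_
  -- If `n - r = 0`, the strict bound means `C = 0`; otherwise it reads `dim C ≤ n - r - 1`.
  obtain hd | hd := Nat.eq_zero_or_pos (n - rs.length)
  · have hC0 : Module.annihilator A C = ⊤ := by
      by_contra hne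
      have := Ideal.Quotient.nontrivial_iff.2 hne
      rw [hd] at hlt
      exact absurd ringKrullDim_nonneg_of_nontrivial hlt.not_ge
    refine subsingleton_of_forall_eq 0 fun β => ?_
    rw [← one_smul A β]
    exact smul_ext_eq_zero (hC0 ▸ Submodule.mem_top) β
  · obtain ⟨d, hd⟩ := Nat.exists_eq_succ_of_ne_zero hd.ne'
    rw [hd, Nat.cast_succ, ENat.WithBot.lt_add_one_iff] at hlt
    exact subsingleton_ext_of_ringKrullDim_le C d hlt _ (by omega)

end final

lemma nonempty_extModule_linearEquiv (A : Type) [CommRing A] (M : Type) [AddCommGroup M]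
    [Module A M] (i : ℕ) :
    Nonempty (extModule A M i ≃ₗ[A] Abelian.Ext (ModuleCat.of A M) (ModuleCat.of A A) i) :=
  nonempty_ext_linearEquiv i

lemma annihilator_span_singleton_map {A M N : Type} [CommRing A] [AddCommGroup M] [Module A M]
    [AddCommGroup N] [Module A N] (e : M ≃ₗ[A] N) (m : M) :
    (Submodule.span A {m}).annihilator = (Submodule.span A {e m}).annihilator := by
  ext a
  rw [Submodule.mem_annihilator_span_singleton, Submodule.mem_annihilator_span_singleton,
    ← map_smul, LinearEquiv.map_eq_zero_iff]

/-- For `A = k[x_1, …, x_n]` with `k` a field and `n ≥ 1`, every finitely generated `A`-module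
`M` and every `0 ≤ r ≤ n`: the `A`-module `Ext^r_A(Ext^r_A(M, A), A)` is either zero or
`r`-pure. -/
theorem ext_ext_zero_or_pure (k : Type) [Field k] (n : ℕ) (hn : 1 ≤ n)
    (M : Type) [AddCommGroup M] [Module (MvPolynomial (Fin n) k) M]
    [Module.Finite (MvPolynomial (Fin n) k) M]
    (r : ℕ) (hr : r ≤ n) :
    Subsingleton (extModule (MvPolynomial (Fin n) k)
        (extModule (MvPolynomial (Fin n) k) M r) r) ∨
    IsPureMod k n r (extModule (MvPolynomial (Fin n) k)
        (extModule (MvPolynomial (Fin n) k) M r) r) := by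
  right
  intro m hm
  obtain ⟨e⟩ := nonempty_extModule_linearEquiv (MvPolynomial (Fin n) k) M r
  obtain ⟨e'⟩ := nonempty_extModule_linearEquiv (MvPolynomial (Fin n) k)
    (extModule (MvPolynomial (Fin n) k) M r) r
  have hfin : Module.Finite (MvPolynomial (Fin n) k) (extModule (MvPolynomial (Fin n) k) M r) :=
    Module.Finite.equiv e.symm
  have hN := ringKrullDim_quotient_annihilator_ext_le (ModuleCat.of (MvPolynomial (Fin n) k) M)
    (ModuleCat.of _ (MvPolynomial (Fin n) k)) r hr
  rw [← e.annihilator_eq] at hN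
  rw [annihilator_span_singleton_map e' m]
  exact @ringKrullDim_quotient_span_ext_eq k _ n
    (ModuleCat.of _ (extModule (MvPolynomial (Fin n) k) M r)) hfin r hr hN (e' m)
    (e'.map_ne_zero_iff.2 hm)
end
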